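/- Let θ₁,…,θ_k be real numbers such that 1, θ₁,…,θ_k are linearly independent over ℚ. Then the sequence (frac(p_j θ₁),…,frac(p_j θ_k)), where p_j is the j-th prime, is dense in (0,1)^k. -/

import Mathlib

section
set_option linter.all false
open ArithmeticFunction Finset
open scoped ArithmeticFunction.Moebius ArithmeticFunction.zeta

namespace Vin

/-- additive character -/
noncomputable def ee (x : ℝ) : ℂ := Complex.exp (Complex.I * ((2 * Real.pi * x : ℝ) : ℂ))

/-- distance to nearest integer -/
noncomputable def nn (x : ℝ) : ℝ := |x - round x|

lemma ee_add (x y : ℝ) : ee (x + y) = ee x * ee y := by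
  unfold ee; rw [← Complex.exp_add]; congr 1; push_cast; ring

lemma norm_ee (x : ℝ) : ‖ee x‖ = 1 := by
  unfold ee; rw [mul_comm]; exact Complex.norm_exp_ofReal_mul_I _

lemma ee_zero : ee 0 = 1 := by simp [ee]

lemma ee_int (n : ℤ) : ee n = 1 := by
  unfold ee
  rw [Complex.exp_eq_one_iff]
  exact ⟨n, by push_cast; ring⟩

lemma ee_add_int (x : ℝ) (n : ℤ) : ee (x + n) = ee x := by
  rw [ee_add, ee_int, mul_one]

lemma ee_neg (x : ℝ) : ee (-x) = (starRingEnd ℂ) (ee x) := by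
  unfold ee
  rw [← Complex.exp_conj, map_mul, Complex.conj_I, Complex.conj_ofReal]; congr 1
  push_cast; ring

lemma norm_ee_sub_one_le (x : ℝ) : ‖ee x - 1‖ ≤ 2 * Real.pi * |x| := by
  unfold ee
  refine (Real.norm_exp_I_mul_ofReal_sub_one_le).trans ?_
  rw [Real.norm_eq_abs, abs_mul, abs_of_pos (by positivity)]

lemma norm_ee_sub_le (x y : ℝ) : ‖ee x - ee y‖ ≤ 2 * Real.pi * |x - y| := by
  have : ee x - ee y = ee y * (ee (x - y) - 1) := by
    rw [mul_sub, ← ee_add]; simp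
  rw [this, norm_mul, norm_ee, one_mul]
  exact norm_ee_sub_one_le _

lemma nn_nonneg (x : ℝ) : 0 ≤ nn x := abs_nonneg _
lemma nn_le_half (x : ℝ) : nn x ≤ 1 / 2 := abs_sub_round x
lemma nn_le (x : ℝ) (n : ℤ) : nn x ≤ |x - n| := round_le x n

lemma nn_sub_le (x y : ℝ) : nn x - |x - y| ≤ nn y := by
  have h := nn_le x (round y)
  have : |x - round y| ≤ |x - y| + |y - round y| := abs_sub_le _ _ _
  unfold nn at *
  linarith

lemma norm_ee_sub_one_ge (x : ℝ) : 4 * nn x ≤ ‖ee x - 1‖ := by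
  have h1 : ee x = ee (x - round x) := by
    have := ee_add_int (x - round x) (round x)
    simpa using this
  rw [h1]
  unfold ee
  rw [Complex.norm_exp_I_mul_ofReal_sub_one]
  set t := x - round x with ht
  have hn : nn x = |t| := rfl
  rw [hn]
  have hle : |t| ≤ 1 / 2 := abs_sub_round x
  have : ‖2 * Real.sin (2 * Real.pi * t / 2)‖ = 2 * Real.sin (Real.pi * |t|) := by
    rw [Real.norm_eq_abs, abs_mul, abs_two]
    congr 1
    have e1 : 2 * Real.pi * t / 2 = Real.pi * t := by ring
    rw [e1]
    rcases le_total 0 t with h | h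
    · rw [abs_of_nonneg h, abs_of_nonneg]
      apply Real.sin_nonneg_of_nonneg_of_le_pi (by positivity)
      rw [abs_of_nonneg h] at hle
      nlinarith [Real.pi_pos]
    · rw [abs_of_nonpos h]
      rw [abs_of_nonpos h] at hle
      rw [show Real.pi * -t = -(Real.pi * t) by ring, Real.sin_neg, abs_of_nonpos]
      have := Real.sin_nonneg_of_nonneg_of_le_pi (x := Real.pi * (-t)) (by nlinarith [Real.pi_pos]) (by nlinarith [Real.pi_pos])
      rw [show Real.pi * -t = -(Real.pi * t) by ring, Real.sin_neg] at this
      linarith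
  rw [this]
  have := Real.mul_le_sin (x := Real.pi * |t|) (by positivity) (by nlinarith [Real.pi_pos])
  have e2 : 2 / Real.pi * (Real.pi * |t|) = 2 * |t| := by
    field_simp
  rw [e2] at this
  linarith

lemma ee_nat_mul_succ (γ : ℝ) (n : ℕ) : ee ((n + 1 : ℕ) * γ) = ee (n * γ) * ee γ := by
  rw [← ee_add]; congr 1; push_cast; ring

lemma geom_aux (γ : ℝ) (a b : ℕ) (hab : a ≤ b) :
    (∑ m ∈ Ioc a b, ee (m * γ)) * (ee γ - 1) = ee ((b + 1 : ℕ) * γ) - ee ((a + 1 : ℕ) * γ) := by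
  induction b, hab using Nat.le_induction with
  | base => simp
  | succ n hn ih =>
    rw [← Finset.insert_Ioc_right_eq_Ioc_add_one (by omega), Finset.sum_insert (by simp), add_mul, ih,
      ee_nat_mul_succ γ (n+1)]
    ring

lemma geom_bound (γ : ℝ) (a b : ℕ) (h : 0 < nn γ) :
    ‖∑ m ∈ Ioc a b, ee (m * γ)‖ ≤ 1 / nn γ := by
  rcases le_total a b with hab | hab
  · have h1 := geom_aux γ a b hab
    have h2 := norm_ee_sub_one_ge γ
    have h3 : ‖∑ m ∈ Ioc a b, ee (m * γ)‖ * ‖ee γ - 1‖ ≤ 2 := by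
      rw [← norm_mul, h1]
      refine (norm_sub_le _ _).trans ?_
      rw [norm_ee, norm_ee]; norm_num
    rw [le_div_iff₀ h]
    have := norm_nonneg (∑ m ∈ Ioc a b, ee (m * γ))
    nlinarith
  · rw [Finset.Ioc_eq_empty (by omega)]
    simp; exact h.le

lemma trivial_bound (γ : ℝ) (a b : ℕ) :
    ‖∑ m ∈ Ioc a b, ee (m * γ)‖ ≤ b := by
  refine (norm_sum_le _ _).trans ?_
  simp [norm_ee]

/-- weighted geometric sum -/
lemma wgeom_bound (γ : ℝ) (a b : ℕ) (h : 0 < nn γ) :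
    ‖∑ m ∈ Ioc a b, (m : ℂ) * ee (m * γ)‖ ≤ 2 * b / nn γ := by
  rcases le_total a b with hab | hab
  · have key : ∑ m ∈ Ioc a b, (m : ℂ) * ee (m * γ)
        = b * ∑ m ∈ Ioc a b, ee (m * γ) - ∑ j ∈ Ico a b, ∑ m ∈ Ioc a j, ee (m * γ) := by
      induction b, hab using Nat.le_induction with
      | base => simp
      | succ n hn ih =>
        rw [← Finset.insert_Ioc_right_eq_Ioc_add_one (by omega), Finset.sum_insert (by simp),
          Finset.sum_insert (by simp), ih, Finset.sum_Ico_succ_top (by omega)]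
        push_cast
        ring
    rw [key]
    refine (norm_sub_le _ _).trans ?_
    have h1 : ‖(b : ℂ) * ∑ m ∈ Ioc a b, ee (m * γ)‖ ≤ b * (1 / nn γ) := by
      rw [norm_mul, Complex.norm_natCast]
      exact mul_le_mul_of_nonneg_left (geom_bound γ a b h) (by positivity)
    have h2 : ‖∑ j ∈ Ico a b, ∑ m ∈ Ioc a j, ee (m * γ)‖ ≤ b * (1 / nn γ) := by
      refine (norm_sum_le _ _).trans ?_
      refine (Finset.sum_le_sum (fun j _ => geom_bound γ a j h)).trans ?_
      rw [Finset.sum_const, nsmul_eq_mul, Nat.card_Ico]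
      apply mul_le_mul_of_nonneg_right _ (by positivity)
      exact_mod_cast Nat.sub_le _ _
    calc _ ≤ b * (1 / nn γ) + b * (1 / nn γ) := add_le_add h1 h2
      _ = _ := by ring
  · rw [Finset.Ioc_eq_empty (by omega)]
    simp; positivity

lemma wtrivial_bound (γ : ℝ) (a b : ℕ) :
    ‖∑ m ∈ Ioc a b, (m : ℂ) * ee (m * γ)‖ ≤ (b : ℝ) ^ 2 := by
  refine (norm_sum_le _ _).trans ?_
  calc _ ≤ ∑ m ∈ Ioc a b, (b : ℝ) := by
        apply Finset.sum_le_sum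
        intro m hm
        rw [norm_mul, norm_ee, Complex.norm_natCast, mul_one]
        exact_mod_cast (Finset.mem_Ioc.mp hm).2
    _ ≤ _ := by
        rw [Finset.sum_const, nsmul_eq_mul, Nat.card_Ioc, sq]
        apply mul_le_mul_of_nonneg_right _ (by positivity)
        exact_mod_cast Nat.sub_le _ _

lemma hyperbola {M : Type*} [AddCommMonoid M] (F : ℕ → ℕ → M) (N : ℕ) :
    ∑ n ∈ Ioc 0 N, ∑ x ∈ n.divisorsAntidiagonal, F x.1 x.2
      = ∑ a ∈ Ioc 0 N, ∑ b ∈ Ioc 0 (N / a), F a b := by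
  rw [Finset.sum_sigma', Finset.sum_sigma']
  refine Finset.sum_bij' (fun x _ => ⟨x.2.1, x.2.2⟩) (fun y _ => ⟨y.1 * y.2, (y.1, y.2)⟩) ?_ ?_ ?_ ?_ ?_
  · rintro ⟨n, a, b⟩ h
    simp only [mem_sigma, mem_Ioc, Nat.mem_divisorsAntidiagonal] at h ⊢
    obtain ⟨⟨h1, h2⟩, rfl, h3⟩ := h
    have ha : 0 < a := Nat.pos_of_ne_zero (by rintro rfl; simp at h3)
    have hb : 0 < b := Nat.pos_of_ne_zero (by rintro rfl; simp at h3)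
    refine ⟨⟨ha, (Nat.le_mul_of_pos_right a hb).trans h2⟩, hb, ?_⟩
    rw [Nat.le_div_iff_mul_le ha, mul_comm]; exact h2
  · rintro ⟨a, b⟩ h
    simp only [mem_sigma, mem_Ioc, Nat.mem_divisorsAntidiagonal] at h ⊢
    obtain ⟨⟨h1, h2⟩, h3, h4⟩ := h
    rw [Nat.le_div_iff_mul_le h1, mul_comm] at h4
    have := Nat.mul_pos h1 h3
    exact ⟨⟨this, h4⟩, trivial, this.ne'⟩
  · rintro ⟨n, a, b⟩ h
    simp only [mem_sigma, mem_Ioc, Nat.mem_divisorsAntidiagonal] at h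
    obtain ⟨_, rfl, _⟩ := h
    rfl
  · rintro ⟨a, b⟩ h; rfl
  · rintro ⟨n, a, b⟩ h; rfl

/-- the Selberg function `Λ log + Λ * Λ = μ * log²`. -/
lemma selberg_identity (n : ℕ) :
    ∑ x ∈ n.divisorsAntidiagonal, (μ x.1 : ℝ) * Real.log x.2 ^ 2
      = Λ n * Real.log n + ∑ x ∈ n.divisorsAntidiagonal, Λ x.1 * Λ x.2 := by
  have h1 : (ArithmeticFunction.log.pmul ArithmeticFunction.log : ArithmeticFunction ℝ)
      = (ζ : ArithmeticFunction ℝ) * ((Λ : ArithmeticFunction ℝ).pmul ArithmeticFunction.log + Λ * Λ) := by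
    rw [mul_add, ← mul_assoc, zeta_mul_vonMangoldt]
    ext n
    rw [ArithmeticFunction.pmul_apply, ArithmeticFunction.add_apply]
    nth_rw 1 [← zeta_mul_vonMangoldt]
    rw [ArithmeticFunction.mul_apply, ArithmeticFunction.mul_apply, ArithmeticFunction.mul_apply,
      ← Finset.sum_add_distrib, Finset.sum_mul]
    refine Finset.sum_congr rfl ?_
    rintro ⟨a, b⟩ hx
    rw [Nat.mem_divisorsAntidiagonal] at hx
    obtain ⟨rfl, h0⟩ := hx
    have ha : a ≠ 0 := by rintro rfl; simp at h0
    have hb : b ≠ 0 := by rintro rfl; simp at h0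
    simp only [ArithmeticFunction.log_apply, ArithmeticFunction.pmul_apply]
    simp [ArithmeticFunction.natCoe_apply, ArithmeticFunction.zeta_apply, ha]
    rw [Real.log_mul (by exact_mod_cast ha) (by exact_mod_cast hb)]
    ring
  have h2 : (μ : ArithmeticFunction ℝ) * (ArithmeticFunction.log.pmul ArithmeticFunction.log)
      = (Λ : ArithmeticFunction ℝ).pmul ArithmeticFunction.log + Λ * Λ := by
    rw [h1, ← mul_assoc]
    have : (μ : ArithmeticFunction ℝ) * (ζ : ArithmeticFunction ℝ) = 1 := by
      exact coe_moebius_mul_coe_zeta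
    rw [this, one_mul]
  have h3 := congrArg (fun f : ArithmeticFunction ℝ => f n) h2
  simp only [ArithmeticFunction.mul_apply, ArithmeticFunction.add_apply, ArithmeticFunction.pmul_apply,
    ArithmeticFunction.log_apply] at h3
  rw [← h3]
  refine Finset.sum_congr rfl ?_
  rintro ⟨a, b⟩ _
  simp [sq]

end Vin

namespace Vin

lemma selberg_pointwise (y : ℝ) (hy : 0 < y) (n : ℕ) (hn : 0 < n) :
    ∑ x ∈ n.divisorsAntidiagonal, (μ x.1 : ℝ) * Real.log (y / x.1) ^ 2
      = (Λ n * Real.log y + Λ n * Real.log (y / n)) + ∑ x ∈ n.divisorsAntidiagonal, Λ x.1 * Λ x.2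
        + if n = 1 then Real.log y ^ 2 else 0 := by
  have h0 : ∑ x ∈ n.divisorsAntidiagonal, (μ x.1 : ℝ) * Real.log (y / x.1) ^ 2
      = ∑ x ∈ n.divisorsAntidiagonal, (Real.log (y / n) ^ 2 * (μ x.1 : ℝ)
        + 2 * Real.log (y / n) * ((μ x.1 : ℝ) * Real.log x.2) + (μ x.1 : ℝ) * Real.log x.2 ^ 2) := by
    refine Finset.sum_congr rfl ?_
    rintro ⟨a, b⟩ hx
    rw [Nat.mem_divisorsAntidiagonal] at hx
    obtain ⟨rfl, h0⟩ := hx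
    have ha : (a : ℝ) ≠ 0 := by rintro h; simp at h; simp [h] at h0
    have hb : (b : ℝ) ≠ 0 := by rintro h; simp at h; simp [h] at h0
    have : Real.log (y / a) = Real.log (y / (a * b : ℕ)) + Real.log b := by
      rw [← Real.log_mul (by push_cast; positivity) hb]
      congr 1; push_cast; field_simp
    simp only [this]; ring
  have h1 : ∑ x ∈ n.divisorsAntidiagonal, (μ x.1 : ℝ) = if n = 1 then 1 else 0 := by
    have := congrArg (fun f : ArithmeticFunction ℝ => f n) (coe_moebius_mul_coe_zeta (R := ℝ))
    simp only [ArithmeticFunction.mul_apply, ArithmeticFunction.one_apply] at this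
    rw [← this]
    refine Finset.sum_congr rfl ?_
    rintro ⟨a, b⟩ hx
    rw [Nat.mem_divisorsAntidiagonal] at hx
    have hb : b ≠ 0 := by rintro rfl; simp at hx; omega
    simp [ArithmeticFunction.natCoe_apply, ArithmeticFunction.zeta_apply, hb]
  have h2 : ∑ x ∈ n.divisorsAntidiagonal, (μ x.1 : ℝ) * Real.log x.2 = Λ n := by
    have := congrArg (fun f : ArithmeticFunction ℝ => f n) moebius_mul_log_eq_vonMangoldt
    simp only [ArithmeticFunction.mul_apply, ArithmeticFunction.log_apply] at this
    rw [← this]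
    refine Finset.sum_congr rfl ?_
    rintro ⟨a, b⟩ hx
    simp
  rw [h0, Finset.sum_add_distrib, Finset.sum_add_distrib, ← Finset.mul_sum, ← Finset.mul_sum, h1, h2,
    selberg_identity]
  have hlog : Real.log (y / n) = Real.log y - Real.log n := Real.log_div hy.ne' (by positivity)
  split_ifs with h
  · subst h; simp
  · rw [hlog]; ring

lemma selberg_sum (y : ℝ) (hy : 1 ≤ y) (N : ℕ) (hN : 1 ≤ N) (ω : ℕ → ℂ) :
    ∑ d ∈ Ioc 0 N, ((μ d : ℝ) * Real.log (y / d) ^ 2 : ℝ) * ∑ m ∈ Ioc 0 (N / d), ω (d * m)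
      = (∑ n ∈ Ioc 0 N, ((Λ n * Real.log y + Λ n * Real.log (y / n) : ℝ) : ℂ) * ω n)
        + (∑ a ∈ Ioc 0 N, ∑ b ∈ Ioc 0 (N / a), ((Λ a * Λ b : ℝ) : ℂ) * ω (a * b))
        + ((Real.log y ^ 2 : ℝ) : ℂ) * ω 1 := by
  simp_rw [Finset.mul_sum]
  rw [← hyperbola (fun a b => (((μ a : ℝ) * Real.log (y / a) ^ 2 : ℝ) : ℂ) * ω (a * b)),
    ← hyperbola (fun a b => ((Λ a * Λ b : ℝ) : ℂ) * ω (a * b)), ← Finset.sum_add_distrib]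
  have hlast : ((Real.log y ^ 2 : ℝ) : ℂ) * ω 1
      = ∑ n ∈ Ioc 0 N, (((if n = 1 then Real.log y ^ 2 else 0 : ℝ)) : ℂ) * ω n := by
    rw [Finset.sum_eq_single 1]
    · simp
    · intro b _ hb; simp [hb]
    · intro h; simp at h; omega
  rw [hlast, ← Finset.sum_add_distrib]
  refine Finset.sum_congr rfl ?_
  intro n hn
  have hn0 : 0 < n := (Finset.mem_Ioc.mp hn).1
  have e1 : ∀ f : ℕ → ℕ → ℝ, ∑ x ∈ n.divisorsAntidiagonal, ((f x.1 x.2 : ℝ) : ℂ) * ω (x.1 * x.2)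
      = ((∑ x ∈ n.divisorsAntidiagonal, f x.1 x.2 : ℝ) : ℂ) * ω n := by
    intro f
    rw [Complex.ofReal_sum, Finset.sum_mul]
    refine Finset.sum_congr rfl ?_
    rintro ⟨a, b⟩ hx
    rw [Nat.mem_divisorsAntidiagonal] at hx
    rw [hx.1]
  rw [e1 (fun a b => (μ a : ℝ) * Real.log (y / a) ^ 2), e1 (fun a b => Λ a * Λ b),
    selberg_pointwise y (by linarith) n hn0]
  push_cast
  ring

lemma psi_bound (N : ℕ) : ∑ n ∈ Ioc 0 N, Λ n ≤ 6 * N := by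
  have h := Chebyshev.psi_le_const_mul_self (x := N) (by positivity)
  have h2 : Chebyshev.psi N = ∑ n ∈ Ioc 0 N, Λ n := by
    simp [Chebyshev.psi]
  rw [h2] at h
  refine h.trans ?_
  have : Real.log 4 < 2 := by
    have : (4:ℝ) = 2 ^ 2 := by norm_num
    rw [this, Real.log_pow]
    have := Real.log_two_lt_d9
    push_cast; linarith
  gcongr
  linarith

lemma sum_log_hyper (N : ℕ) :
    ∑ a ∈ Ioc 0 N, Λ a * ((N / a : ℕ) : ℝ) = ∑ n ∈ Ioc 0 N, Real.log n := by
  have h := hyperbola (fun a _ => Λ a) N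
  have h1 : ∀ n ∈ Ioc 0 N, ∑ x ∈ n.divisorsAntidiagonal, Λ x.1 = Real.log n := by
    intro n hn
    rw [← vonMangoldt_sum]
    exact Nat.sum_divisorsAntidiagonal (fun i _ => Λ i)
  rw [Finset.sum_congr rfl h1] at h
  rw [h]
  refine Finset.sum_congr rfl ?_
  intro a _
  simp [mul_comm]

lemma mertens (N : ℕ) (hN : 1 ≤ N) : ∑ n ∈ Ioc 0 N, Λ n / n ≤ Real.log N + 6 := by
  have hN0 : (0:ℝ) < N := by exact_mod_cast hN
  have h1 : ∑ n ∈ Ioc 0 N, Λ n / n * N ≤ ∑ n ∈ Ioc 0 N, (Λ n * ((N / n : ℕ) : ℝ) + Λ n) := by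
    apply Finset.sum_le_sum
    intro n hn
    have hn0 : 0 < n := (Finset.mem_Ioc.mp hn).1
    have : (N : ℝ) / n ≤ ((N / n : ℕ) : ℝ) + 1 := by
      rw [div_le_iff₀ (by positivity)]
      have := Nat.lt_div_mul_add hn0 (a := N)
      have h3 : N ≤ (N / n + 1) * n := by nlinarith
      exact_mod_cast h3
    have hΛ : 0 ≤ Λ n := vonMangoldt_nonneg
    calc Λ n / n * N = Λ n * (N / n) := by ring
      _ ≤ Λ n * (((N / n : ℕ) : ℝ) + 1) := by gcongr
      _ = _ := by ring
  rw [← Finset.sum_mul, Finset.sum_add_distrib, sum_log_hyper] at h1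
  have h2 : ∑ n ∈ Ioc 0 N, Real.log n ≤ N * Real.log N := by
    calc _ ≤ ∑ n ∈ Ioc 0 N, Real.log N := by
          apply Finset.sum_le_sum
          intro n hn
          have := Finset.mem_Ioc.mp hn
          apply Real.log_le_log
          · exact_mod_cast this.1
          · exact_mod_cast this.2
      _ = _ := by simp
  have h3 := psi_bound N
  have : (∑ n ∈ Ioc 0 N, Λ n / n) * N ≤ (Real.log N + 6) * N := by linarith
  exact le_of_mul_le_mul_right this hN0

lemma log_succ_div_le (n N : ℕ) (hn : 0 < n) (h : n ≤ N) :
    Real.log ((N + 1 : ℝ) / n) ≤ ∑ m ∈ Icc n N, (1:ℝ) / m := by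
  induction N, h using Nat.le_induction with
  | base =>
    simp
    have hn' : (0:ℝ) < n := by exact_mod_cast hn
    have := Real.log_le_sub_one_of_pos (x := (n+1:ℝ)/n) (by positivity)
    refine this.trans (le_of_eq ?_)
    field_simp; ring
  | succ k hk ih =>
    rw [← Finset.insert_Icc_right_eq_Icc_add_one (by omega), Finset.sum_insert (by simp)]
    have hn' : (0:ℝ) < n := by exact_mod_cast hn
    have := Real.log_le_sub_one_of_pos (x := (k+1+1:ℝ)/(k+1)) (by positivity)
    have e : Real.log (((k+1:ℕ):ℝ) + 1) = Real.log ((k+1+1:ℝ)/(k+1)) + Real.log (k+1:ℝ) := by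
      rw [← Real.log_mul (by positivity) (by positivity)]; congr 1; push_cast; field_simp
    rw [Real.log_div (by positivity) (by positivity), e]
    rw [Real.log_div (by positivity) (by positivity)] at ih
    have e2 : (k+1+1:ℝ)/(k+1) - 1 = 1 / (k+1) := by field_simp; ring
    rw [e2] at this
    push_cast
    linarith

lemma sum_lam_log (y : ℝ) (N : ℕ) (h1 : (N:ℝ) ≤ y) (h2 : y ≤ N + 1) :
    ∑ n ∈ Ioc 0 N, Λ n * Real.log (y / n) ≤ 6 * N := by
  calc _ ≤ ∑ n ∈ Ioc 0 N, Λ n * ∑ m ∈ Icc n N, (1:ℝ) / m := by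
        apply Finset.sum_le_sum
        intro n hn
        have hn' := Finset.mem_Ioc.mp hn
        apply mul_le_mul_of_nonneg_left _ vonMangoldt_nonneg
        refine le_trans ?_ (log_succ_div_le n N hn'.1 hn'.2)
        have : (0:ℝ) < n := by exact_mod_cast hn'.1
        have h3 : (n:ℝ) ≤ N := by exact_mod_cast hn'.2
        apply Real.log_le_log
        · apply div_pos (by linarith) this
        · gcongr
    _ = ∑ m ∈ Ioc 0 N, (∑ n ∈ Ioc 0 m, Λ n) * (1 / m) := by
        simp_rw [Finset.mul_sum, Finset.sum_mul]
        apply Finset.sum_comm'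
        intro x y
        simp only [mem_Ioc, mem_Icc]
        omega
    _ ≤ ∑ m ∈ Ioc 0 N, (6:ℝ) := by
        apply Finset.sum_le_sum
        intro m hm
        have hm' : (0:ℝ) < m := by exact_mod_cast (Finset.mem_Ioc.mp hm).1
        calc _ ≤ (6 * m) * (1 / m : ℝ) := by
              apply mul_le_mul_of_nonneg_right (psi_bound m) (by positivity)
          _ = 6 := by field_simp
    _ = _ := by simp [mul_comm]

lemma sum_lam_lam (N : ℕ) (s : Finset ℕ) (hs : ∀ a ∈ s, 0 < a) :
    ∑ a ∈ s, ∑ b ∈ Ioc 0 (N / a), Λ a * Λ b ≤ 6 * N * ∑ a ∈ s, Λ a / a := by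
  rw [Finset.mul_sum]
  apply Finset.sum_le_sum
  intro a ha
  rw [← Finset.mul_sum]
  have ha0 := hs a ha
  have h1 := psi_bound (N / a)
  have h2 : ((N / a : ℕ) : ℝ) ≤ N / a := Nat.cast_div_le
  have hΛ : 0 ≤ Λ a := vonMangoldt_nonneg
  calc _ ≤ Λ a * (6 * (N / a)) := by
        apply mul_le_mul_of_nonneg_left _ hΛ
        linarith
    _ = _ := by ring

lemma sum_inv_sqrt (N : ℕ) : ∑ d ∈ Ioc 0 N, 1 / Real.sqrt d ≤ 2 * Real.sqrt N := by
  induction N with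
  | zero => simp
  | succ n ih =>
    rw [← Finset.insert_Ioc_right_eq_Ioc_add_one (by omega), Finset.sum_insert (by simp)]
    have h1 : 0 < Real.sqrt (n+1:ℕ) := Real.sqrt_pos.mpr (by positivity)
    have h2 : 0 ≤ Real.sqrt n := Real.sqrt_nonneg _
    have h3 : Real.sqrt (n+1:ℕ) ^ 2 = n + 1 := by rw [Real.sq_sqrt (by positivity)]; push_cast; rfl
    have h4 : Real.sqrt n ^ 2 = n := Real.sq_sqrt (by positivity)
    have : 1 / Real.sqrt (n+1:ℕ) ≤ 2 * (Real.sqrt (n+1:ℕ) - Real.sqrt n) := by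
      rw [div_le_iff₀ h1]
      nlinarith [sq_nonneg (Real.sqrt (n+1:ℕ) - Real.sqrt n)]
    linarith

lemma sum_log_sq (y : ℝ) (N : ℕ) (h1 : (N:ℝ) ≤ y) (h2 : 1 ≤ y) :
    ∑ d ∈ Ioc 0 N, Real.log (y / d) ^ 2 ≤ 32 * y := by
  have hy0 : 0 < y := by linarith
  calc _ ≤ ∑ d ∈ Ioc 0 N, 16 * Real.sqrt y * (1 / Real.sqrt d) := by
        apply Finset.sum_le_sum
        intro d hd
        have hd' := Finset.mem_Ioc.mp hd
        have hd0 : (0:ℝ) < d := by exact_mod_cast hd'.1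
        have hdy : (d:ℝ) ≤ y := le_trans (by exact_mod_cast hd'.2) h1
        have h3 : 0 ≤ Real.log (y / d) := Real.log_nonneg (by rw [le_div_iff₀ hd0]; linarith)
        have h4 := Real.log_le_rpow_div (x := y / d) (by positivity) (ε := 1/4) (by norm_num)
        have h5 : Real.log (y / d) ^ 2 ≤ ((y / d) ^ (1/4:ℝ) / (1/4)) ^ 2 := by gcongr
        refine h5.trans (le_of_eq ?_)
        rw [div_pow, ← Real.rpow_natCast ((y/d)^(1/4:ℝ)), ← Real.rpow_mul (by positivity)]
        norm_num
        rw [← Real.sqrt_eq_rpow, Real.sqrt_div (by positivity)]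
        ring
    _ = 16 * Real.sqrt y * ∑ d ∈ Ioc 0 N, (1 / Real.sqrt d) := by rw [Finset.mul_sum]
    _ ≤ 16 * Real.sqrt y * (2 * Real.sqrt N) := by
        gcongr; exact sum_inv_sqrt N
    _ ≤ 16 * Real.sqrt y * (2 * Real.sqrt y) := by gcongr
    _ = 32 * (Real.sqrt y * Real.sqrt y) := by ring
    _ = _ := by rw [Real.mul_self_sqrt hy0.le]

end Vin

namespace Vin

lemma coprime_count_mul (q : ℕ) (k : ℕ) :
    #{m ∈ Ioc 0 (q * k) | Nat.Coprime q m} = Nat.totient q * k := by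
  induction k with
  | zero => simp
  | succ k ih =>
    have h1 : Ioc 0 (q * (k+1)) = Ioc 0 (q * k) ∪ Ioc (q*k) (q*k+q) := by
      ext x; simp only [mem_union, mem_Ioc, mul_add, mul_one]
      omega
    have hd : Disjoint (Ioc 0 (q * k)) (Ioc (q*k) (q*k+q)) := by
      rw [Finset.disjoint_left]; intro x; simp only [mem_Ioc]; omega
    rw [h1, Finset.filter_union, Finset.card_union_of_disjoint (Finset.disjoint_filter_filter hd), ih]
    have h2 : Ioc (q*k) (q*k+q) = Ico (q*k+1) (q*k+1+q) := by
      ext x; simp only [mem_Ioc, mem_Ico]; omega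
    rw [h2, Nat.filter_coprime_Ico_eq_totient]
    ring

lemma coprime_count (q : ℕ) (hq : 0 < q) (u : ℝ) (M : ℕ) (h1 : (M:ℝ) ≤ u) (h2 : u ≤ M + 1) :
    |(#{m ∈ Ioc 0 M | Nat.Coprime q m} : ℝ) - Nat.totient q / q * u| ≤ 2 * Nat.totient q := by
  have hq' : (0:ℝ) < q := by exact_mod_cast hq
  set k := M / q with hk
  have hM := Nat.div_add_mod M q
  rw [← hk] at hM
  have hlt := Nat.mod_lt M hq
  have lo : Nat.totient q * k ≤ #{m ∈ Ioc 0 M | Nat.Coprime q m} := by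
    rw [← coprime_count_mul]
    apply Finset.card_le_card
    apply Finset.filter_subset_filter
    apply Finset.Ioc_subset_Ioc_right
    exact Nat.mul_div_le M q
  have hi : #{m ∈ Ioc 0 M | Nat.Coprime q m} ≤ Nat.totient q * (k+1) := by
    rw [← coprime_count_mul]
    apply Finset.card_le_card
    apply Finset.filter_subset_filter
    apply Finset.Ioc_subset_Ioc_right
    rw [mul_add, mul_one]; omega
  have lo' : (Nat.totient q : ℝ) * k ≤ (#{m ∈ Ioc 0 M | Nat.Coprime q m} : ℝ) := by exact_mod_cast lo
  have hi' : (#{m ∈ Ioc 0 M | Nat.Coprime q m} : ℝ) ≤ (Nat.totient q : ℝ) * (k+1) := by exact_mod_cast hi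
  have hq1 : (1:ℝ) ≤ q := by exact_mod_cast hq
  have hu1 : (k:ℝ) ≤ u / q := by
    rw [le_div_iff₀ hq']
    have : k * q ≤ M := by rw [mul_comm]; exact Nat.mul_div_le M q
    have : (k:ℝ) * q ≤ M := by exact_mod_cast this
    linarith
  have hu2 : u / q ≤ k + 1 := by
    rw [div_le_iff₀ hq']
    have : M + 1 ≤ (k+1) * q := by nlinarith
    have : (M:ℝ) + 1 ≤ (k+1) * q := by exact_mod_cast this
    linarith
  have hφ : (0:ℝ) ≤ Nat.totient q := by positivity
  have e : (Nat.totient q : ℝ) / q * u = Nat.totient q * (u / q) := by ring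
  rw [e, abs_le]
  constructor <;> nlinarith

/-- Upper bound for the full Selberg sum. -/
lemma selberg_upper (y : ℝ) (hy : 1 ≤ y) (N : ℕ) (hN : 1 ≤ N) (h1 : (N:ℝ) ≤ y) (h2 : y ≤ N + 1)
    (ω : ℕ → ℂ) (hω : ∀ n, ‖ω n‖ ≤ 1) :
    ‖∑ d ∈ Ioc 0 N, ((μ d : ℝ) * Real.log (y / d) ^ 2 : ℝ) * ∑ m ∈ Ioc 0 (N / d), ω (d * m)‖
      ≤ 100 * y * (1 + Real.log y) := by
  have hl : 0 ≤ Real.log y := Real.log_nonneg hy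
  have hlN : Real.log N ≤ Real.log y := Real.log_le_log (by exact_mod_cast hN) h1
  rw [selberg_sum y hy N hN ω]
  refine (norm_add_le _ _).trans ?_
  have a1 : ‖((Real.log y ^ 2 : ℝ) : ℂ) * ω 1‖ ≤ 32 * y := by
    rw [norm_mul, Complex.norm_real, Real.norm_of_nonneg (by positivity)]
    have := sum_log_sq y N h1 hy
    have h3 : Real.log (y / (1:ℕ)) ^ 2 ≤ ∑ d ∈ Ioc 0 N, Real.log (y / d) ^ 2 := by
      apply Finset.single_le_sum (f := fun d : ℕ => Real.log (y / d) ^ 2)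
      · intro i _; positivity
      · simp; omega
    simp at h3
    nlinarith [hω 1, norm_nonneg (ω 1), sq_nonneg (Real.log y)]
  have a2 : ‖∑ a ∈ Ioc 0 N, ∑ b ∈ Ioc 0 (N / a), ((Λ a * Λ b : ℝ) : ℂ) * ω (a * b)‖
      ≤ 6 * y * (Real.log y + 6) := by
    calc _ ≤ ∑ a ∈ Ioc 0 N, ∑ b ∈ Ioc 0 (N / a), Λ a * Λ b := by
          refine (norm_sum_le _ _).trans (Finset.sum_le_sum fun a _ => ?_)
          refine (norm_sum_le _ _).trans (Finset.sum_le_sum fun b _ => ?_)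
          have hh : 0 ≤ Λ a * Λ b := mul_nonneg vonMangoldt_nonneg vonMangoldt_nonneg
          rw [norm_mul, Complex.norm_real, Real.norm_of_nonneg hh]
          exact mul_le_of_le_one_right hh (hω _)
      _ ≤ 6 * N * ∑ a ∈ Ioc 0 N, Λ a / a := sum_lam_lam N _ (fun a ha => (Finset.mem_Ioc.mp ha).1)
      _ ≤ 6 * y * (Real.log y + 6) := by
          have := mertens N hN
          gcongr
          linarith
  have a3 : ‖∑ n ∈ Ioc 0 N, ((Λ n * Real.log y + Λ n * Real.log (y / n) : ℝ) : ℂ) * ω n‖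
      ≤ 6 * y * Real.log y + 6 * y := by
    calc _ ≤ ∑ n ∈ Ioc 0 N, (Λ n * Real.log y + Λ n * Real.log (y / n)) := by
          refine (norm_sum_le _ _).trans (Finset.sum_le_sum fun n hn => ?_)
          have hn' := Finset.mem_Ioc.mp hn
          have hn0 : (0:ℝ) < n := by exact_mod_cast hn'.1
          have hny : (n:ℝ) ≤ y := le_trans (by exact_mod_cast hn'.2) h1
          have : 0 ≤ Real.log (y / n) := Real.log_nonneg (by rw [le_div_iff₀ hn0]; linarith)
          have hh : 0 ≤ Λ n * Real.log y + Λ n * Real.log (y / n) :=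
            add_nonneg (mul_nonneg vonMangoldt_nonneg hl) (mul_nonneg vonMangoldt_nonneg this)
          rw [norm_mul, Complex.norm_real, Real.norm_of_nonneg hh]
          exact mul_le_of_le_one_right hh (hω _)
      _ ≤ (6 * N) * Real.log y + 6 * N := by
          rw [Finset.sum_add_distrib, ← Finset.sum_mul]
          gcongr
          · exact psi_bound N
          · exact sum_lam_log y N h1 h2
      _ ≤ _ := by gcongr
  have := (norm_add_le (∑ n ∈ Ioc 0 N, ((Λ n * Real.log y + Λ n * Real.log (y / n) : ℝ) : ℂ) * ω n)
    (∑ a ∈ Ioc 0 N, ∑ b ∈ Ioc 0 (N / a), ((Λ a * Λ b : ℝ) : ℂ) * ω (a * b)))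
  nlinarith [mul_nonneg (by linarith : (0:ℝ) ≤ y) hl]

lemma moebius_abs_le (d : ℕ) : |(μ d : ℝ)| ≤ 1 := by
  have := abs_moebius_le_one (n := d)
  exact_mod_cast this

/-- `|∑_{j ≤ y, (j,q)=1} μ(j)/j log²(y/j)| ≪ (q/φ(q)) (1+log y) + q`. -/
lemma lemG (q : ℕ) (hq : 0 < q) (y : ℝ) (hy : 1 ≤ y) (N : ℕ) (hN : N = ⌊y⌋₊) :
    |∑ j ∈ Ioc 0 N with Nat.Coprime q j, (μ j : ℝ) / j * Real.log (y / j) ^ 2|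
      ≤ q / Nat.totient q * (100 * (1 + Real.log y)) + 64 * q := by
  have hy0 : 0 < y := by linarith
  have h1 : (N:ℝ) ≤ y := by rw [hN]; exact Nat.floor_le hy0.le
  have h2 : y ≤ N + 1 := by rw [hN]; exact (Nat.lt_floor_add_one y).le
  have hN1 : 1 ≤ N := by rw [hN]; exact Nat.le_floor (by exact_mod_cast hy)
  have hq' : (0:ℝ) < q := by exact_mod_cast hq
  have hφ : (0:ℝ) < Nat.totient q := by exact_mod_cast Nat.totient_pos.mpr hq
  set ω : ℕ → ℂ := fun n => if Nat.Coprime q n then 1 else 0 with hωdef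
  have hω : ∀ n, ‖ω n‖ ≤ 1 := by intro n; simp only [hωdef]; split_ifs <;> simp
  have hU := selberg_upper y hy N hN1 h1 h2 ω hω
  set c : ℕ → ℝ := fun M => (#{m ∈ Ioc 0 M | Nat.Coprime q m} : ℝ) with hc
  have e1 : ∑ d ∈ Ioc 0 N, (((μ d : ℝ) * Real.log (y / d) ^ 2 : ℝ) : ℂ) * ∑ m ∈ Ioc 0 (N / d), ω (d * m)
      = ((∑ d ∈ Ioc 0 N with Nat.Coprime q d, (μ d : ℝ) * Real.log (y / d) ^ 2 * c (N / d) : ℝ) : ℂ) := by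
    rw [Finset.sum_filter, Complex.ofReal_sum]
    refine Finset.sum_congr rfl fun d _ => ?_
    have : ∑ m ∈ Ioc 0 (N / d), ω (d * m) = if Nat.Coprime q d then ((c (N/d) : ℝ) : ℂ) else 0 := by
      simp only [hωdef, Nat.coprime_mul_iff_right]
      split_ifs with h
      · rw [Finset.sum_congr rfl (fun m _ => if_congr (and_iff_right h) rfl rfl)]
        simp [hc]
      · simp [h]
    rw [this]
    split_ifs <;> simp
  rw [e1, Complex.norm_real, Real.norm_eq_abs] at hU
  set G := ∑ j ∈ Ioc 0 N with Nat.Coprime q j, (μ j : ℝ) / j * Real.log (y / j) ^ 2 with hG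
  have e2 : |∑ d ∈ Ioc 0 N with Nat.Coprime q d, (μ d : ℝ) * Real.log (y / d) ^ 2 * c (N / d)
      - Nat.totient q / q * y * G| ≤ 2 * Nat.totient q * (32 * y) := by
    rw [hG, Finset.mul_sum, ← Finset.sum_sub_distrib]
    refine (Finset.abs_sum_le_sum_abs _ _).trans ?_
    calc _ ≤ ∑ d ∈ Ioc 0 N with Nat.Coprime q d, Real.log (y / d) ^ 2 * (2 * Nat.totient q) := by
          refine Finset.sum_le_sum fun d hd => ?_
          have hd' := Finset.mem_Ioc.mp (Finset.mem_filter.mp hd).1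
          have hd0 : (0:ℝ) < d := by exact_mod_cast hd'.1
          have hf : N / d = ⌊y / d⌋₊ := by rw [hN, Nat.floor_div_natCast]
          have hcc := coprime_count q hq (y / d) (N / d)
            (by rw [hf]; exact Nat.floor_le (by positivity))
            (by rw [hf]; exact (Nat.lt_floor_add_one _).le)
          have : (μ d : ℝ) * Real.log (y / d) ^ 2 * c (N / d)
              - Nat.totient q / q * y * ((μ d : ℝ) / d * Real.log (y / d) ^ 2)
              = (μ d : ℝ) * (Real.log (y / d) ^ 2 * (c (N/d) - Nat.totient q / q * (y / d))) := by
            field_simp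
          rw [this, abs_mul, abs_mul, abs_of_nonneg (sq_nonneg (Real.log (y / d)))]
          have hm := moebius_abs_le d
          calc _ ≤ 1 * (Real.log (y / d) ^ 2 * |c (N/d) - Nat.totient q / q * (y / d)|) := by
                gcongr
            _ ≤ _ := by rw [one_mul]; gcongr
      _ ≤ ∑ d ∈ Ioc 0 N, Real.log (y / d) ^ 2 * (2 * Nat.totient q) := by
          apply Finset.sum_le_sum_of_subset_of_nonneg (Finset.filter_subset _ _)
          intros; positivity
      _ ≤ _ := by
          rw [← Finset.sum_mul, mul_comm]
          gcongr
          exact sum_log_sq y N h1 hy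
  have e3 : |Nat.totient q / q * y * G| ≤ 100 * y * (1 + Real.log y) + 2 * Nat.totient q * (32 * y) := by
    have := abs_sub_abs_le_abs_sub (Nat.totient q / q * y * G)
      (∑ d ∈ Ioc 0 N with Nat.Coprime q d, (μ d : ℝ) * Real.log (y / d) ^ 2 * c (N / d))
    rw [abs_sub_comm] at this
    linarith
  rw [abs_mul, abs_of_pos (by positivity)] at e3
  have e4 : |G| = (q / (Nat.totient q * y)) * (Nat.totient q / q * y * |G|) := by field_simp
  rw [e4]
  calc _ ≤ (q / (Nat.totient q * y)) * (100 * y * (1 + Real.log y) + 2 * Nat.totient q * (32 * y)) := by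
        gcongr
    _ = _ := by field_simp; ring

/-- the main-term of type I -/
lemma lemG' (q : ℕ) (hq : 0 < q) (N : ℕ) (hqN : q ≤ N) :
    |∑ d ∈ Ioc 0 N with q ∣ d, (μ d : ℝ) / d * Real.log (N / d) ^ 2|
      ≤ 100 * (1 + Real.log N) / Nat.totient q + 64 := by
  have hq' : (0:ℝ) < q := by exact_mod_cast hq
  have hφ : (0:ℝ) < Nat.totient q := by exact_mod_cast Nat.totient_pos.mpr hq
  have hqN' : (q:ℝ) ≤ N := by exact_mod_cast hqN
  have hy : 1 ≤ (N:ℝ) / q := by rw [le_div_iff₀ hq']; linarith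
  have hfl : N / q = ⌊(N:ℝ) / q⌋₊ := by rw [Nat.floor_div_natCast, Nat.floor_natCast]
  have hg := lemG q hq ((N:ℝ) / q) hy (N / q) hfl
  have e : ∑ d ∈ Ioc 0 N with q ∣ d, (μ d : ℝ) / d * Real.log (N / d) ^ 2
      = (μ q : ℝ) / q * ∑ j ∈ Ioc 0 (N / q) with Nat.Coprime q j, (μ j : ℝ) / j * Real.log (N / q / j) ^ 2 := by
    rw [Finset.mul_sum, Finset.sum_filter (fun j => Nat.Coprime q j)]
    symm
    refine Finset.sum_bij (fun j _ => q * j) ?_ ?_ ?_ ?_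
    · intro j hj
      rw [Finset.mem_Ioc] at hj
      simp only [mem_filter, mem_Ioc, dvd_mul_right, and_true]
      refine ⟨Nat.mul_pos hq hj.1, ?_⟩
      exact (Nat.mul_le_mul_left q hj.2).trans (Nat.mul_div_le N q)
    · intro a _ b _ h
      exact Nat.eq_of_mul_eq_mul_left hq h
    · intro d hd
      rw [Finset.mem_filter, Finset.mem_Ioc] at hd
      obtain ⟨⟨h0, h1⟩, j, rfl⟩ := hd
      refine ⟨j, ?_, rfl⟩
      rw [Finset.mem_Ioc]
      refine ⟨Nat.pos_of_mul_pos_left h0, ?_⟩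
      rw [Nat.le_div_iff_mul_le hq, mul_comm]; exact h1
    · intro j hj
      have hj0 : (0:ℝ) < j := by exact_mod_cast (Finset.mem_Ioc.mp hj).1
      split_ifs with h
      · rw [isMultiplicative_moebius.map_mul_of_coprime h]
        push_cast
        rw [div_div]
        field_simp
      · have : μ (q * j) = 0 := by
          apply moebius_eq_zero_of_not_squarefree
          intro hs
          exact h (Nat.coprime_of_squarefree_mul hs)
        rw [this]; simp
  rw [e, abs_mul]
  have hμ := moebius_abs_le q
  have h1 : |(μ q : ℝ) / q| ≤ 1 / q := by
    rw [abs_div, abs_of_pos hq']; gcongr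
  have hl : Real.log ((N:ℝ) / q) ≤ Real.log N := by
    apply Real.log_le_log (by linarith)
    apply div_le_self (by positivity)
    exact_mod_cast hq
  calc _ ≤ 1 / q * (q / Nat.totient q * (100 * (1 + Real.log (N / q))) + 64 * q) := by
        apply mul_le_mul h1 hg (abs_nonneg _) (by positivity)
    _ ≤ 1 / q * (q / Nat.totient q * (100 * (1 + Real.log N)) + 64 * q) := by gcongr
    _ = _ := by field_simp

end Vin
namespace Vin

/-- `φ(q) → ∞`. -/
lemma totient_large (C : ℕ) (q : ℕ) (hq0 : 0 < q) (hq : (2 * C).factorial < q) : C < Nat.totient q := by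
  by_contra hcon
  push Not at hcon
  have : q ∣ (2 * C).factorial := by
    rw [Nat.dvd_iff_prime_pow_dvd_dvd]
    intro p k hp hpk
    rcases Nat.eq_zero_or_pos k with rfl | hk
    · simp
    apply Nat.dvd_factorial (pow_pos hp.pos k)
    have h1 : Nat.totient (p ^ k) ≤ C :=
      (Nat.le_of_dvd (Nat.totient_pos.mpr hq0) (Nat.totient_dvd_of_dvd hpk)).trans hcon
    rw [Nat.totient_prime_pow hp hk] at h1
    have h2 : p ^ k = p ^ (k-1) * p := by
      rw [← pow_succ]; congr 1; omega
    have h3 : p ≤ 2 * (p - 1) := by have := hp.two_le; omega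
    calc p ^ k = p ^ (k-1) * p := h2
      _ ≤ p ^ (k-1) * (2 * (p-1)) := Nat.mul_le_mul_left _ h3
      _ = 2 * (p ^ (k-1) * (p-1)) := by ring
      _ ≤ 2 * C := Nat.mul_le_mul_left _ h1
  exact absurd (Nat.le_of_dvd (Nat.factorial_pos _) this) (by omega)

lemma sum_range_zmod {M : Type*} [AddCommMonoid M] (q : ℕ) (hq : 0 < q) [NeZero q] (f : ZMod q → M) :
    ∑ i ∈ range q, f (i : ZMod q) = ∑ x, f x := by
  refine Finset.sum_bij' (fun i _ => (i : ZMod q)) (fun x _ => x.val) ?_ ?_ ?_ ?_ ?_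
  · intros; simp
  · intro x _; simpa using ZMod.val_lt x
  · intro i hi; exact ZMod.val_cast_of_lt (by simpa using hi)
  · intro x _; simp
  · intros; rfl

lemma sum_Ioc_shift {M : Type*} [AddCommMonoid M] (f : ℕ → M) (A q : ℕ) :
    ∑ n ∈ Ioc A (A + q), f n = ∑ i ∈ range q, f (A + 1 + i) := by
  have : Ioc A (A+q) = Ico (A+1) (A+1+q) := by ext; simp; omega
  rw [this, Finset.sum_Ico_eq_sum_range]; congr 2; omega

lemma sum_block_zmod {M : Type*} [AddCommMonoid M] (q : ℕ) (hq : 0 < q) [NeZero q] (f : ZMod q → M) (A : ℕ) :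
    ∑ n ∈ Ioc A (A + q), f (n : ZMod q) = ∑ x, f x := by
  rw [sum_Ioc_shift (fun n => f (n : ZMod q)), ← Equiv.sum_comp (Equiv.addLeft ((A+1 : ℕ) : ZMod q)) f,
    ← sum_range_zmod q hq]
  refine Finset.sum_congr rfl fun i _ => ?_
  simp [add_assoc]

lemma sum_blocks_zmod {M : Type*} [AddCommMonoid M] (q : ℕ) (hq : 0 < q) [NeZero q] (f : ZMod q → M) (K : ℕ) :
    ∑ n ∈ Ioc 0 (q * K), f (n : ZMod q) = K • ∑ x, f x := by
  induction K with
  | zero => simp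
  | succ K ih =>
    rw [mul_add, mul_one, ← Finset.sum_Ioc_consecutive _ (Nat.zero_le (q*K)) (by omega), ih,
      sum_block_zmod q hq, succ_nsmul]

lemma nn_add_int (x : ℝ) (n : ℤ) : nn (x + n) = nn x := by
  unfold nn; rw [round_add_intCast]; push_cast; congr 1; ring

lemma harmonic_bd (q : ℕ) : ∑ i ∈ Ioc 0 q, (1:ℝ) / i ≤ 1 + Real.log q := by
  have := harmonic_le_one_add_log q
  rw [harmonic_eq_sum_Icc] at this
  push_cast at this
  have e : Ioc 0 q = Icc 1 q := by ext; simp; omega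
  rw [e]; simpa using this

lemma nn_frac_ge (j q : ℕ) (hj : 0 < j) (hjq : j < q) :
    1 / nn ((j:ℝ) / q) ≤ q / j + q / ((q - j : ℕ) : ℝ) := by
  have hq : (0:ℝ) < q := by exact_mod_cast (by omega : 0 < q)
  have hj' : (0:ℝ) < j := by exact_mod_cast hj
  have hqj : (0:ℝ) < ((q - j : ℕ) : ℝ) := by exact_mod_cast (by omega : 0 < q - j)
  have hqj' : ((q - j : ℕ) : ℝ) = q - j := by rw [Nat.cast_sub hjq.le]
  have key : (j:ℝ) / q ≤ nn ((j:ℝ)/q) ∨ ((q - j : ℕ) : ℝ) / q ≤ nn ((j:ℝ)/q) := by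
    unfold nn
    have hx0 : 0 < (j:ℝ)/q := by positivity
    have hx1 : (j:ℝ)/q < 1 := by rw [div_lt_one hq]; exact_mod_cast hjq
    rcases le_or_gt (round ((j:ℝ)/q)) 0 with h | h
    · left
      have : ((round ((j:ℝ)/q) : ℤ) : ℝ) ≤ 0 := by exact_mod_cast h
      exact (by linarith : _ ≤ (j:ℝ)/q - round ((j:ℝ)/q)).trans (le_abs_self _)
    · right
      have : (1:ℝ) ≤ ((round ((j:ℝ)/q) : ℤ) : ℝ) := by exact_mod_cast h
      have e : ((q - j : ℕ) : ℝ) / q = 1 - (j:ℝ)/q := by rw [hqj']; field_simp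
      rw [e]
      refine le_trans ?_ (neg_le_abs _)
      linarith
  rcases key with h | h
  · calc 1 / nn ((j:ℝ)/q) ≤ 1 / ((j:ℝ)/q) := by gcongr
      _ = q / j := by field_simp
      _ ≤ _ := by linarith [div_pos hq hqj]
  · calc 1 / nn ((j:ℝ)/q) ≤ 1 / (((q - j : ℕ) : ℝ)/q) := by gcongr
      _ = q / ((q - j : ℕ) : ℝ) := by field_simp
      _ ≤ _ := by linarith [div_pos hq hj']

lemma nn_nonneg' (x : ℝ) : 0 ≤ nn x := by unfold nn; positivity

lemma nn_frac_zmod (q : ℕ) [NeZero q] (m : ℤ) : nn ((m:ℝ)/q) = nn (((m : ZMod q).val : ℝ) / q) := by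
  have hq : (0:ℝ) < q := by exact_mod_cast Nat.pos_of_ne_zero (NeZero.ne q)
  have h : (((m : ZMod q).val : ℕ) : ℤ) = m % q := ZMod.val_intCast m
  have h2 := Int.emod_add_mul_ediv m q
  have h3 : (m:ℝ) = ((m : ZMod q).val : ℝ) + q * ((m / (q:ℤ) : ℤ) : ℝ) := by
    rw [← h] at h2
    exact_mod_cast h2.symm
  have : (m:ℝ)/q = ((m : ZMod q).val : ℝ)/q + ((m / (q:ℤ) : ℤ) : ℝ) := by
    rw [h3]; field_simp
  rw [this, nn_add_int]

lemma frac_sum (q : ℕ) (hq : 0 < q) [NeZero q] (a : ℤ) (ha : IsCoprime a (q:ℤ)) (X : ℕ) :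
    ∑ h ∈ Ioc 0 X with ¬ q ∣ h, 1 / nn ((h:ℝ) * (a / q)) ≤ ((X:ℝ) / q + 1) * (2 * q * (1 + Real.log q)) := by
  have hq' : (0:ℝ) < q := by exact_mod_cast hq
  have hq1 : (1:ℝ) ≤ q := by exact_mod_cast hq
  set g : ZMod q → ℝ := fun x => if x = 0 then 0 else 1 / nn ((x.val : ℝ) / q) with hg
  have hg0 : ∀ x, 0 ≤ g x := by
    intro x; simp only [hg]; split_ifs
    · rfl
    · have := nn_nonneg ((x.val : ℝ) / q); positivity
  have hu : IsUnit (a : ZMod q) := by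
    obtain ⟨u, v, huv⟩ := ha
    have := congrArg (Int.cast : ℤ → ZMod q) huv
    push_cast at this
    simp at this
    exact IsUnit.of_mul_eq_one_right _ this
  obtain ⟨u, hu⟩ := hu
  have hterm : ∀ h ∈ Ioc 0 X, (if ¬ q ∣ h then 1 / nn ((h:ℝ) * (a / q)) else 0) = g ((h : ZMod q) * u) := by
    intro h _
    have hz : ((h : ZMod q) * u = 0) ↔ q ∣ h := by
      rw [Units.mul_left_eq_zero, ZMod.natCast_eq_zero_iff]
    simp only [hg, hz]
    by_cases hd : q ∣ h
    · simp [hd]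
    · simp only [hd, not_false_eq_true, if_true, if_false]
      have : ((h:ℝ) * (a / q)) = (((h * a : ℤ) : ℝ)) / q := by push_cast; ring
      rw [this, nn_frac_zmod, hu]; push_cast; rfl
  set K := X / q + 1 with hK
  have hXK : X ≤ q * K := by
    have := Nat.div_add_mod X q
    have := Nat.mod_lt X hq
    rw [hK, mul_add]; omega
  have hKle : (K:ℝ) ≤ (X:ℝ)/q + 1 := by
    rw [hK]; push_cast
    have : ((X / q : ℕ) : ℝ) ≤ (X:ℝ)/q := Nat.cast_div_le
    linarith
  have hfull : ∑ x, g x ≤ 2 * q * (1 + Real.log q) := by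
    rw [← sum_range_zmod q hq g]
    have e1 : ∑ i ∈ range q, g (i : ZMod q) ≤ ∑ i ∈ Ioo 0 q, ((q:ℝ) / i + q / ((q - i : ℕ) : ℝ)) := by
      have : range q = insert 0 (Ioo 0 q) := by ext i; simp; omega
      rw [this, Finset.sum_insert (by simp)]
      have : g ((0:ℕ) : ZMod q) = 0 := by simp [hg]
      rw [this, zero_add]
      refine Finset.sum_le_sum fun i hi => ?_
      rw [Finset.mem_Ioo] at hi
      have h0 : ¬ ((i : ZMod q) = 0) := by
        rw [ZMod.natCast_eq_zero_iff]; intro hd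
        exact absurd (Nat.le_of_dvd hi.1 hd) (by omega)
      simp only [hg, h0, if_false]
      rw [ZMod.val_cast_of_lt hi.2]
      exact nn_frac_ge i q hi.1 hi.2
    have e2 : ∑ i ∈ Ioo 0 q, (q:ℝ) / ((q - i : ℕ) : ℝ) = ∑ i ∈ Ioo 0 q, (q:ℝ) / i := by
      refine Finset.sum_bij' (fun i _ => q - i) (fun i _ => q - i) ?_ ?_ ?_ ?_ ?_
      · intro i hi; simp only [mem_Ioo] at hi ⊢; omega
      · intro i hi; simp only [mem_Ioo] at hi ⊢; omega
      · intro i hi; simp only [mem_Ioo] at hi ⊢; omega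
      · intro i hi; simp only [mem_Ioo] at hi ⊢; omega
      · intros; rfl
    have e3 : ∑ i ∈ Ioo 0 q, (q:ℝ) / i ≤ q * (1 + Real.log q) := by
      calc _ ≤ ∑ i ∈ Ioc 0 q, (q:ℝ) / i := by
            apply Finset.sum_le_sum_of_subset_of_nonneg Finset.Ioo_subset_Ioc_self
            intros; positivity
        _ = q * ∑ i ∈ Ioc 0 q, (1:ℝ) / i := by rw [Finset.mul_sum]; congr 1; ext; ring
        _ ≤ _ := by gcongr; exact harmonic_bd q
    rw [Finset.sum_add_distrib, e2] at e1
    linarith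
  rw [Finset.sum_filter, Finset.sum_congr rfl hterm]
  calc _ ≤ ∑ h ∈ Ioc 0 (q * K), g ((h : ZMod q) * u) := by
        apply Finset.sum_le_sum_of_subset_of_nonneg (Finset.Ioc_subset_Ioc_right hXK)
        intros; exact hg0 _
    _ = K • ∑ x, g (x * u) := sum_blocks_zmod q hq (fun x => g (x * u)) K
    _ = K * ∑ x, g x := by
        rw [nsmul_eq_mul]; congr 1
        exact Equiv.sum_comp (Units.mulRight u) g
    _ ≤ ((X:ℝ) / q + 1) * (2 * q * (1 + Real.log q)) := by
        apply mul_le_mul hKle hfull (Finset.sum_nonneg fun x _ => hg0 x) (by positivity)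

lemma nn_frac_lower (q : ℕ) (hq : 0 < q) [NeZero q] (a : ℤ) (ha : IsCoprime a (q:ℤ)) (h : ℕ) (hd : ¬ q ∣ h) :
    1 / (q:ℝ) ≤ nn ((h:ℝ) * (a / q)) := by
  have hq' : (0:ℝ) < q := by exact_mod_cast hq
  unfold nn
  set r := round ((h:ℝ) * (a / q)) with hr
  have hne : (h:ℤ) * a - r * q ≠ 0 := by
    intro h0
    have h1 : (q:ℤ) ∣ h * a := ⟨r, by linarith⟩
    have h2 : (q:ℤ) ∣ h := ha.symm.dvd_of_dvd_mul_right h1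
    exact hd (by exact_mod_cast h2)
  have h1 : (1:ℝ) ≤ |(((h:ℤ) * a - r * q : ℤ) : ℝ)| := by
    exact_mod_cast Int.one_le_abs hne
  have e : (h:ℝ) * (a / q) - r = (((h:ℤ) * a - r * q : ℤ) : ℝ) / q := by
    push_cast; field_simp
  rw [e, abs_div, abs_of_pos hq']
  gcongr

lemma nn_alpha_ge (q : ℕ) (hq : 0 < q) [NeZero q] (a : ℤ) (ha : IsCoprime a (q:ℤ)) (α Q : ℝ) (hQ : 0 < Q)
    (hα : |α - a / q| ≤ 1 / (q * Q)) (X : ℕ) (hX : 2 * (X:ℝ) ≤ Q) (h : ℕ) (hX' : h ≤ X) (hd : ¬ q ∣ h) :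
    nn ((h:ℝ) * (a / q)) / 2 ≤ nn (h * α) := by
  have hq' : (0:ℝ) < q := by exact_mod_cast hq
  have h1 := nn_frac_lower q hq a ha h hd
  have h2 := nn_sub_le ((h:ℝ) * (a / q)) (h * α)
  have h3 : |(h:ℝ) * (a / q) - h * α| ≤ 1 / (2 * q) := by
    rw [← mul_sub, abs_mul, abs_sub_comm, Nat.abs_cast]
    have hh : (h:ℝ) ≤ Q / 2 := by
      have : (h:ℝ) ≤ X := by exact_mod_cast hX'
      linarith
    calc (h:ℝ) * |α - a / q| ≤ Q / 2 * (1 / (q * Q)) := by gcongr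
      _ = _ := by field_simp
  have h4 : (1:ℝ) / (2 * q) = 1 / q / 2 := by field_simp
  rw [h4] at h3
  linarith

lemma alpha_sum (q : ℕ) (hq : 0 < q) [NeZero q] (a : ℤ) (ha : IsCoprime a (q:ℤ)) (α Q : ℝ) (hQ : 0 < Q)
    (hα : |α - a / q| ≤ 1 / (q * Q)) (X : ℕ) (hX : 2 * (X:ℝ) ≤ Q) :
    ∑ h ∈ Ioc 0 X with ¬ q ∣ h, 1 / nn ((h:ℝ) * α) ≤ 4 * (X + q) * (1 + Real.log q) := by
  have hq' : (0:ℝ) < q := by exact_mod_cast hq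
  calc _ ≤ ∑ h ∈ Ioc 0 X with ¬ q ∣ h, 2 * (1 / nn ((h:ℝ) * (a / q))) := by
        refine Finset.sum_le_sum fun h hh => ?_
        rw [Finset.mem_filter, Finset.mem_Ioc] at hh
        have h1 := nn_alpha_ge q hq a ha α Q hQ hα X hX h hh.1.2 hh.2
        have h2 := nn_frac_lower q hq a ha h hh.2
        have h3 : 0 < nn ((h:ℝ) * (a / q)) := lt_of_lt_of_le (by positivity) h2
        calc 1 / nn ((h:ℝ) * α) ≤ 1 / (nn ((h:ℝ) * (a / q)) / 2) := by gcongr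
          _ = _ := by field_simp
    _ = 2 * ∑ h ∈ Ioc 0 X with ¬ q ∣ h, (1 / nn ((h:ℝ) * (a / q))) := by rw [Finset.mul_sum]
    _ ≤ 2 * (((X:ℝ) / q + 1) * (2 * q * (1 + Real.log q))) := by gcongr; exact frac_sum q hq a ha X
    _ = _ := by field_simp; ring

lemma nn_alpha_pos (q : ℕ) (hq : 0 < q) [NeZero q] (a : ℤ) (ha : IsCoprime a (q:ℤ)) (α Q : ℝ) (hQ : 0 < Q)
    (hα : |α - a / q| ≤ 1 / (q * Q)) (X : ℕ) (hX : 2 * (X:ℝ) ≤ Q) (h : ℕ) (hX' : h ≤ X) (hd : ¬ q ∣ h) :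
    0 < nn (h * α) := by
  have h1 := nn_alpha_ge q hq a ha α Q hQ hα X hX h hX' hd
  have h2 := nn_frac_lower q hq a ha h hd
  have hq' : (0:ℝ) < q := by exact_mod_cast hq
  have h3 : 0 < 1 / (q:ℝ) := by positivity
  linarith

end Vin
namespace Vin

lemma sum_inv_le_log (D N : ℕ) (hD : 0 < D) (hDN : D ≤ N) :
    ∑ d ∈ Ioc D N, (1:ℝ) / d ≤ Real.log (N / D) := by
  induction N, hDN using Nat.le_induction with
  | base => simp [hD.ne']
  | succ n hn ih =>
    rw [Finset.sum_Ioc_succ_top (by omega)]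
    have hD' : (0:ℝ) < D := by exact_mod_cast hD
    have hn' : (0:ℝ) < n := by exact_mod_cast (by omega : 0 < n)
    have h1 : Real.log (((n+1:ℕ):ℝ) / D) = Real.log (n / D) + Real.log ((n+1)/n) := by
      rw [← Real.log_mul (by positivity) (by positivity)]; congr 1; push_cast; field_simp
    rw [h1]
    have h2 := Real.one_sub_inv_le_log_of_pos (x := ((n:ℝ)+1)/n) (by positivity)
    have h3 : 1 - (((n:ℝ)+1)/n)⁻¹ = 1 / ((n+1:ℕ):ℝ) := by push_cast; field_simp; ring
    rw [h3] at h2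
    linarith

/-- compare `∑_{m ≤ N/d} e(dmβ)` with `(1/d) ∑_{n ≤ N} e(nβ)` -/
lemma block_compare_aux (d : ℕ) (hd : 0 < d) (β : ℝ) (K : ℕ) :
    ‖(d:ℂ) * ∑ m ∈ Ioc 0 K, ee ((d:ℝ) * m * β) - ∑ n ∈ Ioc 0 (d * K), ee (n * β)‖
      ≤ K * (d * (2 * Real.pi * (d * |β|))) := by
  induction K with
  | zero => simp
  | succ K ih =>
    rw [mul_add d, mul_one, ← Finset.sum_Ioc_consecutive _ (Nat.zero_le (d*K)) (by omega : d * K ≤ d * K + d),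
      Finset.sum_Ioc_succ_top (Nat.zero_le K), mul_add]
    have h1 : ‖(d:ℂ) * ee ((d:ℝ) * ((K+1:ℕ):ℝ) * β) - ∑ n ∈ Ioc (d*K) (d*K+d), ee (n * β)‖
        ≤ d * (2 * Real.pi * (d * |β|)) := by
      have e : (d:ℂ) * ee ((d:ℝ) * ((K+1:ℕ):ℝ) * β) = ∑ n ∈ Ioc (d*K) (d*K+d), ee ((d:ℝ) * ((K+1:ℕ):ℝ) * β) := by
        rw [Finset.sum_const, Nat.card_Ioc, nsmul_eq_mul]; congr 2; omega
      rw [e, ← Finset.sum_sub_distrib]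
      refine (norm_sum_le _ _).trans ?_
      calc _ ≤ ∑ n ∈ Ioc (d*K) (d*K+d), 2 * Real.pi * (d * |β|) := by
            refine Finset.sum_le_sum fun n hn => ?_
            refine (norm_ee_sub_le _ _).trans ?_
            rw [← sub_mul, abs_mul]
            rw [Finset.mem_Ioc] at hn
            have h1 : ((d*K:ℕ):ℝ) < n := by exact_mod_cast hn.1
            have h2 : (n:ℝ) ≤ ((d*K+d:ℕ):ℝ) := by exact_mod_cast hn.2
            push_cast at h1 h2 ⊢
            have : |(d:ℝ) * (K + 1) - n| ≤ d := by rw [abs_le]; constructor <;> nlinarith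
            gcongr
        _ = _ := by rw [Finset.sum_const, Nat.card_Ioc, nsmul_eq_mul]; congr 2; omega
    calc _ = ‖((d:ℂ) * ∑ m ∈ Ioc 0 K, ee ((d:ℝ) * m * β) - ∑ n ∈ Ioc 0 (d * K), ee (n * β)) +
        ((d:ℂ) * ee ((d:ℝ) * ((K+1:ℕ):ℝ) * β) - ∑ n ∈ Ioc (d*K) (d*K+d), ee (n * β))‖ := by
          congr 1; ring
      _ ≤ _ := norm_add_le _ _
      _ ≤ K * (d * (2 * Real.pi * (d * |β|))) + d * (2 * Real.pi * (d * |β|)) := add_le_add ih h1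
      _ = _ := by push_cast; ring

lemma block_compare (d : ℕ) (hd : 0 < d) (β : ℝ) (N : ℕ) :
    ‖∑ m ∈ Ioc 0 (N / d), ee ((d:ℝ) * m * β) - (1 / d : ℂ) * ∑ n ∈ Ioc 0 N, ee (n * β)‖
      ≤ 1 + 7 * N * |β| := by
  have hd' : (0:ℝ) < d := by exact_mod_cast hd
  have hdc : (d:ℂ) ≠ 0 := by exact_mod_cast hd.ne'
  set K := N / d with hK
  have h1 := block_compare_aux d hd β K
  have hKN : d * K ≤ N := Nat.mul_div_le N d
  have h2 : ‖∑ n ∈ Ioc (d*K) N, ee (n * β)‖ ≤ d := by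
    refine (norm_sum_le _ _).trans ?_
    simp only [norm_ee, Finset.sum_const, Nat.card_Ioc, nsmul_eq_mul, mul_one]
    have := Nat.div_add_mod N d
    have := Nat.mod_lt N hd
    rw [← hK] at *
    exact_mod_cast (by omega : N - d * K ≤ d)
  have h3 : ∑ n ∈ Ioc 0 N, ee (n * β) = ∑ n ∈ Ioc 0 (d*K), ee (n * β) + ∑ n ∈ Ioc (d*K) N, ee (n * β) :=
    (Finset.sum_Ioc_consecutive _ (Nat.zero_le _) hKN).symm
  have e : ∑ m ∈ Ioc 0 K, ee ((d:ℝ) * m * β) - (1 / d : ℂ) * ∑ n ∈ Ioc 0 N, ee (n * β)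
      = (1/d : ℂ) * (((d:ℂ) * ∑ m ∈ Ioc 0 K, ee ((d:ℝ) * m * β) - ∑ n ∈ Ioc 0 (d * K), ee (n * β))
        - ∑ n ∈ Ioc (d*K) N, ee (n * β)) := by
    rw [h3, mul_sub, mul_sub, ← mul_assoc, one_div_mul_cancel hdc, one_mul, mul_add]; abel
  rw [e, norm_mul]
  have hn : ‖(1/d : ℂ)‖ = 1 / d := by simp
  rw [hn]
  have hKN' : (d:ℝ) * K ≤ N := by exact_mod_cast hKN
  have hpi : Real.pi ≤ 3.5 := by linarith [Real.pi_lt_d2]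
  calc _ ≤ 1 / (d:ℝ) * (K * (d * (2 * Real.pi * (d * |β|))) + d) := by
        gcongr
        exact (norm_sub_le _ _).trans (add_le_add h1 h2)
    _ = 1 + 2 * Real.pi * ((d * K) * |β|) := by field_simp; ring
    _ ≤ 1 + 2 * 3.5 * (N * |β|) := by gcongr
    _ = _ := by ring

lemma ee_dvd (q : ℕ) (hq : 0 < q) (a : ℤ) (α : ℝ) (d m : ℕ) (hd : q ∣ d) :
    ee ((d:ℝ) * m * α) = ee ((d:ℝ) * m * (α - a / q)) := by
  obtain ⟨e, rfl⟩ := hd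
  have hq' : (q:ℝ) ≠ 0 := by exact_mod_cast hq.ne'
  have : ((q * e : ℕ) : ℝ) * m * α = ((q * e : ℕ) : ℝ) * m * (α - a / q) + ((e * m * a : ℤ) : ℝ) := by
    push_cast; field_simp; ring
  rw [this, ee_add_int]

lemma typeI (q : ℕ) (hq : 0 < q) (a : ℤ) (ha : IsCoprime a (q:ℤ)) (α Q : ℝ) (hQ : 0 < Q)
    (hα : |α - a / q| ≤ 1 / (q * Q)) (N D : ℕ) (hD : 0 < D) (hDN : D ≤ N) (hqN : q ≤ N) (hX : 2 * (D:ℝ) ≤ Q) :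
    ‖∑ d ∈ Ioc 0 N, (((μ d : ℝ) * Real.log (N / d) ^ 2 : ℝ) : ℂ) * ∑ m ∈ Ioc 0 (N / d), ee (((d * m : ℕ) : ℝ) * α)‖
      ≤ 2 * N * Real.log (N / D) ^ 3 + Real.log N ^ 2 * (4 * (D + q) * (1 + Real.log q))
        + D * (Real.log N ^ 2 * (1 + 7 * N * |α - a / q|)) + N * (100 * (1 + Real.log N) / Nat.totient q + 64) := by
  haveI : NeZero q := ⟨hq.ne'⟩
  have hD' : (0:ℝ) < D := by exact_mod_cast hD
  have hDN' : (D:ℝ) ≤ N := by exact_mod_cast hDN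
  have hN' : (0:ℝ) < N := by linarith
  set β := α - a / q with hβ
  set W := Real.log (N / D) with hW
  have hW0 : 0 ≤ W := Real.log_nonneg (by rw [le_div_iff₀ hD']; linarith)
  set c : ℕ → ℝ := fun d => (μ d : ℝ) * Real.log (N / d) ^ 2 with hc
  set I : ℕ → ℂ := fun d => ∑ m ∈ Ioc 0 (N / d), ee (((d * m : ℕ) : ℝ) * α) with hI
  have hlogN : ∀ d ∈ Ioc 0 N, |c d| ≤ Real.log N ^ 2 := by
    intro d hd
    rw [Finset.mem_Ioc] at hd
    have hd0 : (0:ℝ) < d := by exact_mod_cast hd.1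
    have hd1 : (1:ℝ) ≤ d := by exact_mod_cast hd.1
    have hd2 : (d:ℝ) ≤ N := by exact_mod_cast hd.2
    simp only [hc]
    rw [abs_mul, abs_of_nonneg (sq_nonneg (Real.log _))]
    have h0 : 0 ≤ Real.log (N / d) := Real.log_nonneg (by rw [le_div_iff₀ hd0]; linarith)
    have h1 : Real.log (N / d) ≤ Real.log N := Real.log_le_log (by positivity) (div_le_self hN'.le hd1)
    calc _ ≤ 1 * Real.log (N / d) ^ 2 := by gcongr; exact moebius_abs_le d
      _ ≤ _ := by rw [one_mul]; gcongr
  have hlogW : ∀ d ∈ Ioc D N, |c d| ≤ W ^ 2 := by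
    intro d hd
    rw [Finset.mem_Ioc] at hd
    have hd1 : (D:ℝ) ≤ d := by exact_mod_cast hd.1.le
    have hd0 : (0:ℝ) < d := by linarith
    have hd2 : (d:ℝ) ≤ N := by exact_mod_cast hd.2
    simp only [hc]
    rw [abs_mul, abs_of_nonneg (sq_nonneg (Real.log _))]
    have h0 : 0 ≤ Real.log (N / d) := Real.log_nonneg (by rw [le_div_iff₀ hd0]; linarith)
    have h1 : Real.log (N / d) ≤ W := Real.log_le_log (by positivity) (by gcongr)
    calc _ ≤ 1 * Real.log (N / d) ^ 2 := by gcongr; exact moebius_abs_le d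
      _ ≤ _ := by rw [one_mul]; gcongr
  have hsub : Ioc 0 D ⊆ Ioc 0 N := Finset.Ioc_subset_Ioc_right hDN
  have hsub2 : Ioc D N ⊆ Ioc 0 N := Finset.Ioc_subset_Ioc_left (Nat.zero_le _)
  -- part (i)
  have p1 : ‖∑ d ∈ Ioc D N, (c d : ℂ) * I d‖ ≤ N * W ^ 3 := by
    refine (norm_sum_le _ _).trans ?_
    calc _ ≤ ∑ d ∈ Ioc D N, W ^ 2 * N * (1 / (d:ℝ)) := by
          refine Finset.sum_le_sum fun d hd => ?_
          rw [norm_mul, Complex.norm_real, Real.norm_eq_abs]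
          have h2 : ‖I d‖ ≤ N / d := by
            simp only [hI]
            refine (norm_sum_le _ _).trans ?_
            simp only [norm_ee, Finset.sum_const, Nat.card_Ioc, nsmul_eq_mul, mul_one, Nat.sub_zero]
            exact Nat.cast_div_le
          calc _ ≤ W ^ 2 * (N / d) := by
                apply mul_le_mul (hlogW d hd) h2 (norm_nonneg _) (by positivity)
            _ = _ := by ring
      _ = W ^ 2 * N * ∑ d ∈ Ioc D N, (1 / (d:ℝ)) := by rw [Finset.mul_sum]
      _ ≤ W ^ 2 * N * W := by gcongr; exact sum_inv_le_log D N hD hDN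
      _ = _ := by ring
  -- part (ii)
  have p2 : ‖∑ d ∈ Ioc 0 D with ¬ q ∣ d, (c d : ℂ) * I d‖ ≤ Real.log N ^ 2 * (4 * (D + q) * (1 + Real.log q)) := by
    refine (norm_sum_le _ _).trans ?_
    calc _ ≤ ∑ d ∈ Ioc 0 D with ¬ q ∣ d, Real.log N ^ 2 * (1 / nn ((d:ℝ) * α)) := by
          refine Finset.sum_le_sum fun d hd => ?_
          rw [Finset.mem_filter] at hd
          rw [norm_mul, Complex.norm_real, Real.norm_eq_abs]
          have hpos := nn_alpha_pos q hq a ha α Q hQ hα D hX d (Finset.mem_Ioc.mp hd.1).2 hd.2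
          have h2 : ‖I d‖ ≤ 1 / nn ((d:ℝ) * α) := by
            simp only [hI]
            have := geom_bound ((d:ℝ) * α) 0 (N / d) hpos
            refine le_trans (le_of_eq ?_) this
            congr 1
            refine Finset.sum_congr rfl fun m _ => ?_
            congr 1; push_cast; ring
          exact mul_le_mul (hlogN d (hsub hd.1)) h2 (norm_nonneg _) (by positivity)
      _ = Real.log N ^ 2 * ∑ d ∈ Ioc 0 D with ¬ q ∣ d, (1 / nn ((d:ℝ) * α)) := by rw [Finset.mul_sum]
      _ ≤ _ := by gcongr; exact alpha_sum q hq a ha α Q hQ hα D hX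
  -- part (iii)
  set E := ∑ n ∈ Ioc 0 N, ee (n * β) with hE
  have hEN : ‖E‖ ≤ N := by
    refine (norm_sum_le _ _).trans ?_
    simp [norm_ee]
  set G := ∑ d ∈ Ioc 0 D with q ∣ d, c d * (1 / d) with hG
  have p3 : ‖∑ d ∈ Ioc 0 D with q ∣ d, (c d : ℂ) * I d - (G : ℂ) * E‖
      ≤ D * (Real.log N ^ 2 * (1 + 7 * N * |β|)) := by
    rw [hG, Complex.ofReal_sum, Finset.sum_mul, ← Finset.sum_sub_distrib]
    refine (norm_sum_le _ _).trans ?_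
    calc _ ≤ ∑ d ∈ Ioc 0 D with q ∣ d, (Real.log N ^ 2 * (1 + 7 * N * |β|)) := by
          refine Finset.sum_le_sum fun d hd => ?_
          rw [Finset.mem_filter] at hd
          have hd0 := (Finset.mem_Ioc.mp hd.1).1
          have h1 := block_compare d hd0 β N
          have e1 : I d = ∑ m ∈ Ioc 0 (N / d), ee ((d:ℝ) * m * β) := by
            simp only [hI]
            refine Finset.sum_congr rfl fun m _ => ?_
            push_cast
            exact ee_dvd q hq a α d m hd.2
          have e2 : (c d : ℂ) * I d - ((c d * (1 / d) : ℝ) : ℂ) * E = (c d : ℂ) * (I d - (1 / d : ℂ) * E) := by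
            push_cast; ring
          rw [e2, norm_mul, Complex.norm_real, Real.norm_eq_abs, e1]
          exact mul_le_mul (hlogN d (hsub hd.1)) h1 (norm_nonneg _) (by positivity)
      _ ≤ ∑ d ∈ Ioc 0 D, (Real.log N ^ 2 * (1 + 7 * N * |β|)) := by
          apply Finset.sum_le_sum_of_subset_of_nonneg (Finset.filter_subset _ _)
          intros; positivity
      _ = _ := by simp
  have p4 : |G| ≤ (100 * (1 + Real.log N) / Nat.totient q + 64) + W ^ 3 := by
    have hg := lemG' q hq N hqN
    have e : ∑ d ∈ Ioc 0 N with q ∣ d, (μ d : ℝ) / d * Real.log (N / d) ^ 2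
        = G + ∑ d ∈ Ioc D N with q ∣ d, c d * (1 / d) := by
      rw [hG, Finset.sum_filter, Finset.sum_filter, Finset.sum_filter,
        Finset.sum_Ioc_consecutive _ (Nat.zero_le D) hDN]
      refine Finset.sum_congr rfl fun d _ => ?_
      split_ifs
      · simp only [hc]; ring
      · rfl
    have h2 : |∑ d ∈ Ioc D N with q ∣ d, c d * (1 / d)| ≤ W ^ 3 := by
      refine (Finset.abs_sum_le_sum_abs _ _).trans ?_
      calc _ ≤ ∑ d ∈ Ioc D N, |c d * (1 / d)| := by
            apply Finset.sum_le_sum_of_subset_of_nonneg (Finset.filter_subset _ _)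
            intros; positivity
        _ ≤ ∑ d ∈ Ioc D N, W ^ 2 * (1 / d) := by
            refine Finset.sum_le_sum fun d hd => ?_
            rw [abs_mul, abs_of_nonneg (by positivity : (0:ℝ) ≤ 1 / d)]
            gcongr
            exact hlogW d hd
        _ = W ^ 2 * ∑ d ∈ Ioc D N, (1 / (d:ℝ)) := by rw [Finset.mul_sum]
        _ ≤ W ^ 2 * W := by gcongr; exact sum_inv_le_log D N hD hDN
        _ = _ := by ring
    rw [e] at hg
    rw [abs_le] at hg h2 ⊢
    constructor <;> linarith [hg.1, hg.2, h2.1, h2.2]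
  have etot : ∑ d ∈ Ioc 0 N, (c d : ℂ) * I d = ∑ d ∈ Ioc D N, (c d : ℂ) * I d
      + ∑ d ∈ Ioc 0 D with ¬ q ∣ d, (c d : ℂ) * I d
      + (∑ d ∈ Ioc 0 D with q ∣ d, (c d : ℂ) * I d - (G : ℂ) * E) + (G:ℂ) * E := by
    rw [← Finset.sum_Ioc_consecutive _ (Nat.zero_le D) hDN,
      ← Finset.sum_filter_add_sum_filter_not (Ioc 0 D) (fun d => q ∣ d)]
    ring
  change ‖∑ d ∈ Ioc 0 N, (c d : ℂ) * I d‖ ≤ _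
  rw [etot]
  have p5 : ‖(G:ℂ) * E‖ ≤ ((100 * (1 + Real.log N) / Nat.totient q + 64) + W ^ 3) * N := by
    rw [norm_mul, Complex.norm_real, Real.norm_eq_abs]
    exact mul_le_mul p4 hEN (norm_nonneg _) ((abs_nonneg _).trans p4)
  calc _ ≤ N * W ^ 3 + Real.log N ^ 2 * (4 * (D + q) * (1 + Real.log q))
        + D * (Real.log N ^ 2 * (1 + 7 * N * |β|))
        + ((100 * (1 + Real.log N) / Nat.totient q + 64) + W ^ 3) * N := by
        refine (norm_add_le _ _).trans (add_le_add ((norm_add_le _ _).trans (add_le_add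
          ((norm_add_le _ _).trans (add_le_add p1 p2)) p3)) p5)
    _ = _ := by ring

end Vin
namespace Vin

lemma ee_nat_mul (γ : ℝ) (n : ℕ) : ee (n * γ) = ee γ ^ n := by
  induction n with
  | zero => simp [ee_zero]
  | succ n ih => rw [ee_nat_mul_succ, ih, pow_succ]

lemma geom_zero (e n : ℕ) (he : 0 < e) (hn : ¬ e ∣ n) :
    ∑ j ∈ range e, ee ((j:ℝ) * ((n:ℝ) / e)) = 0 := by
  haveI : NeZero e := ⟨he.ne'⟩
  have he' : (e:ℝ) ≠ 0 := by exact_mod_cast he.ne'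
  have h1 := geom_sum_mul (ee ((n:ℝ)/e)) e
  have h2 : ee ((n:ℝ)/e) ^ e = 1 := by
    rw [← ee_nat_mul]
    have : (e:ℝ) * ((n:ℝ)/e) = ((n:ℤ):ℝ) := by push_cast; field_simp
    rw [this, ee_int]
  rw [h2, sub_self] at h1
  have h3 : ee ((n:ℝ)/e) - 1 ≠ 0 := by
    intro h0
    have := norm_ee_sub_one_ge ((n:ℝ)/e)
    have h4 := nn_frac_lower e he 1 isCoprime_one_left n hn
    have h5 : (n:ℝ) * (((1:ℤ):ℝ) / e) = n / e := by push_cast; ring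
    rw [h5] at h4
    rw [h0, norm_zero] at this
    have : 0 < 1 / (e:ℝ) := by positivity
    linarith
  simp_rw [ee_nat_mul]
  exact (mul_eq_zero.mp h1).resolve_right h3

lemma sum_moebius_divisors (n : ℕ) : ∑ d ∈ n.divisors, (μ d : ℂ) = if n = 1 then 1 else 0 := by
  have h := congrArg (fun f : ArithmeticFunction ℤ => f n) moebius_mul_coe_zeta
  simp only [coe_mul_zeta_apply, one_apply] at h
  rw [← Int.cast_sum, h]; split_ifs <;> simp

/-- Ramanujan sums at coprime arguments -/
lemma ramanujan (l n : ℕ) (hl : 0 < l) (hn : Nat.Coprime n l) :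
    ∑ b ∈ range l with Nat.Coprime b l, ee ((b:ℝ) / l * n) = (μ l : ℂ) := by
  have hl' : (l:ℝ) ≠ 0 := by exact_mod_cast hl.ne'
  have e1 : ∑ b ∈ range l with Nat.Coprime b l, ee ((b:ℝ) / l * n)
      = ∑ b ∈ range l, ∑ d ∈ l.divisors, if d ∣ b then (μ d : ℂ) * ee ((b:ℝ) / l * n) else 0 := by
    rw [Finset.sum_filter]
    refine Finset.sum_congr rfl fun b _ => ?_
    rw [← Finset.sum_filter]
    have : l.divisors.filter (fun d => d ∣ b) = (Nat.gcd b l).divisors := by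
      ext d
      simp only [mem_filter, Nat.mem_divisors, Nat.dvd_gcd_iff]
      constructor
      · rintro ⟨⟨h1, h2⟩, h3⟩; exact ⟨⟨h3, h1⟩, (Nat.gcd_pos_of_pos_right b hl).ne'⟩
      · rintro ⟨⟨h1, h2⟩, h3⟩; exact ⟨⟨h2, hl.ne'⟩, h1⟩
    rw [this, ← Finset.sum_mul, sum_moebius_divisors]
    unfold Nat.Coprime
    split_ifs <;> simp
  rw [e1, Finset.sum_comm]
  rw [Finset.sum_eq_single l]
  · rw [Finset.sum_eq_single 0]
    · simp [ee_zero]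
    · intro b hb hb0
      rw [if_neg]
      intro hd
      have := Nat.le_of_dvd (Nat.pos_of_ne_zero hb0) hd
      rw [Finset.mem_range] at hb; omega
    · intro h; exact absurd (Finset.mem_range.mpr hl) h
  · intro d hd hdl
    obtain ⟨e, rfl⟩ := (Nat.mem_divisors.mp hd).1
    have hd0 : 0 < d := Nat.pos_of_mul_pos_right hl
    have he0 : 0 < e := Nat.pos_of_mul_pos_left hl
    have hd' : (d:ℝ) ≠ 0 := by exact_mod_cast hd0.ne'
    have he' : (e:ℝ) ≠ 0 := by exact_mod_cast he0.ne'
    have e2 : ∑ b ∈ range (d*e), (if d ∣ b then (μ d : ℂ) * ee ((b:ℝ) / ((d*e : ℕ):ℝ) * n) else 0)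
        = ∑ j ∈ range e, (μ d : ℂ) * ee ((j:ℝ) * ((n:ℝ)/e)) := by
      rw [← Finset.sum_filter]
      symm
      refine Finset.sum_bij (fun j _ => d * j) ?_ ?_ ?_ ?_
      · intro j hj
        rw [Finset.mem_range] at hj
        simp only [mem_filter, mem_range, dvd_mul_right, and_true]
        exact Nat.mul_lt_mul_of_pos_left hj hd0
      · intro a _ b _ h; exact Nat.eq_of_mul_eq_mul_left hd0 h
      · intro b hb
        simp only [mem_filter, mem_range] at hb
        obtain ⟨hb, j, rfl⟩ := hb
        exact ⟨j, Finset.mem_range.mpr (Nat.lt_of_mul_lt_mul_left hb), rfl⟩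
      · intro j _
        congr 2; push_cast; field_simp
    rw [e2, ← Finset.mul_sum, geom_zero e n he0, mul_zero]
    intro hen
    have h1 : e ∣ Nat.gcd n (d * e) := Nat.dvd_gcd hen (dvd_mul_left e d)
    rw [hn] at h1
    have : e = 1 := Nat.dvd_one.mp h1
    subst this; simp at hdl
  · intro h; exact absurd (Nat.mem_divisors_self l hl.ne') h

/-- the sieving moduli -/
def SS (q R : ℕ) : Finset ℕ := {l ∈ Ioc 0 R | Squarefree l ∧ Nat.Coprime l q}

noncomputable def GG (q R : ℕ) : ℝ := ∑ l ∈ SS q R, 1 / (Nat.totient l : ℝ)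

/-- Farey fractions -/
def FF (q R : ℕ) : Finset (Σ _ : ℕ, ℕ) := (SS q R).sigma (fun l => {b ∈ range l | Nat.Coprime b l})

noncomputable def fw (x : Σ _ : ℕ, ℕ) : ℝ := (μ x.1 : ℝ) / Nat.totient x.1
noncomputable def fx (x : Σ _ : ℕ, ℕ) : ℝ := (x.2 : ℝ) / x.1

lemma card_coprime_range (l : ℕ) (hl : 0 < l) : #{b ∈ range l | Nat.Coprime b l} = Nat.totient l := by
  rw [Nat.totient_eq_card_coprime]; congr 1; ext b; simp [Nat.coprime_comm]

lemma ff_sum (q R n : ℕ) (hn : ∀ l ∈ SS q R, Nat.Coprime n l) :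
    ∑ x ∈ FF q R, (fw x : ℂ) * ee (fx x * n) = (GG q R : ℂ) := by
  unfold FF GG
  rw [Finset.sum_sigma, Complex.ofReal_sum]
  refine Finset.sum_congr rfl fun l hl => ?_
  have hl' := hl
  simp only [SS, mem_filter, mem_Ioc] at hl'
  simp only [fw, fx]
  rw [← Finset.mul_sum, ramanujan l n hl'.1.1 (hn l hl)]
  have := moebius_sq_eq_one_of_squarefree hl'.2.1
  have h2 : ((μ l : ℤ) : ℂ) ^ 2 = 1 := by exact_mod_cast this
  push_cast
  rw [div_mul_eq_mul_div, ← sq, h2]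

lemma fw_sq (q R : ℕ) : ∑ x ∈ FF q R, fw x ^ 2 = GG q R := by
  unfold FF GG
  rw [Finset.sum_sigma]
  refine Finset.sum_congr rfl fun l hl => ?_
  simp only [SS, mem_filter, mem_Ioc] at hl
  simp only [fw]
  have := moebius_sq_eq_one_of_squarefree hl.2.1
  have h2 : ((μ l : ℤ) : ℝ) ^ 2 = 1 := by exact_mod_cast this
  have hφ : (Nat.totient l : ℝ) ≠ 0 := by exact_mod_cast (Nat.totient_pos.mpr hl.1.1).ne'
  rw [Finset.sum_const, card_coprime_range l hl.1.1, nsmul_eq_mul, div_pow, h2]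
  field_simp

lemma fw_le (q R : ℕ) (x) (hx : x ∈ FF q R) : |fw x| ≤ 1 := by
  simp only [FF, mem_sigma, SS, mem_filter, mem_Ioc] at hx
  unfold fw
  have hφ : (1:ℝ) ≤ Nat.totient x.1 := by exact_mod_cast (Nat.totient_pos.mpr hx.1.1.1)
  rw [abs_div, Nat.abs_cast, div_le_one (by linarith)]
  exact (moebius_abs_le _).trans hφ

lemma ff_card (q R : ℕ) : #(FF q R) ≤ R ^ 2 := by
  unfold FF
  rw [Finset.card_sigma]
  calc _ ≤ ∑ l ∈ SS q R, R := by
        refine Finset.sum_le_sum fun l hl => ?_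
        simp only [SS, mem_filter, mem_Ioc] at hl
        refine (Finset.card_filter_le _ _).trans ?_
        simpa using hl.1.2
    _ = #(SS q R) * R := by simp
    _ ≤ R * R := by
        apply Nat.mul_le_mul_right
        unfold SS
        refine (Finset.card_filter_le _ _).trans ?_
        simp
    _ = _ := by ring

lemma ff_sep (q R : ℕ) (hq : 0 < q) (x y) (hx : x ∈ FF q R) (hy : y ∈ FF q R) (hxy : x ≠ y) :
    1 / ((R:ℝ) ^ 2) ≤ nn (q * (fx x - fx y)) := by
  obtain ⟨l, b⟩ := x
  obtain ⟨l', b'⟩ := y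
  simp only [FF, mem_sigma, SS, mem_filter, mem_Ioc, mem_range] at hx hy
  obtain ⟨⟨⟨hl0, hlR⟩, hls, hlq⟩, hbl, hcb⟩ := hx
  obtain ⟨⟨⟨hl0', hlR'⟩, hls', hlq'⟩, hbl', hcb'⟩ := hy
  simp only [fx, nn]
  have hl : (0:ℝ) < l := by exact_mod_cast hl0
  have hl' : (0:ℝ) < l' := by exact_mod_cast hl0'
  set r := round ((q:ℝ) * ((b:ℝ)/l - b'/l')) with hr
  have hne : (q:ℤ) * (b * l' - b' * l) - r * (l * l') ≠ 0 := by
    intro h0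
    have hdvd : ((l:ℤ) * l') ∣ q * (b * l' - b' * l) := ⟨r, by linarith⟩
    have hc1 : IsCoprime (l:ℤ) q := Nat.isCoprime_iff_coprime.mpr hlq
    have hc2 : IsCoprime (l':ℤ) q := Nat.isCoprime_iff_coprime.mpr hlq'
    have hd2 : ((l:ℤ) * l') ∣ (b * l' - b' * l) := (IsCoprime.mul_left hc1 hc2).dvd_of_dvd_mul_left hdvd
    have h1 : (l:ℤ) ∣ b * l' := by
      have := (dvd_mul_right (l:ℤ) l').trans hd2
      have h2 : (l:ℤ) ∣ b' * l := dvd_mul_left _ _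
      simpa using dvd_add this h2
    have h1' : (l':ℤ) ∣ b' * l := by
      have := (dvd_mul_left (l':ℤ) l).trans hd2
      have h2 : (l':ℤ) ∣ b * l' := dvd_mul_left _ _
      simpa using dvd_sub h2 this
    have h3 : l ∣ l' := by
      have : l ∣ b * l' := by exact_mod_cast h1
      exact (Nat.Coprime.symm hcb).dvd_of_dvd_mul_left this
    have h3' : l' ∣ l := by
      have : l' ∣ b' * l := by exact_mod_cast h1'
      exact (Nat.Coprime.symm hcb').dvd_of_dvd_mul_left this
    have hll : l = l' := Nat.dvd_antisymm h3 h3'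
    subst hll
    have h4 : (l:ℤ) ∣ b - b' := by
      have : (l:ℤ) * l ∣ (b - b') * l := by rw [sub_mul]; exact hd2
      exact Int.dvd_of_mul_dvd_mul_right (by exact_mod_cast hl0.ne') this
    have h5 : b = b' := by
      have h6 : (b:ℤ) - b' = 0 := by
        apply Int.eq_zero_of_abs_lt_dvd h4
        rw [abs_lt]; constructor <;> omega
      omega
    subst h5
    exact hxy rfl
  have h1 : (1:ℝ) ≤ |(((q:ℤ) * (b * l' - b' * l) - r * (l * l') : ℤ) : ℝ)| := by
    exact_mod_cast Int.one_le_abs hne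
  have e : (q:ℝ) * ((b:ℝ)/l - b'/l') - r = (((q:ℤ) * (b * l' - b' * l) - r * (l * l') : ℤ) : ℝ) / (l * l') := by
    push_cast; field_simp
  have hR1 : (l:ℝ) ≤ R := by exact_mod_cast hlR
  have hR2 : (l':ℝ) ≤ R := by exact_mod_cast hlR'
  rw [e, abs_div, abs_of_pos (mul_pos hl hl')]
  have : (l:ℝ) * l' ≤ R ^ 2 := by rw [sq]; gcongr
  gcongr

/-- Selberg's sieve via Ramanujan sums. -/
lemma sieve (q R r M K : ℕ) (hq : 0 < q) (hR : 0 < R) (T : Finset ℕ) (hT : T ⊆ Ioc M (M + K))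
    (hTc : ∀ m ∈ T, ∀ l ∈ SS q R, Nat.Coprime (r + q * m) l) :
    (#T : ℝ) * GG q R ^ 2 ≤ GG q R * K + R ^ 6 := by
  have hR' : (0:ℝ) < R := by exact_mod_cast hR
  set f : ℕ → ℂ := fun m => ∑ x ∈ FF q R, (fw x : ℂ) * ee (fx x * ((r + q * m : ℕ):ℝ)) with hf
  have h1 : (#T : ℝ) * GG q R ^ 2 = ∑ m ∈ T, ‖f m‖ ^ 2 := by
    rw [← nsmul_eq_mul, ← Finset.sum_const]
    refine Finset.sum_congr rfl fun m hm => ?_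
    simp only [hf]
    rw [ff_sum q R _ (hTc m hm), Complex.norm_real, Real.norm_eq_abs, sq_abs]
  have h2 : ∑ m ∈ T, ‖f m‖ ^ 2 ≤ ∑ m ∈ Ioc M (M+K), ‖f m‖ ^ 2 :=
    Finset.sum_le_sum_of_subset_of_nonneg hT (fun _ _ _ => by positivity)
  have h3 : ((∑ m ∈ Ioc M (M+K), ‖f m‖ ^ 2 : ℝ) : ℂ)
      = ∑ x ∈ FF q R, ∑ y ∈ FF q R, ((fw x * fw y : ℝ) : ℂ) * (ee (r * (fx x - fx y)) *
          ∑ m ∈ Ioc M (M+K), ee (m * (q * (fx x - fx y)))) := by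
    push_cast
    have : ∀ m, ((‖f m‖ : ℂ)) ^ 2 = ∑ x ∈ FF q R, ∑ y ∈ FF q R, ((fw x : ℂ) * fw y) *
        (ee (r * (fx x - fx y)) * ee (m * (q * (fx x - fx y)))) := by
      intro m
      rw [← Complex.mul_conj']
      simp only [hf]
      rw [map_sum, Finset.sum_mul_sum]
      refine Finset.sum_congr rfl fun x _ => Finset.sum_congr rfl fun y _ => ?_
      rw [map_mul, Complex.conj_ofReal, ← ee_neg, ← ee_add]
      rw [mul_mul_mul_comm, ← ee_add]
      congr 2; push_cast; ring
    simp_rw [this]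
    rw [Finset.sum_comm]
    refine Finset.sum_congr rfl fun x _ => ?_
    rw [Finset.sum_comm]
    refine Finset.sum_congr rfl fun y _ => ?_
    rw [Finset.mul_sum, Finset.mul_sum]
  have h4 : ∑ m ∈ Ioc M (M+K), ‖f m‖ ^ 2 ≤ ∑ x ∈ FF q R, ∑ y ∈ FF q R,
      ((if x = y then fw x ^ 2 * K else 0) + R ^ 2) := by
    have e : ∑ m ∈ Ioc M (M+K), ‖f m‖ ^ 2 = ‖((∑ m ∈ Ioc M (M+K), ‖f m‖ ^ 2 : ℝ) : ℂ)‖ := by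
      rw [Complex.norm_real, Real.norm_eq_abs, abs_of_nonneg]
      exact Finset.sum_nonneg fun _ _ => by positivity
    rw [e, h3]
    refine (norm_sum_le _ _).trans (Finset.sum_le_sum fun x hx => ?_)
    refine (norm_sum_le _ _).trans (Finset.sum_le_sum fun y hy => ?_)
    rw [norm_mul, norm_mul, norm_ee, one_mul, Complex.norm_real, Real.norm_eq_abs]
    split_ifs with hxy
    · subst hxy
      rw [abs_of_nonneg (mul_self_nonneg _), ← sq]
      have : ‖∑ m ∈ Ioc M (M+K), ee (m * (q * (fx x - fx x)))‖ ≤ K := by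
        refine (norm_sum_le _ _).trans ?_
        simp [norm_ee]
      have h5 : fw x ^ 2 * ‖∑ m ∈ Ioc M (M+K), ee (m * (q * (fx x - fx x)))‖ ≤ fw x ^ 2 * K := by gcongr
      have : (0:ℝ) ≤ R ^ 2 := by positivity
      linarith
    · rw [zero_add]
      have hs := ff_sep q R hq x y hx hy hxy
      have hpos : 0 < nn (q * (fx x - fx y)) := lt_of_lt_of_le (by positivity) hs
      have hg := geom_bound (q * (fx x - fx y)) M (M+K) hpos
      have h6 : 1 / nn (q * (fx x - fx y)) ≤ R ^ 2 := by
        rw [div_le_iff₀ hpos]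
        rw [div_le_iff₀ (by positivity)] at hs
        linarith
      rw [abs_mul]
      calc _ ≤ 1 * 1 * (R:ℝ) ^ 2 := by
            gcongr
            · exact fw_le q R x hx
            · exact fw_le q R y hy
            · exact hg.trans h6
        _ = _ := by ring
  rw [h1]
  refine h2.trans (h4.trans ?_)
  have h7 : ∑ x ∈ FF q R, ∑ y ∈ FF q R, ((if x = y then fw x ^ 2 * K else 0) + (R:ℝ) ^ 2)
      = GG q R * K + #(FF q R) * (#(FF q R) * R ^ 2) := by
    rw [← fw_sq, Finset.sum_mul]
    rw [← nsmul_eq_mul (#(FF q R)), ← Finset.sum_const, ← Finset.sum_add_distrib]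
    refine Finset.sum_congr rfl fun x hx => ?_
    rw [Finset.sum_add_distrib, Finset.sum_ite_eq]
    simp [hx]
  rw [h7]
  have hc : ((#(FF q R) : ℕ) : ℝ) ≤ R ^ 2 := by exact_mod_cast ff_card q R
  have : (#(FF q R) : ℝ) * (#(FF q R) * R ^ 2) ≤ R ^ 2 * (R ^ 2 * R ^ 2) := by gcongr
  nlinarith

end Vin
namespace Vin

lemma sum_inv_sq_le (R : ℕ) : ∑ k ∈ Ioc 0 (R+1), 1 / (k:ℝ) ^ 2 ≤ 2 - 1 / ((R:ℝ) + 1) := by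
  induction R with
  | zero => norm_num
  | succ R ih =>
    rw [Finset.sum_Ioc_succ_top (Nat.zero_le _)]
    have : 1 / ((R + 1 + 1 : ℕ):ℝ) ^ 2 ≤ 1 / ((R:ℝ) + 1) - 1 / (((R+1:ℕ):ℝ) + 1) := by
      push_cast
      rw [div_sub_div _ _ (by positivity) (by positivity), div_le_div_iff₀ (by positivity) (by positivity)]
      nlinarith [(Nat.cast_nonneg R : (0:ℝ) ≤ R)]
    linarith

lemma GG_lower (q R : ℕ) (hq : 0 < q) (hR : 0 < R) :
    Real.log R ≤ GG q R * (2 * (1 + Real.log q)) := by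
  set T := (SS q R) ×ˢ (q.divisors ×ˢ Ioc 0 R) with hT
  have hlog : Real.log R ≤ ∑ n ∈ Ioc 0 R, 1 / (n:ℝ) := by
    have := Real.log_le_log (x := (R:ℝ)) (y := ((R+1:ℕ):ℝ)) (by exact_mod_cast hR) (by push_cast; linarith)
    refine this.trans ?_
    have h2 := log_add_one_le_harmonic R
    rw [harmonic_eq_sum_Icc] at h2
    push_cast at h2 ⊢
    have e : Ioc 0 R = Icc 1 R := by ext; simp; omega
    rw [e]; simpa using h2
  have hrep : ∀ n ∈ Ioc 0 R, ∃ t ∈ T, t.1 * t.2.1 * t.2.2 ^ 2 = n := by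
    intro n hn
    rw [Finset.mem_Ioc] at hn
    obtain ⟨a, b, ha, hb, hab, hsq⟩ := Nat.sq_mul_squarefree_of_pos hn.1
    obtain ⟨c, hc⟩ := Nat.gcd_dvd_left a q
    set g := Nat.gcd a q with hg
    have hg0 : 0 < g := Nat.gcd_pos_of_pos_right a hq
    have hc0 : 0 < c := by
      rcases Nat.eq_zero_or_pos c with h | h
      · rw [h] at hc; omega
      · exact h
    have hsq' : Squarefree (g * c) := by rw [← hc]; exact hsq
    have hcg : Nat.Coprime g c := Nat.coprime_of_squarefree_mul hsq'
    refine ⟨(c, g, b), ?_, ?_⟩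
    · simp only [hT, SS, mem_product, mem_filter, mem_Ioc, Nat.mem_divisors]
      have han : a ≤ n := by rw [← hab]; exact Nat.le_mul_of_pos_left a (by positivity)
      have hca : c ≤ a := by rw [hc]; exact Nat.le_mul_of_pos_left c hg0
      have hbn : b ≤ n := by
        rw [← hab]
        calc b ≤ b ^ 2 := Nat.le_self_pow (by norm_num) b
          _ ≤ _ := Nat.le_mul_of_pos_right _ ha
      refine ⟨⟨⟨hc0, by omega⟩, hsq'.of_mul_right, ?_⟩, ⟨Nat.gcd_dvd_right a q, hq.ne'⟩, hb, by omega⟩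
      have h1 : Nat.gcd c q ∣ g := Nat.dvd_gcd ((Nat.gcd_dvd_left c q).trans ⟨g, by rw [hc]; ring⟩) (Nat.gcd_dvd_right c q)
      have h2 : Nat.gcd c q ∣ Nat.gcd g c := Nat.dvd_gcd h1 (Nat.gcd_dvd_left c q)
      rw [hcg] at h2
      exact Nat.dvd_one.mp h2
    · show c * g * b ^ 2 = n
      rw [← hab, hc]; ring
  choose! i hi hi' using hrep
  have hinj : Set.InjOn i (Ioc 0 R : Finset ℕ) := by
    intro x hx y hy hxy
    rw [← hi' x hx, ← hi' y hy, hxy]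
  have h1 : ∑ n ∈ Ioc 0 R, 1 / (n:ℝ) ≤ ∑ t ∈ T, 1 / ((t.1:ℝ)) * (1 / (t.2.1:ℝ) * (1 / (t.2.2:ℝ) ^ 2)) := by
    calc _ = ∑ n ∈ Ioc 0 R, 1 / (((i n).1:ℝ)) * (1 / ((i n).2.1:ℝ) * (1 / ((i n).2.2:ℝ) ^ 2)) := by
          refine Finset.sum_congr rfl fun n hn => ?_
          have : (n:ℝ) = (i n).1 * (i n).2.1 * (i n).2.2 ^ 2 := by
            have := hi' n hn
            exact_mod_cast this.symm
          rw [this]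
          simp only [one_div, mul_inv, mul_assoc]
      _ = ∑ t ∈ (Ioc 0 R).image i, 1 / ((t.1:ℝ)) * (1 / (t.2.1:ℝ) * (1 / (t.2.2:ℝ) ^ 2)) := by
          rw [Finset.sum_image hinj]
      _ ≤ _ := by
          apply Finset.sum_le_sum_of_subset_of_nonneg
          · intro t ht
            obtain ⟨n, hn, rfl⟩ := Finset.mem_image.mp ht
            exact hi n hn
          · intros; positivity
  rw [hT, Finset.sum_product] at h1
  simp only [← Finset.mul_sum, Finset.sum_product] at h1
  simp only [← Finset.mul_sum, ← Finset.sum_mul] at h1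
  have h2 : ∑ l ∈ SS q R, 1 / (l:ℝ) ≤ GG q R := by
    unfold GG
    refine Finset.sum_le_sum fun l hl => ?_
    simp only [SS, mem_filter, mem_Ioc] at hl
    have : (0:ℝ) < Nat.totient l := by exact_mod_cast Nat.totient_pos.mpr hl.1.1
    have : (Nat.totient l : ℝ) ≤ l := by exact_mod_cast Nat.totient_le l
    gcongr
  have h3 : ∑ d ∈ q.divisors, 1 / (d:ℝ) ≤ 1 + Real.log q := by
    refine le_trans ?_ (harmonic_bd q)
    apply Finset.sum_le_sum_of_subset_of_nonneg
    · intro d hd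
      rw [Finset.mem_Ioc]
      exact ⟨Nat.pos_of_mem_divisors hd, Nat.divisor_le hd⟩
    · intros; positivity
  have h4 : ∑ k ∈ Ioc 0 R, 1 / (k:ℝ) ^ 2 ≤ 2 := by
    have h5 := sum_inv_sq_le (R-1)
    have : 0 < 1 / (((R-1:ℕ):ℝ) + 1) := by positivity
    rw [Nat.sub_add_cancel hR] at h5
    linarith
  have hlq : 0 ≤ Real.log q := Real.log_natCast_nonneg q
  have hG0 : 0 ≤ GG q R := Finset.sum_nonneg fun _ _ => by positivity
  refine hlog.trans (h1.trans ?_)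
  calc _ ≤ GG q R * ((1 + Real.log q) * 2) := by gcongr
    _ = _ := by ring

lemma GG_ge_one (q R : ℕ) (hR : 0 < R) : 1 ≤ GG q R := by
  unfold GG
  have h1 : 1 ∈ SS q R := by simp [SS]; omega
  refine le_trans ?_ (Finset.single_le_sum (f := fun l => 1 / (Nat.totient l : ℝ)) (fun _ _ => by positivity) h1)
  simp

/-- prime powers with small base are few -/
lemma small_pp (R Y : ℕ) (U : Finset ℕ) (hU : ∀ n ∈ U, n ≤ Y ∧ ∃ p j, Nat.Prime p ∧ p ≤ R ∧ 0 < j ∧ p ^ j = n) :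
    #U ≤ R * Nat.log 2 Y := by
  have : U ⊆ (Ioc 0 R ×ˢ Ioc 0 (Nat.log 2 Y)).image (fun t => t.1 ^ t.2) := by
    intro n hn
    obtain ⟨hY, p, j, hp, hpR, hj, rfl⟩ := hU n hn
    rw [Finset.mem_image]
    refine ⟨(p, j), ?_, rfl⟩
    simp only [mem_product, mem_Ioc]
    refine ⟨⟨hp.pos, hpR⟩, hj, ?_⟩
    apply Nat.le_log_of_pow_le (by norm_num)
    exact (Nat.pow_le_pow_left hp.two_le j).trans hY
  refine (Finset.card_le_card this).trans (Finset.card_image_le.trans ?_)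
  rw [Finset.card_product]; simp

lemma BT_aux (q R r M K Y : ℕ) (hq : 0 < q) (hR : 2 ≤ R) (hY : r + q * (M + K) ≤ Y) :
    (#{m ∈ Ioc M (M + K) | Λ (r + q * m) ≠ 0} : ℝ)
      ≤ 2 * (1 + Real.log q) * K / Real.log R + R ^ 6 + R * Nat.log 2 Y := by
  classical
  have hR0 : 0 < R := by omega
  have hlR : 0 < Real.log R := Real.log_pos (by exact_mod_cast hR)
  set T := {m ∈ Ioc M (M + K) | Λ (r + q * m) ≠ 0} with hT
  set T1 := {m ∈ T | ∀ l ∈ SS q R, Nat.Coprime (r + q * m) l} with hT1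
  set T2 := {m ∈ T | ¬ ∀ l ∈ SS q R, Nat.Coprime (r + q * m) l} with hT2
  have hsplit : #T1 + #T2 = #T := Finset.card_filter_add_card_filter_not _
  have h2 : #T2 ≤ R * Nat.log 2 Y := by
    have hinj : Set.InjOn (fun m => r + q * m) (T2 : Set ℕ) := by
      intro x _ y _ h
      simp only at h
      exact Nat.eq_of_mul_eq_mul_left hq (by omega)
    rw [← Finset.card_image_of_injOn hinj]
    apply small_pp
    intro n hn
    obtain ⟨m, hm, rfl⟩ := Finset.mem_image.mp hn
    simp only [hT2, hT, mem_filter, mem_Ioc] at hm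
    obtain ⟨⟨⟨hm1, hm2⟩, hL⟩, hnc⟩ := hm
    refine ⟨le_trans (Nat.add_le_add_left (Nat.mul_le_mul_left q hm2) r) hY, ?_⟩
    push Not at hnc
    obtain ⟨l, hl, hcop⟩ := hnc
    rw [vonMangoldt_ne_zero_iff, isPrimePow_nat_iff] at hL
    obtain ⟨p, j, hp, hj, hpj⟩ := hL
    refine ⟨p, j, hp, ?_, hj, hpj⟩
    simp only [SS, mem_filter, mem_Ioc] at hl
    rw [← hpj] at hcop
    have : p ∣ l := by
      by_contra hpl
      exact hcop (Nat.Coprime.pow_left j ((Nat.Prime.coprime_iff_not_dvd hp).mpr hpl))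
    exact (Nat.le_of_dvd hl.1.1 this).trans hl.1.2
  have h1 := sieve q R r M K hq hR0 T1 (by
      intro m hm; simp only [hT1, hT, mem_filter] at hm; exact hm.1.1) (by
      intro m hm; exact (Finset.mem_filter.mp hm).2)
  have hG1 := GG_ge_one q R hR0
  have hGl := GG_lower q R hq hR0
  have hlq : 0 ≤ Real.log q := Real.log_natCast_nonneg q
  set G := GG q R
  have h3 : (#T1 : ℝ) ≤ K / G + R ^ 6 := by
    have hG0 : 0 < G := by linarith
    have e : (K / G + R ^ 6) * G ^ 2 = G * K + R ^ 6 * G ^ 2 := by field_simp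
    have : (R:ℝ) ^ 6 ≤ R ^ 6 * G ^ 2 := by
      apply le_mul_of_one_le_right (by positivity)
      exact one_le_pow₀ hG1
    have : (#T1 : ℝ) * G ^ 2 ≤ (K / G + R ^ 6) * G ^ 2 := by linarith
    exact le_of_mul_le_mul_right this (by positivity)
  have h4 : (K:ℝ) / G ≤ 2 * (1 + Real.log q) * K / Real.log R := by
    rw [div_le_div_iff₀ (by linarith) hlR]
    have : (0:ℝ) ≤ K := by positivity
    nlinarith
  have h5 : ((#T : ℕ):ℝ) = #T1 + #T2 := by exact_mod_cast hsplit.symm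
  have h6 : (#T2 : ℝ) ≤ R * Nat.log 2 Y := by exact_mod_cast h2
  rw [h5]
  linarith

/-- Brun–Titchmarsh type bound -/
lemma BT (q R A B : ℕ) (hq : 0 < q) [NeZero q] (hR : 2 ≤ R) (hAB : A ≤ B) (s : ZMod q) :
    (#{n ∈ Ioc A B | (((n:ℕ) : ZMod q) = s) ∧ Λ n ≠ 0} : ℝ)
      ≤ 1 + 2 * (1 + Real.log q) * (((B:ℝ) - A) / q + 1) / Real.log R + R ^ 6 + R * Nat.log 2 B := by
  classical
  have hq' : (0:ℝ) < q := by exact_mod_cast hq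
  have hlR : 0 < Real.log R := Real.log_pos (by exact_mod_cast hR)
  have hlq : 0 ≤ Real.log q := Real.log_natCast_nonneg q
  set r := s.val with hr
  by_cases hBr : B < r
  · -- no such n
    have : {n ∈ Ioc A B | (((n:ℕ) : ZMod q) = s) ∧ Λ n ≠ 0} = ∅ := by
      apply Finset.filter_eq_empty_iff.mpr
      rintro n hn ⟨h, _⟩
      rw [Finset.mem_Ioc] at hn
      have : n % q = r := by rw [hr, ← h, ZMod.val_natCast]
      have := Nat.mod_le n q
      omega
    rw [this]
    have : (A:ℝ) ≤ B := by exact_mod_cast hAB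
    have : 0 ≤ ((B:ℝ) - A) / q := div_nonneg (by linarith) hq'.le
    simp only [card_empty, Nat.cast_zero]
    positivity
  push Not at hBr
  have hrq : r < q := ZMod.val_lt s
  set M := A / q with hM
  set K := (B - r) / q - M with hK
  by_cases hMle : (B - r) / q < M
  · have : {n ∈ Ioc A B | (((n:ℕ) : ZMod q) = s) ∧ Λ n ≠ 0} = ∅ := by
      apply Finset.filter_eq_empty_iff.mpr
      rintro n hn ⟨h, _⟩
      rw [Finset.mem_Ioc] at hn
      have h1 : n % q = r := by rw [hr, ← h, ZMod.val_natCast]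
      have h2 := Nat.div_add_mod n q
      have h3 : n / q ≤ (B - r) / q := by
        rw [Nat.le_div_iff_mul_le hq, mul_comm]; omega
      have h4 : M ≤ n / q := Nat.div_le_div_right hn.1.le
      omega
    rw [this]
    have : (A:ℝ) ≤ B := by exact_mod_cast hAB
    have : 0 ≤ ((B:ℝ) - A) / q := div_nonneg (by linarith) hq'.le
    simp only [card_empty, Nat.cast_zero]
    positivity
  push Not at hMle
  have hMK : M + K = (B - r) / q := by omega
  have hbt := BT_aux q R r M K B hq hR (by
    rw [hMK]; have := Nat.mul_div_le (B - r) q; omega)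
  have hsub : {n ∈ Ioc A B | (((n:ℕ) : ZMod q) = s) ∧ Λ n ≠ 0}
      ⊆ insert (r + q * M) ({m ∈ Ioc M (M + K) | Λ (r + q * m) ≠ 0}.image (fun m => r + q * m)) := by
    intro n hn
    simp only [mem_filter, mem_Ioc] at hn
    obtain ⟨⟨hA, hB⟩, h, hL⟩ := hn
    have h1 : n % q = r := by rw [hr, ← h, ZMod.val_natCast]
    have h2 := Nat.div_add_mod n q
    have h3 : n / q ≤ (B - r) / q := by
      rw [Nat.le_div_iff_mul_le hq, mul_comm]; omega
    have h4 : M ≤ n / q := Nat.div_le_div_right hA.le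
    have h5 : n = r + q * (n / q) := by omega
    rw [Finset.mem_insert]
    rcases h4.eq_or_lt with h6 | h6
    · left; rw [h6]; exact h5
    · right
      rw [Finset.mem_image]
      refine ⟨n / q, ?_, h5.symm⟩
      simp only [mem_filter, mem_Ioc]
      refine ⟨⟨h6, by omega⟩, ?_⟩
      rw [← h5]; exact hL
  have hcard := (Finset.card_le_card hsub).trans (Finset.card_insert_le _ _)
  have hcard2 := hcard.trans (Nat.add_le_add_right Finset.card_image_le 1)
  have hcard3 : (#{n ∈ Ioc A B | (((n:ℕ) : ZMod q) = s) ∧ Λ n ≠ 0} : ℝ) ≤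
    (#{m ∈ Ioc M (M + K) | Λ (r + q * m) ≠ 0} : ℝ) + 1 := by exact_mod_cast hcard2
  have hKle : (K:ℝ) ≤ ((B:ℝ) - A) / q + 1 := by
    have h1 : (K:ℝ) = ((((B - r) / q : ℕ) : ℝ)) - M := by
      rw [hK, Nat.cast_sub hMle]
    have h2 : (((B - r) / q : ℕ) : ℝ) ≤ (B:ℝ) / q := by
      refine Nat.cast_div_le.trans ?_
      have : ((B - r : ℕ):ℝ) ≤ B := by exact_mod_cast Nat.sub_le B r
      gcongr
    have h3 : (A:ℝ)/q ≤ M + 1 := by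
      rw [div_le_iff₀ hq']
      have := Nat.div_add_mod A q
      have h4 := Nat.mod_lt A hq
      have : A ≤ (M + 1) * q := by rw [hM]; nlinarith
      exact_mod_cast this
    rw [h1, sub_div]; linarith
  have : 2 * (1 + Real.log q) * K / Real.log R ≤ 2 * (1 + Real.log q) * (((B:ℝ) - A) / q + 1) / Real.log R := by
    gcongr
  linarith

end Vin
namespace Vin

noncomputable def VV (z N : ℕ) (α : ℝ) (b b' : ℕ) : ℂ :=
  ∑ a ∈ Ioc z N, if a * b ≤ N ∧ a * b' ≤ N then (a:ℂ) * ee ((a:ℝ) * (((b:ℝ) - b') * α)) else 0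

lemma VV_symm (z N : ℕ) (α : ℝ) (b b' : ℕ) : ‖VV z N α b' b‖ = ‖VV z N α b b'‖ := by
  rw [← Complex.norm_conj (VV z N α b b')]
  unfold VV
  rw [map_sum]
  congr 1
  refine Finset.sum_congr rfl fun a _ => ?_
  by_cases h : a * b ≤ N ∧ a * b' ≤ N
  · rw [if_pos h, if_pos h.symm, map_mul, ← ee_neg, Complex.conj_natCast]
    congr 2; ring
  · rw [if_neg h, if_neg (fun h' => h h'.symm), _root_.map_zero]

lemma VV_eq (z N : ℕ) (α : ℝ) (b b' : ℕ) (hb : 0 < b) (hbb : b' ≤ b) :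
    VV z N α b b' = ∑ a ∈ Ioc z (N / b), (a:ℂ) * ee ((a:ℝ) * (((b - b' : ℕ):ℝ) * α)) := by
  unfold VV
  rw [← Finset.sum_filter]
  have : {a ∈ Ioc z N | a * b ≤ N ∧ a * b' ≤ N} = Ioc z (N / b) := by
    ext a
    simp only [mem_filter, mem_Ioc, Nat.le_div_iff_mul_le hb]
    constructor
    · rintro ⟨⟨h1, h2⟩, h3, h4⟩; exact ⟨h1, h3⟩
    · rintro ⟨h1, h2⟩
      exact ⟨⟨h1, (Nat.le_mul_of_pos_right a hb).trans h2⟩, h2, (Nat.mul_le_mul_left a hbb).trans h2⟩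
  rw [this, Nat.cast_sub hbb]

lemma card_dvd_range (q b : ℕ) (hq : 0 < q) : (#{h ∈ range b | q ∣ h} : ℝ) ≤ (b:ℝ) / q + 1 := by
  have : {h ∈ range b | q ∣ h} ⊆ (range (b / q + 1)).image (fun j => q * j) := by
    intro h hh
    simp only [mem_filter, mem_range] at hh
    obtain ⟨hb, j, rfl⟩ := hh
    rw [Finset.mem_image]
    refine ⟨j, ?_, rfl⟩
    rw [Finset.mem_range, Nat.lt_succ_iff, Nat.le_div_iff_mul_le hq, mul_comm]
    exact hb.le
  have h1 := (Finset.card_le_card this).trans Finset.card_image_le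
  rw [Finset.card_range] at h1
  have h2 : (#{h ∈ range b | q ∣ h} : ℝ) ≤ ((b / q : ℕ) : ℝ) + 1 := by exact_mod_cast h1
  have : ((b / q : ℕ) : ℝ) ≤ (b:ℝ) / q := Nat.cast_div_le
  linarith

lemma VV_sum (q : ℕ) (hq : 0 < q) (a : ℤ) (ha : IsCoprime a (q:ℤ)) (α Q : ℝ) (hQ : 0 < Q)
    (hα : |α - a / q| ≤ 1 / (q * Q)) (z N b : ℕ) (hb : 0 < b) (hX : 2 * (b:ℝ) ≤ Q) :
    ∑ b' ∈ Ioc z b, ‖VV z N α b b'‖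
      ≤ ((N:ℝ) / b) ^ 2 * (b / q + 1) + 2 * ((N:ℝ) / b) * (4 * (b + q) * (1 + Real.log q)) := by
  haveI : NeZero q := ⟨hq.ne'⟩
  have hb' : (0:ℝ) < b := by exact_mod_cast hb
  set g : ℕ → ℝ := fun h => if q ∣ h then ((N:ℝ)/b)^2 else 2 * ((N:ℝ)/b) * (1 / nn ((h:ℝ) * α)) with hg
  have hg0 : ∀ h, 0 ≤ g h := by
    intro h; simp only [hg]
    have := nn_nonneg ((h:ℝ) * α)
    split_ifs <;> positivity
  have hfl : ((N / b : ℕ):ℝ) ≤ (N:ℝ)/b := Nat.cast_div_le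
  have h1 : ∀ b' ∈ Ioc z b, ‖VV z N α b b'‖ ≤ g (b - b') := by
    intro b' hb'm
    rw [Finset.mem_Ioc] at hb'm
    rw [VV_eq z N α b b' hb hb'm.2]
    simp only [hg]
    split_ifs with hd
    · refine (wtrivial_bound _ _ _).trans ?_
      gcongr
    · have hpos := nn_alpha_pos q hq a ha α Q hQ hα b hX (b - b') (Nat.sub_le _ _) hd
      refine (wgeom_bound _ _ _ hpos).trans ?_
      rw [mul_one_div]
      gcongr
  have h2 : ∑ b' ∈ Ioc z b, g (b - b') ≤ ∑ h ∈ range b, g h := by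
    have hinj : Set.InjOn (fun b' => b - b') (Ioc z b : Finset ℕ) := by
      intro x hx y hy h
      simp only [coe_Ioc, Set.mem_Ioc] at hx hy h
      omega
    rw [← Finset.sum_image (f := g) hinj]
    apply Finset.sum_le_sum_of_subset_of_nonneg
    · intro h hh
      obtain ⟨x, hx, rfl⟩ := Finset.mem_image.mp hh
      rw [Finset.mem_Ioc] at hx
      rw [Finset.mem_range]; omega
    · intros; exact hg0 _
  have h3 : ∑ h ∈ range b, g h = ∑ h ∈ range b with q ∣ h, ((N:ℝ)/b)^2
      + ∑ h ∈ range b with ¬ q ∣ h, 2 * ((N:ℝ)/b) * (1 / nn ((h:ℝ) * α)) := by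
    simp only [hg]
    rw [Finset.sum_ite]
  have h4 : ∑ h ∈ range b with q ∣ h, ((N:ℝ)/b)^2 ≤ ((N:ℝ) / b) ^ 2 * (b / q + 1) := by
    rw [Finset.sum_const, nsmul_eq_mul, mul_comm]
    gcongr
    exact card_dvd_range q b hq
  have h5 : ∑ h ∈ range b with ¬ q ∣ h, 2 * ((N:ℝ)/b) * (1 / nn ((h:ℝ) * α))
      ≤ 2 * ((N:ℝ) / b) * (4 * (b + q) * (1 + Real.log q)) := by
    rw [← Finset.mul_sum]
    gcongr
    refine le_trans ?_ (alpha_sum q hq a ha α Q hQ hα b hX)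
    apply Finset.sum_le_sum_of_subset_of_nonneg
    · intro h hh
      simp only [mem_filter, mem_range, mem_Ioc] at hh ⊢
      refine ⟨⟨?_, hh.1.le⟩, hh.2⟩
      rcases Nat.eq_zero_or_pos h with h0 | h0
      · rw [h0] at hh; simp at hh
      · exact h0
    · intro h _ _
      have := nn_nonneg ((h:ℝ) * α)
      positivity
  calc _ ≤ _ := Finset.sum_le_sum h1
    _ ≤ _ := h2
    _ = _ := h3
    _ ≤ _ := add_le_add h4 h5

lemma sum_inv_sq_tail (z Y : ℕ) (hz : 0 < z) : ∑ k ∈ Ioc z Y, 1 / (k:ℝ) ^ 2 ≤ 1 / (z:ℝ) := by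
  rcases le_or_gt z Y with h | h
  · have key : ∑ k ∈ Ioc z Y, 1 / (k:ℝ) ^ 2 ≤ 1 / (z:ℝ) - 1 / Y := by
      induction Y, h using Nat.le_induction with
      | base => simp
      | succ n hn ih =>
        rw [Finset.sum_Ioc_succ_top (by omega)]
        have hn' : (0:ℝ) < n := by exact_mod_cast (by omega : 0 < n)
        have : 1 / ((n + 1 : ℕ):ℝ) ^ 2 ≤ 1 / (n:ℝ) - 1 / ((n+1:ℕ):ℝ) := by
          push_cast
          rw [div_sub_div _ _ (by positivity) (by positivity), div_le_div_iff₀ (by positivity) (by positivity)]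
          nlinarith
        linarith
    have : 0 ≤ 1 / (Y:ℝ) := by positivity
    linarith
  · rw [Finset.Ioc_eq_empty (by omega)]; simp

lemma lam_le_log (n N : ℕ) (h : n ≤ N) : Λ n ≤ Real.log N := by
  refine vonMangoldt_le_log.trans ?_
  rcases Nat.eq_zero_or_pos n with h0 | h0
  · rw [h0]; simp; exact Real.log_natCast_nonneg N
  · exact Real.log_le_log (by exact_mod_cast h0) (by exact_mod_cast h)

/-- Type II sum, minor arcs. -/
lemma typeIIB (q : ℕ) (hq : 0 < q) (a : ℤ) (ha : IsCoprime a (q:ℤ)) (α Q : ℝ) (hQ : 0 < Q)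
    (hα : |α - a / q| ≤ 1 / (q * Q)) (z N : ℕ) (hz : 0 < z) (hN : 1 ≤ N) (hqN : q ≤ N) (hX : 2 * ((N / z : ℕ):ℝ) ≤ Q) :
    ‖∑ a ∈ Ioc z N, ∑ b ∈ Ioc z (N / a), ((Λ a * Λ b : ℝ) : ℂ) * ee (((a * b : ℕ):ℝ) * α)‖ ^ 2
      ≤ (Real.log N * (Real.log N + 6)) * (2 * Real.log N ^ 2 *
        (N ^ 2 * (1 + Real.log N) / q + N ^ 2 / z + 8 * N * (1 + Real.log N) * (N / z + q * (1 + Real.log N)))) := by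
  set L := Real.log N with hL
  have hL0 : 0 ≤ L := Real.log_natCast_nonneg N
  set Y := N / z with hY
  have hq' : (0:ℝ) < q := by exact_mod_cast hq
  have hz' : (0:ℝ) < z := by exact_mod_cast hz
  have hN' : (0:ℝ) < N := by exact_mod_cast hN
  have hlq : Real.log q ≤ L := Real.log_le_log hq' (by exact_mod_cast hqN)
  have hYN : Y ≤ N := Nat.div_le_self N z
  set I : ℕ → ℂ := fun a => ∑ b ∈ Ioc z Y, if a * b ≤ N then (Λ b : ℂ) * ee (((a * b : ℕ):ℝ) * α) else 0 with hI
  have e1 : ∑ a ∈ Ioc z N, ∑ b ∈ Ioc z (N / a), ((Λ a * Λ b : ℝ) : ℂ) * ee (((a * b : ℕ):ℝ) * α)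
      = ∑ a ∈ Ioc z N, (Λ a : ℂ) * I a := by
    refine Finset.sum_congr rfl fun a ha => ?_
    rw [Finset.mem_Ioc] at ha
    have ha0 : 0 < a := by omega
    simp only [hI]
    rw [← Finset.sum_filter, Finset.mul_sum]
    have : {b ∈ Ioc z Y | a * b ≤ N} = Ioc z (N / a) := by
      ext b
      simp only [mem_filter, mem_Ioc, hY, Nat.le_div_iff_mul_le ha0, Nat.le_div_iff_mul_le hz]
      constructor
      · rintro ⟨⟨h1, h2⟩, h3⟩; exact ⟨h1, by rw [mul_comm]; exact h3⟩
      · rintro ⟨h1, h2⟩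
        exact ⟨⟨h1, (Nat.mul_le_mul_left b ha.1.le).trans h2⟩, by rw [mul_comm]; exact h2⟩
    rw [this]
    refine Finset.sum_congr rfl fun b _ => ?_
    push_cast; ring
  rw [e1]
  have cs : ‖∑ a ∈ Ioc z N, (Λ a : ℂ) * I a‖ ^ 2
      ≤ (∑ a ∈ Ioc z N, Λ a ^ 2 / a) * (∑ a ∈ Ioc z N, a * ‖I a‖ ^ 2) := by
    have h1 : ‖∑ a ∈ Ioc z N, (Λ a : ℂ) * I a‖ ≤ ∑ a ∈ Ioc z N, (Λ a / √(a:ℝ)) * (√(a:ℝ) * ‖I a‖) := by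
      refine (norm_sum_le _ _).trans (Finset.sum_le_sum fun a ha => ?_)
      rw [Finset.mem_Ioc] at ha
      have : (0:ℝ) < √(a:ℝ) := Real.sqrt_pos.mpr (by exact_mod_cast (by omega : 0 < a))
      rw [norm_mul, Complex.norm_real, Real.norm_eq_abs, abs_of_nonneg vonMangoldt_nonneg]
      apply le_of_eq; field_simp
    calc _ ≤ (∑ a ∈ Ioc z N, (Λ a / √(a:ℝ)) * (√(a:ℝ) * ‖I a‖)) ^ 2 := by gcongr
      _ ≤ _ := Finset.sum_mul_sq_le_sq_mul_sq _ _ _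
      _ = _ := by
          congr 1
          · refine Finset.sum_congr rfl fun a _ => ?_
            rw [div_pow, Real.sq_sqrt (by positivity)]
          · refine Finset.sum_congr rfl fun a _ => ?_
            rw [mul_pow, Real.sq_sqrt (by positivity)]
  have f1 : ∑ a ∈ Ioc z N, Λ a ^ 2 / a ≤ L * (L + 6) := by
    calc _ ≤ ∑ a ∈ Ioc 0 N, Λ a ^ 2 / a := by
          apply Finset.sum_le_sum_of_subset_of_nonneg (Finset.Ioc_subset_Ioc_left (Nat.zero_le _))
          intros; positivity
      _ ≤ ∑ a ∈ Ioc 0 N, L * (Λ a / a) := by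
          refine Finset.sum_le_sum fun a ha => ?_
          rw [Finset.mem_Ioc] at ha
          rw [sq, mul_div_assoc]
          have h0 : 0 ≤ Λ a := vonMangoldt_nonneg
          have := lam_le_log a N ha.2
          gcongr
      _ = L * ∑ a ∈ Ioc 0 N, Λ a / a := by rw [Finset.mul_sum]
      _ ≤ _ := by gcongr; exact mertens N hN
  have f2 : ((∑ a ∈ Ioc z N, a * ‖I a‖ ^ 2 : ℝ) : ℂ)
      = ∑ b ∈ Ioc z Y, ∑ b' ∈ Ioc z Y, ((Λ b * Λ b' : ℝ) : ℂ) * VV z N α b b' := by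
    push_cast
    have : ∀ a : ℕ, (a : ℂ) * (‖I a‖ : ℂ) ^ 2 = ∑ b ∈ Ioc z Y, ∑ b' ∈ Ioc z Y,
        ((Λ b : ℂ) * Λ b') * (if a * b ≤ N ∧ a * b' ≤ N then (a:ℂ) * ee ((a:ℝ) * (((b:ℝ) - b') * α)) else 0) := by
      intro a
      rw [← Complex.mul_conj']
      simp only [hI]
      rw [map_sum, Finset.sum_mul_sum, Finset.mul_sum]
      refine Finset.sum_congr rfl fun b _ => ?_
      rw [Finset.mul_sum]
      refine Finset.sum_congr rfl fun b' _ => ?_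
      by_cases h1 : a * b ≤ N <;> by_cases h2 : a * b' ≤ N
      · simp only [h1, h2, if_true, and_self]
        rw [map_mul, Complex.conj_ofReal, ← ee_neg, mul_mul_mul_comm, ← ee_add]
        have : ((a * b : ℕ):ℝ) * α + -(((a * b' : ℕ):ℝ) * α) = (a:ℝ) * (((b:ℝ) - b') * α) := by push_cast; ring
        rw [this]; ring
      · simp [h1, h2]
      · simp [h1, h2]
      · simp [h1, h2]
    simp_rw [this]
    rw [Finset.sum_comm]
    refine Finset.sum_congr rfl fun b _ => ?_
    rw [Finset.sum_comm]
    refine Finset.sum_congr rfl fun b' _ => ?_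
    unfold VV
    rw [Finset.mul_sum]
  have f3 : ∑ a ∈ Ioc z N, a * ‖I a‖ ^ 2 ≤ L ^ 2 * ∑ b ∈ Ioc z Y, ∑ b' ∈ Ioc z Y, ‖VV z N α b b'‖ := by
    have e : ∑ a ∈ Ioc z N, a * ‖I a‖ ^ 2 = ‖((∑ a ∈ Ioc z N, a * ‖I a‖ ^ 2 : ℝ) : ℂ)‖ := by
      rw [Complex.norm_real, Real.norm_eq_abs, abs_of_nonneg]
      exact Finset.sum_nonneg fun _ _ => by positivity
    rw [e, f2, Finset.mul_sum]
    refine (norm_sum_le _ _).trans (Finset.sum_le_sum fun b hb => ?_)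
    rw [Finset.mul_sum]
    refine (norm_sum_le _ _).trans (Finset.sum_le_sum fun b' hb' => ?_)
    rw [Finset.mem_Ioc] at hb hb'
    have h0 : 0 ≤ Λ b := vonMangoldt_nonneg
    have h0' : 0 ≤ Λ b' := vonMangoldt_nonneg
    rw [norm_mul, Complex.norm_real, Real.norm_eq_abs, abs_of_nonneg (by positivity), sq]
    have := lam_le_log b N (hb.2.trans hYN)
    have := lam_le_log b' N (hb'.2.trans hYN)
    gcongr
  have f4 : ∑ b ∈ Ioc z Y, ∑ b' ∈ Ioc z Y, ‖VV z N α b b'‖ ≤ 2 * ∑ b ∈ Ioc z Y, ∑ b' ∈ Ioc z b, ‖VV z N α b b'‖ := by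
    have s1 : ∀ b ∈ Ioc z Y, ∑ b' ∈ Ioc z b, ‖VV z N α b b'‖
        = ∑ b' ∈ Ioc z Y, if b' ≤ b then ‖VV z N α b b'‖ else 0 := by
      intro b hb
      rw [Finset.mem_Ioc] at hb
      rw [← Finset.sum_filter]
      congr 1
      ext b'; simp only [mem_filter, mem_Ioc]; omega
    rw [Finset.sum_congr rfl s1, two_mul]
    nth_rewrite 3 [Finset.sum_comm]
    rw [← Finset.sum_add_distrib]
    refine Finset.sum_le_sum fun b _ => ?_
    rw [← Finset.sum_add_distrib]
    refine Finset.sum_le_sum fun b' _ => ?_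
    rcases le_total b' b with h | h
    · rw [if_pos h]
      have : (0:ℝ) ≤ if b ≤ b' then ‖VV z N α b' b‖ else 0 := by split_ifs <;> positivity
      linarith
    · rw [if_pos h]
      have hs := VV_symm z N α b b'
      have : (0:ℝ) ≤ if b' ≤ b then ‖VV z N α b b'‖ else 0 := by split_ifs <;> positivity
      linarith
  have f5 : ∑ b ∈ Ioc z Y, ∑ b' ∈ Ioc z b, ‖VV z N α b b'‖ ≤
      N ^ 2 * (1 + L) / q + N ^ 2 / z + 8 * N * (1 + L) * (N / z + q * (1 + L)) := by
    calc _ ≤ ∑ b ∈ Ioc z Y, ((N:ℝ)^2 / q * (1 / b) + N ^ 2 * (1 / (b:ℝ)^2) + (8 * N * (1 + L) + 8 * N * (1+L) * q * (1 / b))) := by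
          refine Finset.sum_le_sum fun b hb => ?_
          rw [Finset.mem_Ioc] at hb
          have hb0 : 0 < b := by omega
          have hb' : (0:ℝ) < b := by exact_mod_cast hb0
          have hbY : (b:ℝ) ≤ (Y:ℝ) := by exact_mod_cast hb.2
          refine (VV_sum q hq a ha α Q hQ hα z N b hb0 (by linarith)).trans ?_
          calc _ ≤ ((N:ℝ) / b) ^ 2 * (b / q + 1) + 2 * ((N:ℝ) / b) * (4 * (b + q) * (1 + L)) := by gcongr
            _ = _ := by field_simp; ring
      _ = (N:ℝ)^2 / q * ∑ b ∈ Ioc z Y, (1 / (b:ℝ)) + N ^ 2 * ∑ b ∈ Ioc z Y, (1 / (b:ℝ)^2)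
          + ((#(Ioc z Y):ℝ) * (8 * N * (1 + L)) + 8 * N * (1+L) * q * ∑ b ∈ Ioc z Y, (1 / (b:ℝ))) := by
          rw [Finset.sum_add_distrib, Finset.sum_add_distrib, Finset.sum_add_distrib, Finset.mul_sum,
            Finset.mul_sum, Finset.mul_sum, Finset.sum_const, nsmul_eq_mul]
      _ ≤ (N:ℝ)^2 / q * (1 + L) + N ^ 2 * (1 / z) + ((N / z) * (8 * N * (1 + L)) + 8 * N * (1+L) * q * (1 + L)) := by
          have g1 : ∑ b ∈ Ioc z Y, (1 / (b:ℝ)) ≤ 1 + L := by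
            refine le_trans ?_ (harmonic_bd N)
            apply Finset.sum_le_sum_of_subset_of_nonneg (Finset.Ioc_subset_Ioc (Nat.zero_le _) hYN)
            intros; positivity
          have g2 := sum_inv_sq_tail z Y hz
          have g3 : (#(Ioc z Y):ℝ) ≤ N / z := by
            rw [Nat.card_Ioc]
            have : ((Y - z : ℕ):ℝ) ≤ (Y:ℝ) := by exact_mod_cast Nat.sub_le _ _
            exact this.trans Nat.cast_div_le
          gcongr
      _ = _ := by ring
  calc _ ≤ _ := cs
    _ ≤ (L * (L + 6)) * (L ^ 2 * (2 * (N ^ 2 * (1 + L) / q + N ^ 2 / z + 8 * N * (1 + L) * (N / z + q * (1 + L))))) := by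
        apply mul_le_mul f1 _ (Finset.sum_nonneg fun _ _ => by positivity) (by positivity)
        refine f3.trans ?_
        gcongr
        exact f4.trans (by gcongr)
    _ = _ := by ring

/-- removing the small variables -/
lemma typeII_small (z N : ℕ) (hz : 1 ≤ z) (hzN : z ≤ N) (f : ℕ → ℕ → ℂ) (hf : ∀ a b, ‖f a b‖ ≤ 1) :
    ‖∑ a ∈ Ioc 0 N, ∑ b ∈ Ioc 0 (N / a), ((Λ a * Λ b : ℝ) : ℂ) * f a b
      - ∑ a ∈ Ioc z N, ∑ b ∈ Ioc z (N / a), ((Λ a * Λ b : ℝ) : ℂ) * f a b‖ ≤ 12 * N * (Real.log z + 6) := by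
  have hterm : ∀ a b, ‖((Λ a * Λ b : ℝ) : ℂ) * f a b‖ ≤ Λ a * Λ b := by
    intro a b
    have h0 : 0 ≤ Λ a := vonMangoldt_nonneg
    have h0' : 0 ≤ Λ b := vonMangoldt_nonneg
    rw [norm_mul, Complex.norm_real, Real.norm_eq_abs, abs_of_nonneg (by positivity)]
    exact mul_le_of_le_one_right (by positivity) (hf a b)
  have hm := mertens z hz
  have hs := sum_lam_lam N (Ioc 0 z) (fun a ha => (Finset.mem_Ioc.mp ha).1)
  have hs2 : ∑ a ∈ Ioc 0 z, ∑ b ∈ Ioc 0 (N / a), Λ a * Λ b ≤ 6 * N * (Real.log z + 6) :=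
    hs.trans (by gcongr)
  have e : ∑ a ∈ Ioc 0 N, ∑ b ∈ Ioc 0 (N / a), ((Λ a * Λ b : ℝ) : ℂ) * f a b
      - ∑ a ∈ Ioc z N, ∑ b ∈ Ioc z (N / a), ((Λ a * Λ b : ℝ) : ℂ) * f a b
      = ∑ a ∈ Ioc 0 z, ∑ b ∈ Ioc 0 (N / a), ((Λ a * Λ b : ℝ) : ℂ) * f a b
      + ∑ a ∈ Ioc z N, ∑ b ∈ Ioc 0 (min z (N / a)), ((Λ a * Λ b : ℝ) : ℂ) * f a b := by
    rw [← Finset.sum_Ioc_consecutive _ (Nat.zero_le z) hzN, add_sub_assoc, ← Finset.sum_sub_distrib]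
    congr 1
    refine Finset.sum_congr rfl fun a _ => ?_
    rw [sub_eq_iff_eq_add]
    rcases le_total z (N / a) with h | h
    · rw [min_eq_left h, Finset.sum_Ioc_consecutive _ (Nat.zero_le z) h]
    · rw [min_eq_right h, Finset.Ioc_eq_empty (by omega : ¬ z < N / a)]; simp
  rw [e]
  have p1 : ‖∑ a ∈ Ioc 0 z, ∑ b ∈ Ioc 0 (N / a), ((Λ a * Λ b : ℝ) : ℂ) * f a b‖ ≤ 6 * N * (Real.log z + 6) := by
    refine le_trans ?_ hs2
    refine (norm_sum_le _ _).trans (Finset.sum_le_sum fun a _ => ?_)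
    exact (norm_sum_le _ _).trans (Finset.sum_le_sum fun b _ => hterm a b)
  have p2 : ‖∑ a ∈ Ioc z N, ∑ b ∈ Ioc 0 (min z (N / a)), ((Λ a * Λ b : ℝ) : ℂ) * f a b‖ ≤ 6 * N * (Real.log z + 6) := by
    refine le_trans ?_ hs2
    calc _ ≤ ∑ a ∈ Ioc z N, ∑ b ∈ Ioc 0 (min z (N / a)), Λ a * Λ b := by
          refine (norm_sum_le _ _).trans (Finset.sum_le_sum fun a _ => ?_)
          exact (norm_sum_le _ _).trans (Finset.sum_le_sum fun b _ => hterm a b)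
      _ = ∑ a ∈ Ioc z N, ∑ b ∈ Ioc 0 z, if a * b ≤ N then Λ a * Λ b else 0 := by
          refine Finset.sum_congr rfl fun a ha => ?_
          rw [Finset.mem_Ioc] at ha
          rw [← Finset.sum_filter]
          congr 1
          ext b
          simp only [mem_filter, mem_Ioc, le_min_iff, Nat.le_div_iff_mul_le (by omega : 0 < a), mul_comm b a]
          tauto
      _ = ∑ b ∈ Ioc 0 z, ∑ a ∈ Ioc z N, if a * b ≤ N then Λ a * Λ b else 0 := Finset.sum_comm
      _ ≤ _ := by
          refine Finset.sum_le_sum fun b hb => ?_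
          rw [Finset.mem_Ioc] at hb
          rw [← Finset.sum_filter]
          calc _ ≤ ∑ a ∈ Ioc 0 (N / b), Λ a * Λ b := by
                apply Finset.sum_le_sum_of_subset_of_nonneg
                · intro a ha
                  simp only [mem_filter, mem_Ioc, Nat.le_div_iff_mul_le hb.1] at ha ⊢
                  omega
                · intro a _ _
                  exact mul_nonneg vonMangoldt_nonneg vonMangoldt_nonneg
            _ = _ := Finset.sum_congr rfl fun a _ => mul_comm _ _
  calc _ ≤ _ := norm_add_le _ _
    _ ≤ _ := add_le_add p1 p2
    _ = _ := by ring

end Vin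
namespace Vin

lemma ee_stdAddChar (q : ℕ) [NeZero q] (j : ℤ) : ee ((j:ℝ) / q) = ZMod.stdAddChar (j : ZMod q) := by
  rw [ZMod.stdAddChar_coe]
  unfold ee
  congr 1
  push_cast
  ring

lemma bilin (q : ℕ) [NeZero q] (a : ZMod q) (ha : IsUnit a) (u v : ZMod q → ℂ) :
    ‖∑ r, ∑ s, u r * v s * ZMod.stdAddChar (a * r * s)‖ ^ 2 ≤ q * (∑ r, ‖u r‖ ^ 2) * ∑ s, ‖v s‖ ^ 2 := by
  set ψ : AddChar (ZMod q) ℂ := ZMod.stdAddChar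
  have h1 : ‖∑ r, ∑ s, u r * v s * ψ (a * r * s)‖ ≤ ∑ r, ‖u r‖ * ‖∑ s, v s * ψ (a * r * s)‖ := by
    refine (norm_sum_le _ _).trans (Finset.sum_le_sum fun r _ => ?_)
    rw [← norm_mul, Finset.mul_sum]
    simp only [mul_assoc]; exact le_rfl
  have h2 : ∑ r, ‖∑ s, v s * ψ (a * r * s)‖ ^ 2 = q * ∑ s, ‖v s‖ ^ 2 := by
    have : ((∑ r, ‖∑ s, v s * ψ (a * r * s)‖ ^ 2 : ℝ) : ℂ) = ((q * ∑ s, ‖v s‖ ^ 2 : ℝ) : ℂ) := by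
      push_cast
      have e1 : ∀ r, (‖∑ s, v s * ψ (a * r * s)‖ : ℂ) ^ 2 = ∑ s, ∑ s', v s * (starRingEnd ℂ) (v s') * ψ (r * (a * (s - s'))) := by
        intro r
        rw [← Complex.mul_conj', map_sum, Finset.sum_mul_sum]
        refine Finset.sum_congr rfl fun s _ => Finset.sum_congr rfl fun s' _ => ?_
        rw [map_mul (starRingEnd ℂ), ← AddChar.map_neg_eq_conj]
        have : r * (a * (s - s')) = a * r * s + -(a * r * s') := by ring
        rw [this, AddChar.map_add_eq_mul]
        ring
      rw [Finset.sum_congr rfl fun r _ => e1 r, Finset.sum_comm, Finset.mul_sum]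
      refine Finset.sum_congr rfl fun s _ => ?_
      rw [Finset.sum_comm]
      have e2 : ∀ s', ∑ r, v s * (starRingEnd ℂ) (v s') * ψ (r * (a * (s - s'))) = if s' = s then q * (‖v s‖:ℂ)^2 else 0 := by
        intro s'
        rw [← Finset.mul_sum, AddChar.sum_mulShift _ (ZMod.isPrimitive_stdAddChar q)]
        by_cases h : s' = s
        · subst h
          simp only [sub_self, mul_zero, if_true, ZMod.card]
          rw [Complex.mul_conj']; ring
        · rw [if_neg h, if_neg]
          · simp
          · intro h0
            rw [ha.mul_right_eq_zero, sub_eq_zero] at h0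
            exact h h0.symm
      rw [Finset.sum_congr rfl fun s' _ => e2 s']
      simp
    exact_mod_cast this
  calc _ ≤ (∑ r, ‖u r‖ * ‖∑ s, v s * ψ (a * r * s)‖) ^ 2 := by gcongr
    _ ≤ (∑ r, ‖u r‖ ^ 2) * ∑ r, ‖∑ s, v s * ψ (a * r * s)‖ ^ 2 := Finset.sum_mul_sq_le_sq_mul_sq _ _ _
    _ = _ := by rw [h2]; ring

lemma block_main (q : ℕ) [NeZero q] (a0 : ℤ) (ha : IsCoprime a0 (q:ℤ)) (K M z X : ℕ) (f g : ℕ → ℂ)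
    (U V : ℝ) (hU0 : 0 ≤ U) (hV0 : 0 ≤ V)
    (hU : ∀ s : ZMod q, ∑ n ∈ Ioc K M with (((n:ℕ):ZMod q) = s), ‖f n‖ ≤ U / q)
    (hV : ∀ s : ZMod q, ∑ n ∈ Ioc z X with (((n:ℕ):ZMod q) = s), ‖g n‖ ≤ V / q) :
    ‖∑ a ∈ Ioc K M, ∑ b ∈ Ioc z X, f a * g b * ee (((a * b : ℕ):ℝ) * (a0 / q))‖ ≤ U * V / Real.sqrt q := by
  have hq : (0:ℝ) < q := by exact_mod_cast Nat.pos_of_ne_zero (NeZero.ne q)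
  have hunit : IsUnit (a0 : ZMod q) := by
    obtain ⟨x, y, h⟩ := ha
    apply IsUnit.of_mul_eq_one (x : ZMod q)
    have := congrArg (fun t : ℤ => (t : ZMod q)) h
    push_cast at this
    simp at this
    rw [mul_comm]; exact this
  set u : ZMod q → ℂ := fun r => ∑ n ∈ Ioc K M with (((n:ℕ):ZMod q) = r), f n
  set v : ZMod q → ℂ := fun r => ∑ n ∈ Ioc z X with (((n:ℕ):ZMod q) = r), g n
  have e : ∑ a ∈ Ioc K M, ∑ b ∈ Ioc z X, f a * g b * ee (((a * b : ℕ):ℝ) * (a0 / q))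
      = ∑ r, ∑ s, u r * v s * ZMod.stdAddChar ((a0 : ZMod q) * r * s) := by
    have e0 : ∀ a b : ℕ, ee (((a * b : ℕ):ℝ) * (a0 / q)) = ZMod.stdAddChar ((a0 : ZMod q) * (a : ZMod q) * (b : ZMod q)) := by
      intro a b
      have := ee_stdAddChar q (a0 * a * b)
      push_cast at this
      rw [← this]; congr 1; push_cast; ring
    rw [← Finset.sum_fiberwise (Ioc K M) (fun a => (a : ZMod q))]
    refine Finset.sum_congr rfl fun r _ => ?_
    have : ∀ a ∈ {a ∈ Ioc K M | (((a:ℕ):ZMod q) = r)}, ∑ b ∈ Ioc z X, f a * g b * ee (((a * b : ℕ):ℝ) * (a0 / q))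
        = f a * ∑ s, v s * ZMod.stdAddChar ((a0 : ZMod q) * r * s) := by
      intro a ha'
      rw [Finset.mem_filter] at ha'
      rw [← Finset.sum_fiberwise (Ioc z X) (fun b => (b : ZMod q)), Finset.mul_sum]
      refine Finset.sum_congr rfl fun s _ => ?_
      rw [Finset.sum_mul, Finset.mul_sum]
      refine Finset.sum_congr rfl fun b hb => ?_
      rw [Finset.mem_filter] at hb
      rw [e0, ha'.2, hb.2]; ring
    rw [Finset.sum_congr rfl this, ← Finset.sum_mul]
    rw [Finset.mul_sum]
    refine Finset.sum_congr rfl fun s _ => ?_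
    ring
  have hu : ∑ r, ‖u r‖ ^ 2 ≤ U ^ 2 / q := by
    calc _ ≤ ∑ r : ZMod q, (U / q) ^ 2 := by
          refine Finset.sum_le_sum fun r _ => ?_
          gcongr
          exact (norm_sum_le _ _).trans (hU r)
      _ = _ := by simp [ZMod.card]; field_simp
  have hv : ∑ r, ‖v r‖ ^ 2 ≤ V ^ 2 / q := by
    calc _ ≤ ∑ r : ZMod q, (V / q) ^ 2 := by
          refine Finset.sum_le_sum fun r _ => ?_
          gcongr
          exact (norm_sum_le _ _).trans (hV r)
      _ = _ := by simp [ZMod.card]; field_simp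
  rw [e]
  rw [← sq_le_sq₀ (norm_nonneg _) (by positivity)]
  calc _ ≤ _ := bilin q _ hunit u v
    _ ≤ q * (U ^ 2 / q) * (V ^ 2 / q) := by gcongr
    _ = _ := by rw [div_pow, Real.sq_sqrt hq.le]; field_simp

lemma lam_class (q : ℕ) [NeZero q] (N H : ℕ) (P : ℝ)
    (hP : ∀ (A B : ℕ) (s : ZMod q), B ≤ N → A + H ≤ B →
      Real.log N * (#{n ∈ Ioc A B | (((n:ℕ):ZMod q) = s) ∧ Λ n ≠ 0} : ℝ) ≤ P * ((B:ℝ) - A) / q)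
    (A B : ℕ) (hB : B ≤ N) (hAB : A + H ≤ B) (s : ZMod q) (c : ℕ → ℂ) (hc : ∀ n, ‖c n‖ = 1) :
    ∑ n ∈ Ioc A B with (((n:ℕ):ZMod q) = s), ‖((Λ n : ℝ):ℂ) * c n‖ ≤ (P * ((B:ℝ) - A)) / q := by
  refine le_trans ?_ (hP A B s hB hAB)
  rw [← Finset.filter_filter, mul_comm, ← nsmul_eq_mul]
  rw [← Finset.sum_filter_add_sum_filter_not _ (fun n => Λ n ≠ 0)]
  have : ∑ x ∈ {n ∈ Ioc A B | (((n:ℕ):ZMod q) = s)} with ¬ Λ x ≠ 0, ‖((Λ x : ℝ):ℂ) * c x‖ = 0 := by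
    refine Finset.sum_eq_zero fun n hn => ?_
    rw [Finset.mem_filter] at hn
    have := hn.2
    push Not at this
    rw [this]; simp
  rw [this, add_zero]
  refine Finset.sum_le_card_nsmul _ _ _ fun n hn => ?_
  simp only [Finset.mem_filter, Finset.mem_Ioc] at hn
  rw [norm_mul, hc, mul_one, Complex.norm_real, Real.norm_eq_abs, abs_of_nonneg vonMangoldt_nonneg]
  exact lam_le_log n N (by omega)

lemma block_bound (q : ℕ) [NeZero q] (a0 : ℤ) (ha : IsCoprime a0 (q:ℤ)) (α : ℝ) (N H k z : ℕ) (P : ℝ) (hP0 : 0 ≤ P)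
    (hH : 1 ≤ H) (hk : 1 ≤ k) (hzH : H ≤ z) (hz2 : 2 ≤ z) (hkN : k * H * z ≤ N)
    (hP : ∀ (A B : ℕ) (s : ZMod q), B ≤ N → A + H ≤ B →
      Real.log N * (#{n ∈ Ioc A B | (((n:ℕ):ZMod q) = s) ∧ Λ n ≠ 0} : ℝ) ≤ P * ((B:ℝ) - A) / q) :
    ‖∑ a ∈ Ioc (k * H) (k * H + H), ∑ b ∈ Ioc z (N / a), ((Λ a * Λ b : ℝ) : ℂ) * ee (((a * b : ℕ):ℝ) * α)‖
      ≤ P ^ 2 * N / (k * Real.sqrt q) + Real.log N ^ 2 * (N / (k:ℝ)^2 + H)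
        + 7 * Real.log N ^ 2 * N ^ 2 * |α - a0 / q| / (k:ℝ)^2 := by
  set K := k * H with hK
  set X := N / K with hX
  set β := α - a0 / q with hβ
  set L := Real.log N with hL
  have hK0 : 0 < K := Nat.mul_pos hk hH
  have hzX : z ≤ X := by rw [hX, Nat.le_div_iff_mul_le hK0]; rw [mul_comm]; exact hkN
  have hKN : K + H ≤ N := by
    have : H ≤ K := by nlinarith
    nlinarith
  have hXN : X ≤ N := Nat.div_le_self _ _
  have hL0 : 0 ≤ L := Real.log_natCast_nonneg _
  have hq : (0:ℝ) < q := by exact_mod_cast Nat.pos_of_ne_zero (NeZero.ne q)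
  have hkR : (0:ℝ) < k := by exact_mod_cast hk
  have hHR : (0:ℝ) < H := by exact_mod_cast hH
  have hKR : (K:ℝ) = k * H := by rw [hK]; push_cast; ring
  have hXR : (X:ℝ) ≤ N / (k * H) := by
    rw [hX, ← hKR]; exact Nat.cast_div_le
  -- main term
  have main := block_main q a0 ha K (K + H) z X (fun a => ((Λ a : ℝ):ℂ) * 1) (fun b => ((Λ b : ℝ):ℂ) * ee ((K * b) * β))
    (P * H) (P * X) (by positivity) (by positivity)
    (by
      intro s
      have := lam_class q N H P hP K (K+H) hKN le_rfl s (fun _ => 1) (by simp)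
      push_cast at this
      rw [add_sub_cancel_left] at this
      exact this)
    (by
      intro s
      have := lam_class q N H P hP 0 X hXN (by omega) s (fun b => ee ((K * b) * β)) (fun b => norm_ee _)
      push_cast at this
      rw [sub_zero] at this
      refine le_trans ?_ this
      apply Finset.sum_le_sum_of_subset_of_nonneg
      · apply Finset.filter_subset_filter
        exact Finset.Ioc_subset_Ioc (Nat.zero_le _) le_rfl
      · intros; positivity)
  have main' : P * H * (P * X) / Real.sqrt q ≤ P ^ 2 * N / (k * Real.sqrt q) := by
    calc P * H * (P * X) / Real.sqrt q ≤ P * H * (P * (N / (k * H))) / Real.sqrt q := by gcongr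
      _ = _ := by field_simp
  set G : ℕ → ℕ → ℂ := fun a b => ((Λ a : ℝ):ℂ) * 1 * (((Λ b : ℝ):ℂ) * ee ((K * b) * β)) * ee (((a * b : ℕ):ℝ) * (a0 / q)) with hG
  set F : ℕ → ℕ → ℂ := fun a b => ((Λ a * Λ b : ℝ) : ℂ) * ee (((a * b : ℕ):ℝ) * α) with hF
  have hLL : ∀ a ∈ Ioc K (K + H), ∀ b ∈ Ioc z X, Λ a * Λ b ≤ L ^ 2 := by
    intro a ha b hb
    rw [Finset.mem_Ioc] at ha hb
    rw [sq]
    exact mul_le_mul (lam_le_log a N (by omega)) (lam_le_log b N (by omega)) vonMangoldt_nonneg hL0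
  have hFG : ∀ a ∈ Ioc K (K + H), ∀ b ∈ Ioc z X, ‖F a b - G a b‖ ≤ L ^ 2 * (7 * (N / k * |β|)) := by
    intro a ha b hb
    have h1 := hLL a ha b hb
    rw [Finset.mem_Ioc] at ha hb
    have : F a b - G a b = ((Λ a * Λ b : ℝ) : ℂ) * ee (((a * b : ℕ):ℝ) * (a0 / q)) * (ee ((a * b) * β) - ee ((K * b) * β)) := by
      simp only [hF, hG]
      have : ee (((a * b : ℕ):ℝ) * α) = ee (((a * b : ℕ):ℝ) * (a0 / q)) * ee ((a * b) * β) := by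
        rw [← ee_add]; congr 1; rw [hβ]; push_cast; ring
      rw [this]; push_cast; ring
    rw [this, norm_mul, norm_mul, norm_ee, mul_one, Complex.norm_real, Real.norm_eq_abs,
      abs_of_nonneg (mul_nonneg vonMangoldt_nonneg vonMangoldt_nonneg)]
    refine mul_le_mul h1 ?_ (norm_nonneg _) (by positivity)
    refine (norm_ee_sub_le _ _).trans ?_
    have e : ((a:ℝ) * b * β - K * b * β) = ((a:ℝ) - K) * b * β := by ring
    rw [e, abs_mul, abs_mul]
    have ha1 : (a:ℝ) ≤ K + H := by exact_mod_cast ha.2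
    have ha2 : (K:ℝ) ≤ a := by exact_mod_cast ha.1.le
    have hb1 : (b:ℝ) ≤ N / (k * H) := le_trans (by exact_mod_cast hb.2) hXR
    rw [abs_of_nonneg (sub_nonneg.2 ha2), abs_of_nonneg (Nat.cast_nonneg b)]
    have hpi : 2 * Real.pi ≤ 7 := by linarith [Real.pi_lt_d2]
    calc 2 * Real.pi * (((a:ℝ) - K) * b * |β|) ≤ 7 * (H * (N / (k * H)) * |β|) := by
          gcongr; linarith
      _ = _ := by field_simp
  have hsplit : ∀ a ∈ Ioc K (K + H), ‖∑ b ∈ Ioc z (N / a), F a b - ∑ b ∈ Ioc z X, G a b‖ ≤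
      L ^ 2 * (N / (k^2 * H) + 1) + X * (L ^ 2 * (7 * (N / k * |β|))) := by
    intro a ha
    have haa := ha
    rw [Finset.mem_Ioc] at haa
    have haX : N / a ≤ X := Nat.div_le_div_left haa.1.le hK0
    have hsub : Ioc z (N / a) ⊆ Ioc z X := Finset.Ioc_subset_Ioc le_rfl haX
    rw [← Finset.sum_sdiff hsub (f := fun b => G a b), sub_add_eq_sub_sub, sub_right_comm, ← Finset.sum_sub_distrib]
    refine (norm_sub_le _ _).trans ?_
    rw [add_comm]
    apply add_le_add
    · calc _ ≤ (#(Ioc z X \ Ioc z (N/a))) • (L ^ 2) := by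
            refine (norm_sum_le _ _).trans (Finset.sum_le_card_nsmul _ _ _ fun b hb => ?_)
            rw [Finset.mem_sdiff] at hb
            simp only [hG]
            rw [norm_mul, norm_ee, mul_one, mul_one, norm_mul, norm_mul, norm_ee, mul_one, Complex.norm_real, Complex.norm_real, Real.norm_eq_abs,
              Real.norm_eq_abs, abs_of_nonneg vonMangoldt_nonneg, abs_of_nonneg vonMangoldt_nonneg]
            exact hLL a ha b hb.1
        _ ≤ _ := by
            rw [nsmul_eq_mul, mul_comm]
            gcongr
            have c1 : #(Ioc z X \ Ioc z (N/a)) ≤ X - N / a := by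
              rw [← Nat.card_Ioc]
              apply Finset.card_le_card
              intro b; simp only [Finset.mem_sdiff, Finset.mem_Ioc]; omega
            have c2 : ((X - N / a : ℕ):ℝ) = X - ((N / a : ℕ):ℝ) := by
              rw [Nat.cast_sub haX]
            have c3 : (N:ℝ) / a < ((N / a : ℕ):ℝ) + 1 := by
              rw [div_lt_iff₀ (by exact_mod_cast (by omega : 0 < a))]
              have := Nat.lt_mul_div_succ N (by omega : 0 < a)
              rw [mul_comm] at this
              exact_mod_cast this
            have ha0 : (0:ℝ) < a := by exact_mod_cast (by omega : 0 < a)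
            have c4 : (N:ℝ) / (k * H) - N / a ≤ N / (k^2 * H) := by
              have ha1 : (a:ℝ) ≤ k * H + H := by rw [← hKR]; exact_mod_cast haa.2
              have ha2 : (k:ℝ) * H ≤ a := by rw [← hKR]; exact_mod_cast haa.1.le
              have : (N:ℝ) / (k * H) - N / a = N * ((a:ℝ) - k * H) / (k * H * a) := by field_simp
              rw [this]
              calc N * ((a:ℝ) - k * H) / (k * H * a) ≤ N * H / (k * H * (k * H)) := by
                    gcongr; linarith
                _ = _ := by field_simp
            have : ((#(Ioc z X \ Ioc z (N/a)) : ℕ):ℝ) ≤ ((X - N / a : ℕ):ℝ) := by exact_mod_cast c1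
            linarith
    · refine (norm_sum_le _ _).trans ?_
      refine (Finset.sum_le_card_nsmul _ _ _ fun b hb => hFG a ha b (hsub hb)).trans ?_
      rw [nsmul_eq_mul]
      gcongr
      rw [Nat.card_Ioc]; omega
  have htot : ‖∑ a ∈ Ioc K (K + H), ∑ b ∈ Ioc z (N / a), F a b - ∑ a ∈ Ioc K (K + H), ∑ b ∈ Ioc z X, G a b‖ ≤
      L ^ 2 * (N / (k:ℝ)^2 + H) + 7 * L ^ 2 * N ^ 2 * |β| / (k:ℝ)^2 := by
    rw [← Finset.sum_sub_distrib]
    refine (norm_sum_le _ _).trans ((Finset.sum_le_card_nsmul _ _ _ hsplit).trans ?_)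
    rw [nsmul_eq_mul, Nat.card_Ioc, Nat.add_sub_cancel_left]
    calc (H:ℝ) * (L ^ 2 * (N / (k^2 * H) + 1) + X * (L ^ 2 * (7 * (N / k * |β|))))
        ≤ (H:ℝ) * (L ^ 2 * (N / (k^2 * H) + 1) + (N / (k * H)) * (L ^ 2 * (7 * (N / k * |β|)))) := by gcongr
      _ = _ := by field_simp
  have := norm_le_norm_add_norm_sub' (∑ a ∈ Ioc K (K + H), ∑ b ∈ Ioc z (N / a), F a b) (∑ a ∈ Ioc K (K + H), ∑ b ∈ Ioc z X, G a b)
  linarith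

lemma blocks_sum {M : Type*} [AddCommMonoid M] (f : ℕ → M) (H k0 k1 : ℕ) (h : k0 ≤ k1) :
    ∑ a ∈ Ioc (k0 * H) (k1 * H), f a = ∑ k ∈ Ico k0 k1, ∑ a ∈ Ioc (k * H) (k * H + H), f a := by
  induction k1, h using Nat.le_induction with
  | base => simp
  | succ n hn ih =>
    rw [Finset.sum_Ico_succ_top hn, ← ih, add_mul, one_mul]
    rw [Finset.sum_Ioc_consecutive _ (Nat.mul_le_mul_right _ hn) (Nat.le_add_right _ _)]

lemma typeIIA (q : ℕ) [NeZero q] (a0 : ℤ) (ha : IsCoprime a0 (q:ℤ)) (α : ℝ) (N H k0 : ℕ) (P : ℝ) (hP0 : 0 ≤ P)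
    (hH : 1 ≤ H) (hk : 1 ≤ k0) (hz2 : 2 ≤ k0 * H) (hzN : k0 * H ≤ N)
    (hP : ∀ (A B : ℕ) (s : ZMod q), B ≤ N → A + H ≤ B →
      Real.log N * (#{n ∈ Ioc A B | (((n:ℕ):ZMod q) = s) ∧ Λ n ≠ 0} : ℝ) ≤ P * ((B:ℝ) - A) / q) :
    ‖∑ a ∈ Ioc (k0 * H) N, ∑ b ∈ Ioc (k0 * H) (N / a), ((Λ a * Λ b : ℝ) : ℂ) * ee (((a * b : ℕ):ℝ) * α)‖
      ≤ P ^ 2 * N * (1 + Real.log N) / Real.sqrt q + Real.log N ^ 2 * (2 * N / k0 + N / k0)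
        + 14 * Real.log N ^ 2 * N ^ 2 * |α - a0 / q| / k0 := by
  set z := k0 * H with hz
  set k1 := max k0 (N / (z * H) + 1) with hk1
  set F : ℕ → ℂ := fun a => ∑ b ∈ Ioc z (N / a), ((Λ a * Λ b : ℝ) : ℂ) * ee (((a * b : ℕ):ℝ) * α) with hF
  set L := Real.log N with hL
  have hzH0 : 0 < z * H := by positivity
  have hFz : ∀ a, k1 * H < a → F a = 0 := by
    intro a ha'
    simp only [hF]
    rw [Finset.Ioc_eq_empty, Finset.sum_empty]
    rw [not_lt]
    apply Nat.le_of_lt_succ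
    rw [Nat.div_lt_iff_lt_mul (by omega)]
    have h1 : N < z * H * (N / (z * H) + 1) := by
      have := Nat.lt_mul_div_succ N hzH0
      exact this
    have h2 : N / (z * H) + 1 ≤ k1 := le_max_right _ _
    calc N < z * H * (N / (z * H) + 1) := h1
      _ ≤ z * H * k1 := Nat.mul_le_mul_left _ h2
      _ = z * (k1 * H) := by ring
      _ ≤ z * a := Nat.mul_le_mul_left _ ha'.le
      _ ≤ (z+1) * a := by gcongr; omega
  have hFN : ∀ a, N < a → F a = 0 := by
    intro a ha'
    simp only [hF]
    rw [Nat.div_eq_of_lt ha']; simp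
  have e1 : ∑ a ∈ Ioc z N, F a = ∑ a ∈ Ioc z (k1 * H), F a := by
    have e2 : ∑ a ∈ Ioc z N, F a = ∑ a ∈ Ioc z (max N (k1 * H)), F a := by
      apply Finset.sum_subset (Finset.Ioc_subset_Ioc le_rfl (le_max_left _ _))
      intro a h1 h2
      simp only [Finset.mem_Ioc] at h1 h2
      exact hFN a (by omega)
    rw [e2]; symm
    apply Finset.sum_subset (Finset.Ioc_subset_Ioc le_rfl (le_max_right _ _))
    intro a h1 h2
    simp only [Finset.mem_Ioc] at h1 h2
    exact hFz a (by omega)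
  rw [e1, hz, blocks_sum _ _ _ _ (le_max_left _ _)]
  have hL0 : 0 ≤ L := Real.log_natCast_nonneg _
  have hkR : (0:ℝ) < k0 := by exact_mod_cast hk
  have hHR : (0:ℝ) < H := by exact_mod_cast hH
  have hmem : ∀ k ∈ Ico k0 k1, 1 ≤ k ∧ k ≤ N / (z * H) := by
    intro k hk'
    rw [Finset.mem_Ico] at hk'
    refine ⟨by omega, ?_⟩
    have := hk'.2
    rw [hk1, lt_max_iff] at this
    omega
  have step : ∀ k ∈ Ico k0 k1, ‖∑ a ∈ Ioc (k * H) (k * H + H), F a‖ ≤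
      P ^ 2 * N / Real.sqrt q * (1 / k) + (L ^ 2 * N + 7 * L ^ 2 * N ^ 2 * |α - a0 / q|) * (1 / (k:ℝ)^2) + L ^ 2 * H := by
    intro k hk'
    have h2 := hmem k hk'
    have h3 : k * H * z ≤ N := by
      have := (Nat.le_div_iff_mul_le hzH0).1 h2.2
      calc k * H * z = k * (z * H) := by ring
        _ ≤ N := this
    have := block_bound q a0 ha α N H k z P hP0 hH h2.1 (by rw [hz]; nlinarith) hz2 h3 hP
    refine this.trans (le_of_eq ?_)
    have hkk : (0:ℝ) < k := by exact_mod_cast h2.1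
    have hsq : 0 < Real.sqrt q := Real.sqrt_pos.2 (by exact_mod_cast Nat.pos_of_ne_zero (NeZero.ne q))
    field_simp
    ring
  have hsub : Ico k0 k1 ⊆ Ioc 0 N := by
    intro k hk'
    have := hmem k hk'
    rw [Finset.mem_Ioc]
    exact ⟨by omega, this.2.trans (Nat.div_le_self _ _)⟩
  have g1 : ∑ k ∈ Ico k0 k1, (1 / (k:ℝ)) ≤ 1 + L := by
    refine le_trans ?_ (harmonic_bd N)
    exact Finset.sum_le_sum_of_subset_of_nonneg hsub (by intros; positivity)
  have g2 : ∑ k ∈ Ico k0 k1, (1 / (k:ℝ)^2) ≤ 2 / (k0:ℝ) := by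
    have h1 := sum_inv_sq_tail k0 k1 hk
    have h2 : ∑ k ∈ Ico k0 k1, (1 / (k:ℝ)^2) ≤ 1 / (k0:ℝ)^2 + ∑ k ∈ Ioc k0 k1, (1 / (k:ℝ)^2) := by
      have : Ico k0 k1 ⊆ insert k0 (Ioc k0 k1) := by
        intro k; simp only [Finset.mem_Ico, Finset.mem_insert, Finset.mem_Ioc]; omega
      refine (Finset.sum_le_sum_of_subset_of_nonneg this (by intros; positivity)).trans ?_
      rw [Finset.sum_insert (by simp)]
    have h3 : 1 / (k0:ℝ)^2 ≤ 1 / k0 := by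
      apply one_div_le_one_div_of_le hkR
      have : (1:ℝ) ≤ k0 := by exact_mod_cast hk
      nlinarith
    have : (2:ℝ) / k0 = 1 / k0 + 1 / k0 := by ring
    linarith
  have g3 : (#(Ico k0 k1) : ℝ) * H ≤ N / k0 := by
    have h1 : #(Ico k0 k1) ≤ N / (z * H) := by
      have : Ico k0 k1 ⊆ Ioc 0 (N / (z * H)) := by
        intro k hk'
        have := hmem k hk'
        rw [Finset.mem_Ioc]; exact ⟨by omega, this.2⟩
      have := Finset.card_le_card this
      rwa [Nat.card_Ioc, Nat.sub_zero] at this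
    have h2 : (#(Ico k0 k1) : ℝ) ≤ N / ((z * H : ℕ):ℝ) := le_trans (by exact_mod_cast h1) Nat.cast_div_le
    have hH1 : (1:ℝ) ≤ H := by exact_mod_cast hH
    calc (#(Ico k0 k1) : ℝ) * H ≤ N / ((z * H : ℕ):ℝ) * H := by gcongr
      _ = N / (k0 * H) := by rw [hz]; push_cast; field_simp
      _ ≤ N / k0 := by
        gcongr
        nlinarith
  refine (norm_sum_le _ _).trans ((Finset.sum_le_sum step).trans ?_)
  rw [Finset.sum_add_distrib, Finset.sum_add_distrib, ← Finset.mul_sum, ← Finset.mul_sum, Finset.sum_const, nsmul_eq_mul]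
  calc _ ≤ P ^ 2 * N / Real.sqrt q * (1 + L) + (L ^ 2 * N + 7 * L ^ 2 * N ^ 2 * |α - a0 / q|) * (2 / k0) + L ^ 2 * (N / k0) := by
        have : (#(Ico k0 k1) : ℝ) * (L ^ 2 * H) = L ^ 2 * ((#(Ico k0 k1) : ℝ) * H) := by ring
        rw [this]
        gcongr
    _ = _ := by ring

end Vin
namespace Vin

lemma ev_log_ge (M : ℝ) : ∀ᶠ N : ℕ in Filter.atTop, M ≤ Real.log N :=
  (Real.tendsto_log_atTop.comp tendsto_natCast_atTop_atTop).eventually_ge_atTop M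

/-- powers of log are small compared to powers of N -/
lemma ev_log_pow (k : ℕ) (c C : ℝ) (hc : 0 < c) (hC : 0 < C) : ∀ᶠ N : ℕ in Filter.atTop,
    C * Real.log N ^ k ≤ (N:ℝ) ^ c := by
  have h := isLittleO_log_rpow_rpow_atTop (k:ℝ) hc
  have h2 := (h.bound (show 0 < 1 / C by positivity))
  have h3 := tendsto_natCast_atTop_atTop (R := ℝ) |>.eventually h2
  filter_upwards [h3, ev_log_ge 0] with N h4 h5
  rw [Real.rpow_natCast, Real.norm_of_nonneg (by positivity), Real.norm_of_nonneg (by positivity)] at h4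
  rw [div_mul_eq_mul_div, one_mul, le_div_iff₀ hC] at h4
  linarith

lemma ev_loglog (C δ : ℝ) (hC : 0 < C) (hδ : 0 < δ) : ∀ᶠ N : ℕ in Filter.atTop,
    C * Real.log (Real.log N) ^ 3 ≤ δ * Real.log N := by
  have h : (fun x : ℝ => Real.log x ^ 3) =o[Filter.atTop] id := Real.isLittleO_pow_log_id_atTop
  have h2 := (h.bound (show 0 < δ / C by positivity))
  have ht := Real.tendsto_log_atTop.comp (tendsto_natCast_atTop_atTop (R := ℝ))
  have h3 := ht.eventually h2
  filter_upwards [h3, ev_log_ge 1] with N h4 h5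
  simp only [Function.comp, id] at h4
  have := Real.log_nonneg h5
  rw [Real.norm_of_nonneg (by positivity), Real.norm_of_nonneg (by positivity)] at h4
  rw [div_mul_eq_mul_div, le_div_iff₀ hC] at h4
  linarith

lemma T1_bound (δ : ℝ) (hδ : 0 < δ) : ∀ᶠ N : ℕ in Filter.atTop, ∀ (α : ℝ) (q : ℕ) (a0 : ℤ), 0 < q →
    IsCoprime a0 (q:ℤ) → (q:ℝ) ≤ N / Real.log N ^ 20 → |α - a0 / q| ≤ 1 / (q * (N / Real.log N ^ 20)) →
    ‖∑ d ∈ Ioc 0 N, (((μ d:ℝ) * Real.log (N/d)^2:ℝ):ℂ) * ∑ m ∈ Ioc 0 (N/d), ee (((d*m:ℕ):ℝ)*α)‖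
      ≤ N * Real.log N * (δ + 200 / q.totient) := by
  filter_upwards [ev_log_ge 2, ev_log_pow 24 1 2 one_pos two_pos, ev_loglog 31250 (δ/2) (by norm_num) (by positivity),
    ev_log_ge (2 * 88 / δ)] with N hL2 hN24 hll hL88
  intro α q a0 hq ha hqN hα
  rw [Real.rpow_one] at hN24
  set L := Real.log N with hL
  have hL0 : 0 < L := by linarith
  have hL24 : 0 < L ^ 24 := by positivity
  have hL24' : (1:ℝ) ≤ L ^ 24 := one_le_pow₀ (by linarith)
  have hN0 : (0:ℝ) < N := by linarith
  have hN1 : 0 < N := by exact_mod_cast hN0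
  set D := ⌊(N:ℝ) / L ^ 24⌋₊ with hD
  have hDle : (D:ℝ) ≤ N / L ^ 24 := Nat.floor_le (by positivity)
  have h2 : (2:ℝ) ≤ N / L ^ 24 := by rw [le_div_iff₀ hL24]; linarith
  have hDge : (N:ℝ) / L ^ 24 / 2 ≤ D := by
    have := Nat.lt_floor_add_one ((N:ℝ) / L ^ 24)
    linarith
  have hD0 : (0:ℝ) < D := by linarith
  have hDN : D ≤ N := by
    have : (D:ℝ) ≤ N := hDle.trans (div_le_self hN0.le hL24')
    exact_mod_cast this
  have hqN' : q ≤ N := by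
    have : (q:ℝ) ≤ N := hqN.trans (div_le_self hN0.le (one_le_pow₀ (by linarith)))
    exact_mod_cast this
  have hqR : (1:ℝ) ≤ q := by exact_mod_cast hq
  have key := typeI q hq a0 ha α (N / L ^ 20) (by positivity) hα N D (by exact_mod_cast hD0) hDN hqN' (by
    have : (N:ℝ) / L ^ 20 = N / L ^ 24 * L ^ 4 := by field_simp
    rw [this]
    have : (2:ℝ) ≤ L ^ 4 := by
      calc (2:ℝ) ≤ 2 ^ 4 := by norm_num
        _ ≤ L ^ 4 := by gcongr
    nlinarith)
  refine key.trans ?_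
  have hll0 : 0 ≤ Real.log L := Real.log_nonneg (by linarith)
  have hlogND : Real.log (N / D) ≤ 25 * Real.log L := by
    have : (N:ℝ) / D ≤ L ^ 25 := by
      rw [div_le_iff₀ hD0]
      calc (N:ℝ) = 2 * (N / L ^ 24 / 2) * L ^ 24 := by field_simp
        _ ≤ L * D * L ^ 24 := by gcongr
        _ = _ := by ring
    have := Real.log_le_log (by positivity) this
    rw [Real.log_pow] at this
    exact_mod_cast this
  have hlogND0 : 0 ≤ Real.log (N / D) := by
    apply Real.log_nonneg
    rw [one_le_div hD0]; exact_mod_cast hDN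
  have hlq : Real.log q ≤ L := Real.log_le_log (by linarith) (by exact_mod_cast hqN')
  have hlq0 : 0 ≤ Real.log q := Real.log_nonneg hqR
  have hβ : |α - a0 / q| ≤ L ^ 20 / N := by
    refine hα.trans ?_
    rw [div_le_div_iff₀ (by positivity) hN0]
    have : L ^ 20 * (q * (N / L ^ 20)) = q * N := by field_simp
    rw [this]; nlinarith
  have t1 : 2 * N * Real.log (N / D) ^ 3 ≤ N * (31250 * Real.log L ^ 3) := by
    calc _ ≤ 2 * N * (25 * Real.log L) ^ 3 := by gcongr
      _ = _ := by ring
  have hp : ∀ k : ℕ, 1 ≤ L ^ k := fun k => one_le_pow₀ (by linarith)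
  have t2 : L ^ 2 * (4 * (D + q) * (1 + Real.log q)) ≤ N * 16 := by
    have : (D:ℝ) ≤ N / L ^ 20 := hDle.trans (by gcongr <;> linarith)
    calc _ ≤ L ^ 2 * (4 * (N / L ^ 20 + N / L ^ 20) * (L + L)) := by gcongr; linarith
      _ = N * (16 / L ^ 17) := by field_simp; norm_num
      _ ≤ _ := by gcongr; exact div_le_self (by norm_num) (hp _)
  have t3 : D * (L ^ 2 * (1 + 7 * N * |α - a0 / q|)) ≤ N * 8 := by
    calc _ ≤ N / L ^ 24 * (L ^ 2 * (L ^ 20 + 7 * N * (L ^ 20 / N))) := by gcongr; exact hp _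
      _ = N * (8 / L ^ 2) := by field_simp; norm_num
      _ ≤ _ := by gcongr; exact div_le_self (by norm_num) (hp _)
  have hphi : (0:ℝ) < q.totient := by exact_mod_cast Nat.totient_pos.2 hq
  have t4 : 100 * (1 + L) / q.totient ≤ L * (200 / q.totient) := by
    rw [mul_div_assoc', div_le_div_iff_of_pos_right hphi]; linarith
  have t5 : 88 ≤ δ / 2 * L := by
    rw [div_le_iff₀ hδ] at hL88; linarith
  calc _ ≤ N * (31250 * Real.log L ^ 3) + N * 16 + N * 8 + N * (L * (200 / q.totient) + 64) := by gcongr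
    _ = N * (31250 * Real.log L ^ 3 + 88 + L * (200 / q.totient)) := by ring
    _ ≤ N * (δ / 2 * L + δ / 2 * L + L * (200 / q.totient)) := by gcongr
    _ = _ := by ring

end Vin
namespace Vin

lemma natlog_le (B N : ℕ) (hB : B ≤ N) (h1 : 1 ≤ N) : (Nat.log 2 B : ℝ) ≤ 2 * Real.log N := by
  rcases Nat.eq_zero_or_pos B with h | h
  · subst h; simp; exact Real.log_natCast_nonneg _
  have h2 : 2 ^ Nat.log 2 B ≤ B := Nat.pow_log_le_self 2 h.ne'
  have h3 : ((2:ℝ)) ^ Nat.log 2 B ≤ N := by exact_mod_cast h2.trans hB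
  have h4 := Real.log_le_log (by positivity) h3
  rw [Real.log_pow] at h4
  have := Real.log_two_gt_d9
  have h5 : (0:ℝ) ≤ (Nat.log 2 B : ℝ) := Nat.cast_nonneg _
  nlinarith

/-- the Brun-Titchmarsh hypothesis -/
lemma hP_ok (δ : ℝ) (hδ : 0 < δ) (hδ1 : δ ≤ 1) : ∀ᶠ N : ℕ in Filter.atTop, ∀ (q : ℕ) [NeZero q], 
    (q:ℝ) ≤ Real.log N ^ 10 → ∀ (A B : ℕ) (s : ZMod q), B ≤ N → A + ⌈(N:ℝ)^δ⌉₊ ≤ B →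
      Real.log N * (#{n ∈ Ioc A B | (((n:ℕ):ZMod q) = s) ∧ Λ n ≠ 0} : ℝ) ≤ (161 * (1 + Real.log q) / δ) * ((B:ℝ) - A) / q := by
  filter_upwards [ev_log_ge 2, ev_log_pow 24 (δ/40) 4 (by positivity) (by norm_num)] with N hL2 hw
  intro q _ hq A B s hBN hAB
  set L := Real.log N with hL
  have hN0 : 0 < N := by
    rcases Nat.eq_zero_or_pos N with h | h
    · rw [hL, h] at hL2; simp at hL2; linarith
    · exact h
  have hN : (0:ℝ) < N := by exact_mod_cast hN0
  set w := (N:ℝ) ^ (δ/40) with hwd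
  have hp : ∀ k : ℕ, 1 ≤ L ^ k := fun k => one_le_pow₀ (by linarith)
  have hL12 : 4 * L ^ 12 ≤ w := le_trans (by gcongr <;> linarith) hw
  have hL10 : L ^ 10 ≤ w := le_trans (le_trans (by gcongr <;> linarith) (by linarith [hp 12] : L ^ 12 ≤ 4 * L ^ 12)) hL12
  have hw4 : 4 ≤ w := by linarith [hp 12]
  have hpw : ∀ k : ℕ, 1 ≤ w ^ k := fun k => one_le_pow₀ (by linarith)
  have hw40 : (N:ℝ) ^ δ = w ^ 40 := by
    rw [hwd, ← Real.rpow_natCast, ← Real.rpow_mul hN.le]; congr 1; push_cast; ring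
  have hlogw : Real.log w = δ / 40 * L := by rw [hwd, Real.log_rpow hN]
  set h := (B:ℝ) - A with hh
  have hh40 : w ^ 40 ≤ h := by
    have h1 := Nat.le_ceil ((N:ℝ)^δ)
    have h2 : (A:ℝ) + (⌈(N:ℝ)^δ⌉₊:ℝ) ≤ B := by exact_mod_cast hAB
    rw [hw40] at h1 h2
    rw [hh]; linarith
  set R := ⌊w ^ 2⌋₊ with hR
  have hRle : (R:ℝ) ≤ w ^ 2 := Nat.floor_le (by positivity)
  have hRge : w ≤ R := by
    have := Nat.lt_floor_add_one (w ^ 2)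
    rw [← hR] at this
    nlinarith
  have hR2 : 2 ≤ R := by
    have : (2:ℝ) ≤ R := by linarith
    exact_mod_cast this
  have hlogR : δ / 40 * L ≤ Real.log R := by
    rw [← hlogw]; exact Real.log_le_log (by linarith) hRge
  have hq0 : 0 < q := Nat.pos_of_ne_zero (NeZero.ne q)
  have hqR : (0:ℝ) < q := by exact_mod_cast hq0
  have hlq : 0 ≤ Real.log q := Real.log_natCast_nonneg q
  have bt := BT q R A B hq0 hR2 (by omega) s
  rw [← hh] at bt
  have hnl := natlog_le B N hBN hN0
  have hLd : 0 < δ / 40 * L := by positivity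
  have hhq : 1 ≤ h / q := by
    rw [le_div_iff₀ hqR, one_mul]
    calc (q:ℝ) ≤ w := hq.trans hL10
      _ ≤ w ^ 40 := le_self_pow₀ (by linarith) (by norm_num)
      _ ≤ h := hh40
  have e1 : L * (1 + (R:ℝ) ^ 6 + R * Nat.log 2 B) ≤ h / q := by
    rw [le_div_iff₀ hqR]
    calc L * (1 + (R:ℝ) ^ 6 + R * Nat.log 2 B) * q ≤ L * (w ^ 12 + (w^2) ^ 6 + w^2 * (2 * L)) * L ^ 10 := by
          gcongr; exact hpw _
      _ ≤ L * (w ^ 12 * L + (w^2)^6 * L + w^12 * (2 * L)) * L ^ 10 := by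
          gcongr
          · exact le_mul_of_one_le_right (by positivity) (by linarith)
          · exact le_mul_of_one_le_right (by positivity) (by linarith)
          · linarith
          · norm_num
      _ = 4 * L ^ 12 * w ^ 12 := by ring
      _ ≤ w * w ^ 12 := by gcongr
      _ = w ^ 13 := by ring
      _ ≤ w ^ 40 := by gcongr <;> linarith
      _ ≤ h := hh40
  have e2 : L * (2 * (1 + Real.log q) * (h / q + 1) / Real.log R) ≤ 160 * (1 + Real.log q) / δ * (h / q) := by
    calc L * (2 * (1 + Real.log q) * (h / q + 1) / Real.log R) ≤ L * (2 * (1 + Real.log q) * (h / q + h / q) / (δ / 40 * L)) := by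
          gcongr
      _ = _ := by field_simp; ring
  have e3 : 1 ≤ (1 + Real.log q) / δ := by rw [le_div_iff₀ hδ]; linarith
  calc _ ≤ L * (1 + 2 * (1 + Real.log q) * (h / q + 1) / Real.log R + (R:ℝ) ^ 6 + R * Nat.log 2 B) := by gcongr
    _ = L * (1 + (R:ℝ) ^ 6 + R * Nat.log 2 B) + L * (2 * (1 + Real.log q) * (h / q + 1) / Real.log R) := by ring
    _ ≤ 1 * (h / q) + 160 * (1 + Real.log q) / δ * (h / q) := by linarith
    _ ≤ (1 + Real.log q) / δ * (h / q) + 160 * (1 + Real.log q) / δ * (h / q) := by gcongr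
    _ = _ := by ring

set_option maxHeartbeats 1000000 in
lemma T2_bound (δ : ℝ) (hδ : 0 < δ) (hδ1 : δ ≤ 1/4) : ∀ᶠ N : ℕ in Filter.atTop, ∀ (α : ℝ) (q : ℕ) (a0 : ℤ), 0 < q →
    IsCoprime a0 (q:ℤ) → (q:ℝ) ≤ N / Real.log N ^ 20 → |α - a0 / q| ≤ 1 / (q * (N / Real.log N ^ 20)) →
    ‖∑ a ∈ Ioc 0 N, ∑ b ∈ Ioc 0 (N / a), ((Λ a * Λ b : ℝ) : ℂ) * ee (((a * b : ℕ):ℝ) * α)‖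
      ≤ N * Real.log N * (25 * δ + 2 * (161 / δ) ^ 2 * ((1 + Real.log q) ^ 2 / Real.sqrt q)) := by
  filter_upwards [ev_log_ge 6, ev_log_pow 24 δ 4 (by positivity) (by norm_num), hP_ok δ hδ (by linarith),
    ev_log_pow 0 (1 - 2 * δ) 4 (by linarith) (by norm_num), ev_log_ge (200 / δ)] with N hL2 hy hPok h4N hL200
  intro α q a0 hq ha hqN hα
  haveI : NeZero q := ⟨hq.ne'⟩
  set L := Real.log N with hL
  have hN0 : 0 < N := by
    rcases Nat.eq_zero_or_pos N with h | h
    · rw [hL, h] at hL2; simp at hL2; linarith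
    · exact h
  have hN : (0:ℝ) < N := by exact_mod_cast hN0
  set y := (N:ℝ) ^ δ with hyd
  have hp : ∀ k : ℕ, 1 ≤ L ^ k := fun k => one_le_pow₀ (by linarith)
  have hy4 : 4 ≤ y := by linarith [hp 24]
  set H := ⌈y⌉₊ with hH
  have hHge : y ≤ H := Nat.le_ceil y
  have hHle : (H:ℝ) ≤ 2 * y := by
    have := Nat.ceil_lt_add_one (show 0 ≤ y by linarith)
    linarith
  have hH4 : 4 ≤ H := by
    have : (4:ℝ) ≤ H := by linarith
    exact_mod_cast this
  have hyy : y * y * (N:ℝ) ^ (1 - 2 * δ) = N := by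
    rw [hyd, ← Real.rpow_add hN, ← Real.rpow_add hN]
    have : δ + δ + (1 - 2 * δ) = 1 := by ring
    rw [this, Real.rpow_one]
  have hzN : H * H ≤ N := by
    have : (H:ℝ) * H ≤ N := by
      calc (H:ℝ) * H ≤ (2 * y) * (2 * y) := by gcongr
        _ = y * y * 4 := by ring
        _ ≤ y * y * (N:ℝ) ^ (1 - 2 * δ) := by gcongr; linarith
        _ = N := hyy
    exact_mod_cast this
  have hlogz : Real.log ((H * H : ℕ):ℝ) ≤ 2 + 2 * δ * L := by
    push_cast
    have h1 : Real.log H ≤ Real.log (2 * y) := Real.log_le_log (by linarith) hHle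
    rw [Real.log_mul (by norm_num) (by linarith), hyd, Real.log_rpow hN] at h1
    rw [Real.log_mul (by linarith) (by linarith)]
    linarith [Real.log_two_lt_d9]
  have hqR : (1:ℝ) ≤ q := by exact_mod_cast hq
  have hqN' : q ≤ N := by
    have : (q:ℝ) ≤ N := hqN.trans (div_le_self hN.le (one_le_pow₀ (by linarith)))
    exact_mod_cast this
  have hβ : |α - a0 / q| ≤ L ^ 20 / N := by
    refine hα.trans ?_
    rw [div_le_div_iff₀ (by positivity) hN]
    have : L ^ 20 * (q * (N / L ^ 20)) = q * N := by field_simp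
    rw [this]; nlinarith
  have small := typeII_small (H * H) N (by nlinarith) hzN (fun a b => ee (((a * b : ℕ):ℝ) * α)) (fun a b => (norm_ee _).le)
  have hlq : 0 ≤ Real.log q := Real.log_natCast_nonneg q
  have hyL : 4 * L ^ 24 ≤ H := hy.trans hHge
  have hHR : (0:ℝ) < H := by linarith
  have big : ‖∑ a ∈ Ioc (H * H) N, ∑ b ∈ Ioc (H * H) (N / a), ((Λ a * Λ b : ℝ) : ℂ) * ee (((a * b : ℕ):ℝ) * α)‖
      ≤ 40 * N + N * L * (2 * (161 / δ) ^ 2 * ((1 + Real.log q) ^ 2 / Real.sqrt q)) := by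
    rcases le_or_gt (q:ℝ) (L ^ 10) with hcase | hcase
    · have := typeIIA q a0 ha α N H H (161 * (1 + Real.log q) / δ) (by positivity) (by omega) (by omega) (by nlinarith) hzN
        (hPok q hcase)
      refine this.trans ?_
      have t1 : L ^ 2 * (2 * N / H + N / H) ≤ 3 * N := by
        have : L ^ 2 ≤ H := by
          calc L ^ 2 ≤ L ^ 24 := by gcongr <;> linarith
            _ ≤ (H:ℝ) := by linarith [hp 24]
        calc _ = 3 * N * (L ^ 2 / H) := by ring
          _ ≤ 3 * N * 1 := by gcongr; rw [div_le_one hHR]; exact this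
          _ = _ := by ring
      have t2 : 14 * L ^ 2 * N ^ 2 * |α - a0 / q| / H ≤ 14 * N := by
        have : L ^ 22 ≤ H := by
          calc L ^ 22 ≤ L ^ 24 := by gcongr <;> linarith
            _ ≤ (H:ℝ) := by linarith [hp 24]
        calc _ ≤ 14 * L ^ 2 * N ^ 2 * (L ^ 20 / N) / H := by gcongr
          _ = 14 * N * (L ^ 22 / H) := by field_simp
          _ ≤ 14 * N * 1 := by gcongr; rw [div_le_one hHR]; exact this
          _ = _ := by ring
      have t3 : (161 * (1 + Real.log q) / δ) ^ 2 * N * (1 + L) / Real.sqrt q ≤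
          N * L * (2 * (161 / δ) ^ 2 * ((1 + Real.log q) ^ 2 / Real.sqrt q)) := by
        calc _ ≤ (161 * (1 + Real.log q) / δ) ^ 2 * N * (2 * L) / Real.sqrt q := by gcongr; linarith
          _ = _ := by ring
      linarith
    · have hz : 16 * L ^ 24 ≤ ((H * H : ℕ):ℝ) := by
        push_cast
        have : (4:ℝ) ≤ H := by linarith
        nlinarith
      have hz0 : (0:ℝ) < ((H * H : ℕ):ℝ) := by linarith [hp 24]
      have hNz : (N:ℝ) / ((H * H : ℕ):ℝ) ≤ N / (16 * L ^ 24) := by gcongr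
      have := typeIIB q hq a0 ha α (N / L ^ 20) (by positivity) hα (H * H) N (by nlinarith) hN0 hqN' (by
        calc 2 * ((N / (H * H) : ℕ):ℝ) ≤ 2 * (N / ((H * H : ℕ):ℝ)) := by gcongr; exact Nat.cast_div_le
          _ ≤ 2 * (N / (16 * L ^ 24)) := by gcongr
          _ = N / L ^ 20 * (1 / (8 * L ^ 4)) := by field_simp; norm_num
          _ ≤ N / L ^ 20 * 1 := by
            gcongr
            rw [div_le_one (by positivity)]
            linarith [hp 4]
          _ = _ := by ring)
      have hsq : ‖∑ a ∈ Ioc (H * H) N, ∑ b ∈ Ioc (H * H) (N / a), ((Λ a * Λ b : ℝ) : ℂ) * ee (((a * b : ℕ):ℝ) * α)‖ ^ 2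
          ≤ (40 * N) ^ 2 := by
        refine this.trans ?_
        rw [← hL]
        have hq' : (1:ℝ) / q ≤ 1 / L ^ 10 := by gcongr
        calc L * (L + 6) * (2 * L ^ 2 * (N ^ 2 * (1 + L) / q + N ^ 2 / ((H * H : ℕ):ℝ) + 8 * N * (1 + L) * (N / ((H * H : ℕ):ℝ) + q * (1 + L))))
            = L * (L + 6) * (2 * L ^ 2 * (N ^ 2 * (1 + L) * (1 / q) + N * (N / ((H * H : ℕ):ℝ)) + 8 * N * (1 + L) * (N / ((H * H : ℕ):ℝ) + q * (1 + L)))) := by ring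
          _ ≤ L * (L + L) * (2 * L ^ 2 * (N ^ 2 * (L + L) * (1 / L ^ 10) + N * (N / (16 * L ^ 24)) + 8 * N * (L + L) * (N / (16 * L ^ 24) + N / L ^ 20 * (L + L)))) := by
              gcongr <;> linarith
          _ = N ^ 2 * (8 / L ^ 5 + 1 / (4 * L ^ 20) + 4 / L ^ 19 + 128 / L ^ 14) := by field_simp; ring
          _ ≤ N ^ 2 * (8 / 1 + 1 / (4 * 1) + 4 / 1 + 128 / 1) := by
              gcongr <;> exact hp _
          _ ≤ _ := by nlinarith [sq_nonneg (N:ℝ)]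
      have hfin := (sq_le_sq₀ (norm_nonneg _) (by positivity)).1 hsq
      have hnn : 0 ≤ N * L * (2 * (161 / δ) ^ 2 * ((1 + Real.log q) ^ 2 / Real.sqrt q)) := by positivity
      exact hfin.trans (le_add_of_nonneg_right hnn)
  have tri := norm_le_norm_add_norm_sub' (∑ a ∈ Ioc 0 N, ∑ b ∈ Ioc 0 (N / a), ((Λ a * Λ b : ℝ) : ℂ) * ee (((a * b : ℕ):ℝ) * α))
    (∑ a ∈ Ioc (H * H) N, ∑ b ∈ Ioc (H * H) (N / a), ((Λ a * Λ b : ℝ) : ℂ) * ee (((a * b : ℕ):ℝ) * α))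
  have t6 : 200 ≤ δ * L := by
    rw [div_le_iff₀ hδ] at hL200; linarith
  have t7 : 12 * N * (Real.log ((H * H : ℕ):ℝ) + 6) + 40 * N ≤ N * L * (25 * δ) := by
    calc 12 * N * (Real.log ((H * H : ℕ):ℝ) + 6) + 40 * N ≤ 12 * N * (2 + 2 * δ * L + 6) + 40 * N := by gcongr
      _ = N * (136 + 24 * (δ * L)) := by ring
      _ ≤ N * (25 * (δ * L)) := by gcongr; linarith
      _ = _ := by ring
  have : N * L * (25 * δ + 2 * (161 / δ) ^ 2 * ((1 + Real.log q) ^ 2 / Real.sqrt q)) = N * L * (25 * δ) + N * L * (2 * (161 / δ) ^ 2 * ((1 + Real.log q) ^ 2 / Real.sqrt q)) := by ring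
  rw [this]
  linarith

end Vin
namespace Vin

lemma S_bound (δ : ℝ) (hδ : 0 < δ) (hδ1 : δ ≤ 1/4) : ∀ᶠ N : ℕ in Filter.atTop, ∀ (α : ℝ) (q : ℕ) (a0 : ℤ), 0 < q →
    IsCoprime a0 (q:ℤ) → (q:ℝ) ≤ N / Real.log N ^ 20 → |α - a0 / q| ≤ 1 / (q * (N / Real.log N ^ 20)) →
    ‖∑ n ∈ Ioc 0 N, ((Λ n : ℝ):ℂ) * ee ((n:ℝ) * α)‖
      ≤ N * (27 * δ + 200 / q.totient + 2 * (161 / δ) ^ 2 * ((1 + Real.log q) ^ 2 / Real.sqrt q)) := by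
  filter_upwards [T1_bound δ hδ, T2_bound δ hδ hδ1, ev_log_ge 1, ev_log_ge (7/δ), ev_log_pow 2 1 1 one_pos one_pos,
    Filter.eventually_ge_atTop 1] with N h1 h2 hL1 hL7 hLN hN1
  intro α q a0 hq ha hqN hα
  have t1 := h1 α q a0 hq ha hqN hα
  have t2 := h2 α q a0 hq ha hqN hα
  rw [Real.rpow_one] at hLN
  have id1 := selberg_sum (N:ℝ) (by exact_mod_cast hN1) N hN1 (fun n => ee ((n:ℝ) * α))
  set L := Real.log N with hL
  have hL0 : 0 < L := by linarith
  have hN : (0:ℝ) < N := by exact_mod_cast hN1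
  set S := ∑ n ∈ Ioc 0 N, ((Λ n : ℝ):ℂ) * ee ((n:ℝ) * α) with hS
  set E := ∑ n ∈ Ioc 0 N, ((Λ n * Real.log (N / n) : ℝ):ℂ) * ee ((n:ℝ) * α) with hE
  have e1 : ∑ n ∈ Ioc 0 N, ((Λ n * L + Λ n * Real.log (N / n) : ℝ) : ℂ) * ee ((n:ℝ) * α) = L * S + E := by
    rw [hS, hE, Finset.mul_sum, ← Finset.sum_add_distrib]
    refine Finset.sum_congr rfl fun n _ => ?_
    push_cast; ring
  have hEb : ‖E‖ ≤ 6 * N := by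
    refine le_trans ?_ (sum_lam_log (N:ℝ) N le_rfl (by linarith))
    refine (norm_sum_le _ _).trans (Finset.sum_le_sum fun n hn => ?_)
    rw [Finset.mem_Ioc] at hn
    have : (0:ℝ) < n := by exact_mod_cast hn.1
    have : 0 ≤ Real.log (N / n) := Real.log_nonneg (by rw [one_le_div this]; exact_mod_cast hn.2)
    rw [norm_mul, norm_ee, mul_one, Complex.norm_real, Real.norm_eq_abs, abs_of_nonneg (mul_nonneg vonMangoldt_nonneg this)]
  rw [e1] at id1
  set T1 := ∑ d ∈ Ioc 0 N, (((μ d:ℝ) * Real.log (N/d)^2:ℝ):ℂ) * ∑ m ∈ Ioc 0 (N/d), ee (((d*m:ℕ):ℝ)*α) with hT1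
  set T2 := ∑ a ∈ Ioc 0 N, ∑ b ∈ Ioc 0 (N / a), ((Λ a * Λ b : ℝ) : ℂ) * ee (((a * b : ℕ):ℝ) * α) with hT2
  have e2 : L * S = T1 - E - T2 - ((L ^ 2 : ℝ):ℂ) * ee (((1:ℕ):ℝ) * α) := by
    rw [id1]; ring
  have e3 : L * ‖S‖ ≤ ‖T1‖ + ‖E‖ + ‖T2‖ + L ^ 2 := by
    have : L * ‖S‖ = ‖(L:ℂ) * S‖ := by rw [norm_mul, Complex.norm_real, Real.norm_of_nonneg hL0.le]
    rw [this, e2]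
    refine (norm_sub_le _ _).trans (add_le_add ((norm_sub_le _ _).trans (add_le_add (norm_sub_le _ _) le_rfl)) ?_)
    rw [norm_mul, norm_ee, mul_one, Complex.norm_real, Real.norm_of_nonneg (by positivity)]
  have t7 : 7 ≤ δ * L := by
    rw [div_le_iff₀ hδ] at hL7; linarith
  have e4 : L * ‖S‖ ≤ L * (N * (27 * δ + 200 / q.totient + 2 * (161 / δ) ^ 2 * ((1 + Real.log q) ^ 2 / Real.sqrt q))) := by
    calc _ ≤ N * L * (δ + 200 / q.totient) + 6 * N + N * L * (25 * δ + 2 * (161 / δ) ^ 2 * ((1 + Real.log q) ^ 2 / Real.sqrt q)) + N := by linarith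
      _ ≤ N * L * (δ + 200 / q.totient) + N * (δ * L) + N * L * (25 * δ + 2 * (161 / δ) ^ 2 * ((1 + Real.log q) ^ 2 / Real.sqrt q)) := by nlinarith
      _ = _ := by ring
  exact le_of_mul_le_mul_left e4 hL0

lemma den_large (α : ℝ) (hα : Irrational α) (q0 : ℕ) : ∃ c : ℝ, 0 < c ∧ ∀ q : ℕ, 0 < q → q ≤ q0 → ∀ a : ℤ, c ≤ |q * α - a| := by
  induction q0 with
  | zero => exact ⟨1, one_pos, fun q h1 h2 => by omega⟩
  | succ n ih =>
    obtain ⟨c, hc, h⟩ := ih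
    refine ⟨min c (nn (((n+1:ℕ):ℝ) * α)), lt_min hc ?_, ?_⟩
    · unfold nn
      rw [abs_pos, sub_ne_zero]
      have : Irrational (((n+1:ℕ):ℝ) * α) := by
        apply Irrational.natCast_mul hα (by omega)
      exact this.ne_int _
    · intro q h1 h2 a
      rcases Nat.lt_or_ge n q with h3 | h3
      · have : q = n + 1 := by omega
        subst this
        exact (min_le_right _ _).trans (nn_le _ _)
      · exact (min_le_left _ _).trans (h q h1 h3 a)

theorem vino (α : ℝ) (hα : Irrational α) (ε : ℝ) (hε : 0 < ε) : ∀ᶠ N : ℕ in Filter.atTop,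
    ‖∑ n ∈ Ioc 0 N, ((Λ n : ℝ):ℂ) * ee ((n:ℝ) * α)‖ ≤ ε * N := by
  set δ := min (ε / 81) (1 / 4) with hδd
  have hδ : 0 < δ := by rw [hδd]; positivity
  have hδ1 : δ ≤ 1 / 4 := min_le_right _ _
  have hδ2 : δ ≤ ε / 81 := min_le_left _ _
  set C := 2 * (161 / δ) ^ 2 with hC
  have hC0 : 0 < C := by positivity
  have hq1 : ∀ᶠ q : ℕ in Filter.atTop, 200 / (q.totient:ℝ) ≤ ε / 3 ∧ C * ((1 + Real.log q) ^ 2 / Real.sqrt q) ≤ ε / 3 := by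
    filter_upwards [Filter.eventually_gt_atTop ((2 * ⌈600 / ε⌉₊).factorial), ev_log_pow 2 (1/2) (12 * C / ε) (by norm_num) (by positivity),
      ev_log_ge 1, Filter.eventually_ge_atTop 1] with q h1 h2 h3 h4
    constructor
    · have := totient_large ⌈600 / ε⌉₊ q (by omega) h1
      have h5 : 600 / ε ≤ (q.totient:ℝ) := (Nat.le_ceil _).trans (by exact_mod_cast this.le)
      have h6 : (0:ℝ) < q.totient := lt_of_lt_of_le (by positivity) h5
      rw [div_le_iff₀ h6]
      rw [div_le_iff₀ hε] at h5
      linarith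
    · have hs : 0 < Real.sqrt q := Real.sqrt_pos.2 (by exact_mod_cast h4)
      rw [← Real.sqrt_eq_rpow] at h2
      rw [mul_div_assoc', div_le_iff₀ hs]
      calc C * (1 + Real.log q) ^ 2 ≤ C * (2 * Real.log q) ^ 2 := by gcongr; linarith
        _ = ε / 3 * (12 * C / ε * Real.log q ^ 2) := by field_simp; ring
        _ ≤ _ := by gcongr
  obtain ⟨q0, hq0⟩ := Filter.eventually_atTop.1 hq1
  obtain ⟨c, hc, hcq⟩ := den_large α hα q0
  filter_upwards [S_bound δ hδ hδ1, ev_log_pow 20 1 (2/c) one_pos (by positivity), ev_log_pow 20 1 1 one_pos one_pos,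
    ev_log_ge 1] with N hS hNc hN1 hL1
  rw [Real.rpow_one] at hNc hN1
  set L := Real.log N with hL
  have hLp : 0 < L ^ 20 := by positivity
  have hN : (0:ℝ) < N := by linarith
  set n := ⌊(N:ℝ) / L ^ 20⌋₊ with hn
  have hn0 : 0 < n := by
    rw [hn, Nat.floor_pos, one_le_div hLp]; linarith
  obtain ⟨r, hr1, hr2⟩ := Real.exists_rat_abs_sub_le_and_den_le α hn0
  have hq : 0 < r.den := r.pos
  have hqR : (0:ℝ) < r.den := by exact_mod_cast hq
  have hrc : (r:ℝ) = (r.num:ℝ) / (r.den:ℝ) := Rat.cast_def r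
  have hnl : (N:ℝ) / L ^ 20 ≤ n + 1 := (Nat.lt_floor_add_one _).le
  have hα' : |α - (r.num:ℝ) / (r.den:ℝ)| ≤ 1 / (r.den * (N / L ^ 20)) := by
    rw [← hrc]
    refine hr1.trans ?_
    apply one_div_le_one_div_of_le (by positivity)
    rw [mul_comm]; gcongr
  have hcop : IsCoprime r.num (r.den:ℤ) := by
    rw [Int.isCoprime_iff_gcd_eq_one]
    exact r.reduced
  have hqn : (r.den:ℝ) ≤ N / L ^ 20 := le_trans (by exact_mod_cast hr2) (Nat.floor_le (by positivity))
  have hbig : q0 ≤ r.den := by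
    by_contra hcon
    push Not at hcon
    have h1 := hcq r.den hq hcon.le r.num
    have h2 : |r.den * α - r.num| = r.den * |α - (r.num:ℝ) / (r.den:ℝ)| := by
      rw [← abs_of_pos hqR, ← abs_mul, abs_of_pos hqR]; congr 1; field_simp
    rw [h2] at h1
    have h3 : r.den * |α - (r.num:ℝ) / (r.den:ℝ)| ≤ L ^ 20 / N := by
      calc _ ≤ r.den * (1 / (r.den * (N / L ^ 20))) := by gcongr
        _ = _ := by field_simp
    have h4 : L ^ 20 / N ≤ c / 2 := by
      rw [div_le_iff₀ hN]
      calc L ^ 20 = c / 2 * (2 / c * L ^ 20) := by field_simp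
        _ ≤ _ := by gcongr
    linarith
  have := hS α r.den r.num hq hcop hqn hα'
  refine this.trans ?_
  obtain ⟨h5, h6⟩ := hq0 r.den hbig
  rw [mul_comm ε]
  gcongr
  linarith

end Vin
namespace Vin

open MeasureTheory in
/-- Weyl discrepancy functional -/
noncomputable def ss {k : ℕ} (t : UnitAddTorus (Fin k)) (f : C(UnitAddTorus (Fin k), ℂ)) (N : ℕ) : ℂ :=
  ((volume : Measure (UnitAddTorus (Fin k))).real Set.univ : ℂ) * ∑ n ∈ Ioc 0 N, ((Λ n : ℝ):ℂ) * f (n • t)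
    - (∫ x, f x) * ∑ n ∈ Ioc 0 N, ((Λ n : ℝ):ℂ)

lemma integrable_C {k : ℕ} (f : C(UnitAddTorus (Fin k), ℂ)) :
    MeasureTheory.Integrable (fun x => f x) (MeasureTheory.volume : MeasureTheory.Measure (UnitAddTorus (Fin k))) :=
  f.continuous.integrable_of_hasCompactSupport (HasCompactSupport.of_compactSpace _)

lemma ss_add {k : ℕ} (t : UnitAddTorus (Fin k)) (f g : C(UnitAddTorus (Fin k), ℂ)) (N : ℕ) :
    ss t (f + g) N = ss t f N + ss t g N := by
  unfold ss
  simp only [ContinuousMap.add_apply, mul_add, Finset.sum_add_distrib]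
  rw [MeasureTheory.integral_add (integrable_C f) (integrable_C g)]
  ring

lemma ss_smul {k : ℕ} (t : UnitAddTorus (Fin k)) (r : ℂ) (f : C(UnitAddTorus (Fin k), ℂ)) (N : ℕ) :
    ss t (r • f) N = r * ss t f N := by
  unfold ss
  simp only [ContinuousMap.smul_apply, smul_eq_mul]
  rw [MeasureTheory.integral_const_mul]
  have e : ∑ n ∈ Ioc 0 N, ((Λ n : ℝ):ℂ) * (r * f (n • t)) = r * ∑ n ∈ Ioc 0 N, ((Λ n : ℝ):ℂ) * f (n • t) := by
    rw [Finset.mul_sum]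
    exact Finset.sum_congr rfl fun n _ => by ring
  rw [e]; ring

lemma lam_sum_norm (N : ℕ) (g : ℕ → ℂ) (B : ℝ) (hB : 0 ≤ B) (h : ∀ n, ‖g n‖ ≤ B) :
    ‖∑ n ∈ Ioc 0 N, ((Λ n : ℝ):ℂ) * g n‖ ≤ B * (6 * N) := by
  refine (norm_sum_le _ _).trans ?_
  calc _ ≤ ∑ n ∈ Ioc 0 N, B * Λ n := by
        refine Finset.sum_le_sum fun n _ => ?_
        rw [norm_mul, Complex.norm_real, Real.norm_eq_abs, abs_of_nonneg vonMangoldt_nonneg, mul_comm]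
        exact mul_le_mul_of_nonneg_right (h n) vonMangoldt_nonneg
    _ ≤ _ := by
        rw [← Finset.mul_sum]
        exact mul_le_mul_of_nonneg_left (psi_bound N) hB

open MeasureTheory in
lemma ss_bound {k : ℕ} (t : UnitAddTorus (Fin k)) (f : C(UnitAddTorus (Fin k), ℂ)) (N : ℕ) :
    ‖ss t f N‖ ≤ (12 * (volume : Measure (UnitAddTorus (Fin k))).real Set.univ) * ‖f‖ * N := by
  unfold ss
  set c := (volume : Measure (UnitAddTorus (Fin k))).real Set.univ
  have hc : 0 ≤ c := measureReal_nonneg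
  have h1 := lam_sum_norm N (fun n => f (n • t)) ‖f‖ (norm_nonneg _) (fun n => f.norm_coe_le_norm _)
  have h2 := lam_sum_norm N (fun n => 1) 1 zero_le_one (fun n => by simp)
  simp only [mul_one, one_mul] at h2
  have h3 : ‖∫ x, f x‖ ≤ ‖f‖ * c := by
    exact norm_integral_le_of_norm_le_const (Filter.Eventually.of_forall fun x => f.norm_coe_le_norm x)
  refine (norm_sub_le _ _).trans ?_
  rw [norm_mul, norm_mul, Complex.norm_real, Real.norm_of_nonneg hc]
  calc _ ≤ c * (‖f‖ * (6 * N)) + (‖f‖ * c) * (6 * N) := by gcongr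
    _ = _ := by ring

lemma mF_eval {k : ℕ} (θ : Fin k → ℝ) (h : Fin k → ℤ) (n : ℕ) :
    UnitAddTorus.mFourier h (n • (fun i => ((θ i : ℝ) : UnitAddCircle))) = ee ((n:ℝ) * ∑ i, (h i : ℝ) * θ i) := by
  simp only [UnitAddTorus.mFourier, ContinuousMap.coe_mk, Pi.smul_apply]
  have : ∀ i, (fourier (h i) (n • ((θ i : ℝ) : UnitAddCircle)) : ℂ) = Complex.exp (2 * Real.pi * Complex.I * (n * (h i * θ i))) := by
    intro i
    rw [← AddCircle.coe_nsmul, fourier_coe_apply]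
    congr 1
    rw [nsmul_eq_mul]
    push_cast
    simp
    ring
  rw [Finset.prod_congr rfl fun i _ => this i, ← Complex.exp_sum]
  unfold ee
  congr 1
  push_cast
  rw [← Finset.mul_sum, ← Finset.mul_sum]
  ring

lemma ss_fourier {k : ℕ} (θ : Fin k → ℝ)
    (hind : ∀ (c₀ : ℤ) (c : Fin k → ℤ), (c₀ : ℝ) + ∑ i, (c i : ℝ) * θ i = 0 → c₀ = 0 ∧ ∀ i, c i = 0)
    (h : Fin k → ℤ) (ε : ℝ) (hε : 0 < ε) :
    ∀ᶠ N : ℕ in Filter.atTop, ‖ss (fun i => ((θ i : ℝ) : UnitAddCircle)) (UnitAddTorus.mFourier h) N‖ ≤ ε * N := by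
  by_cases h0 : h = 0
  · subst h0
    refine Filter.Eventually.of_forall fun N => ?_
    have : ss (fun i => ((θ i : ℝ) : UnitAddCircle)) (UnitAddTorus.mFourier (0 : Fin k → ℤ)) N = 0 := by
      unfold ss
      rw [UnitAddTorus.mFourier_zero]
      simp
    rw [this]; simp; positivity
  · have hirr : Irrational (∑ i, (h i : ℝ) * θ i) := by
      rintro ⟨r, hr⟩
      have hd : (r.den:ℝ) ≠ 0 := by exact_mod_cast r.den_nz
      have h1 := hind (-r.num) (fun i => r.den * h i) (by
        push_cast
        simp only [mul_assoc]
        rw [← Finset.mul_sum, ← hr, Rat.cast_def]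
        field_simp
        ring)
      apply h0
      ext i
      have := h1.2 i
      simpa using this
    have hne : UnitAddTorus.mFourier h (fun i => ((θ i : ℝ) : UnitAddCircle)) ≠ 1 := by
      have h1 := mF_eval θ h 1
      rw [one_smul] at h1
      rw [h1]
      intro h2
      have h3 := norm_ee_sub_one_ge (((1:ℕ):ℝ) * ∑ i, (h i : ℝ) * θ i)
      rw [h2, sub_self, norm_zero] at h3
      have h4 : nn (((1:ℕ):ℝ) * ∑ i, (h i : ℝ) * θ i) ≠ 0 := by
        unfold nn
        rw [Nat.cast_one, one_mul, abs_ne_zero, sub_ne_zero]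
        exact hirr.ne_int _
      have h5 := nn_nonneg (((1:ℕ):ℝ) * ∑ i, (h i : ℝ) * θ i)
      apply h4; linarith
    have hFint : ∫ x, UnitAddTorus.mFourier h x = 0 := by
      have h1 : ∫ x : UnitAddTorus (Fin k), UnitAddTorus.mFourier h (x + fun i => ((θ i : ℝ) : UnitAddCircle))
          = ∫ x : UnitAddTorus (Fin k), UnitAddTorus.mFourier h x :=
        MeasureTheory.integral_add_right_eq_self (fun x => UnitAddTorus.mFourier h x) _
      have h2 : ∀ x : UnitAddTorus (Fin k), UnitAddTorus.mFourier h (x + fun i => ((θ i : ℝ) : UnitAddCircle))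
          = UnitAddTorus.mFourier h x * UnitAddTorus.mFourier h (fun i => ((θ i : ℝ) : UnitAddCircle)) := by
        intro x
        simp only [UnitAddTorus.mFourier, ContinuousMap.coe_mk, Pi.add_apply]
        rw [← Finset.prod_mul_distrib]
        refine Finset.prod_congr rfl fun i _ => ?_
        rw [fourier_apply, fourier_apply, fourier_apply, smul_add, AddCircle.toCircle_add, Circle.coe_mul]
      simp only [h2] at h1
      rw [MeasureTheory.integral_mul_const] at h1
      have h3 : (∫ x, UnitAddTorus.mFourier h x) * (UnitAddTorus.mFourier h (fun i => ((θ i : ℝ) : UnitAddCircle)) - 1) = 0 := by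
        rw [mul_sub, h1]; ring
      rcases mul_eq_zero.1 h3 with h4 | h4
      · exact h4
      · exact absurd (sub_eq_zero.1 h4) hne
    set c := (MeasureTheory.volume : MeasureTheory.Measure (UnitAddTorus (Fin k))).real Set.univ with hc
    have hc0 : 0 ≤ c := MeasureTheory.measureReal_nonneg
    filter_upwards [vino _ hirr (ε / (c + 1)) (by positivity)] with N hN
    unfold ss
    rw [hFint, zero_mul, sub_zero, norm_mul, ← hc, Complex.norm_real, Real.norm_of_nonneg hc0]
    rw [Finset.sum_congr rfl fun n _ => by rw [mF_eval θ h n]]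
    calc _ ≤ (c + 1) * (ε / (c + 1) * N) := by gcongr; linarith
      _ = _ := by field_simp

lemma ss_all {k : ℕ} (θ : Fin k → ℝ)
    (hind : ∀ (c₀ : ℤ) (c : Fin k → ℤ), (c₀ : ℝ) + ∑ i, (c i : ℝ) * θ i = 0 → c₀ = 0 ∧ ∀ i, c i = 0)
    (f : C(UnitAddTorus (Fin k), ℂ)) (ε : ℝ) (hε : 0 < ε) :
    ∀ᶠ N : ℕ in Filter.atTop, ‖ss (fun i => ((θ i : ℝ) : UnitAddCircle)) f N‖ ≤ ε * N := by
  set t : UnitAddTorus (Fin k) := fun i => ((θ i : ℝ) : UnitAddCircle) with ht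
  have hspan : ∀ g ∈ Submodule.span ℂ (Set.range (UnitAddTorus.mFourier (d := Fin k))), ∀ ε : ℝ, 0 < ε →
      ∀ᶠ N : ℕ in Filter.atTop, ‖ss t g N‖ ≤ ε * N := by
    intro g hg
    induction hg using Submodule.span_induction with
    | mem x hx =>
      obtain ⟨h, rfl⟩ := hx
      exact fun ε hε => ss_fourier θ hind h ε hε
    | zero =>
      intro ε hε
      refine Filter.Eventually.of_forall fun N => ?_
      have := ss_smul t (0:ℂ) (0 : C(UnitAddTorus (Fin k), ℂ)) N
      have e0 : (0:ℂ) • (0 : C(UnitAddTorus (Fin k), ℂ)) = 0 := by ext x; simp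
      rw [e0, zero_mul] at this
      rw [this, norm_zero]; positivity
    | add x y _ _ hx hy =>
      intro ε hε
      filter_upwards [hx (ε/2) (by positivity), hy (ε/2) (by positivity)] with N h1 h2
      rw [ss_add]
      refine (norm_add_le _ _).trans ?_
      linarith
    | smul r x _ hx =>
      intro ε hε
      filter_upwards [hx (ε/(‖r‖+1)) (by positivity)] with N h1
      rw [ss_smul, norm_mul]
      calc _ ≤ (‖r‖ + 1) * (ε/(‖r‖+1) * N) := by gcongr; linarith
        _ = _ := by field_simp
  have hmem : f ∈ (Submodule.span ℂ (Set.range (UnitAddTorus.mFourier (d := Fin k)))).topologicalClosure := by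
    rw [UnitAddTorus.span_mFourier_closure_eq_top]; trivial
  set c := (MeasureTheory.volume : MeasureTheory.Measure (UnitAddTorus (Fin k))).real Set.univ with hc
  have hc0 : 0 ≤ c := MeasureTheory.measureReal_nonneg
  have hmem' : f ∈ closure ((Submodule.span ℂ (Set.range (UnitAddTorus.mFourier (d := Fin k)))) : Set C(UnitAddTorus (Fin k), ℂ)) := hmem
  obtain ⟨g, hg, hfg⟩ := Metric.mem_closure_iff.1 hmem' (ε / (2 * (12 * c + 1))) (by positivity)
  rw [dist_eq_norm] at hfg
  filter_upwards [hspan g hg (ε/2) (by positivity)] with N h1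
  have e : f = g + (f - g) := by abel
  rw [e, ss_add]
  refine (norm_add_le _ _).trans ?_
  have h2 := ss_bound t (f - g) N
  have h3 : (12 * c) * ‖f - g‖ * N ≤ ε / 2 * N := by
    gcongr
    calc 12 * c * ‖f - g‖ ≤ (12 * c + 1) * (ε / (2 * (12 * c + 1))) := by gcongr; linarith
      _ = _ := by field_simp
  linarith

/-- some prime point lies close to the target -/
lemma prime_close {k : ℕ} (θ : Fin k → ℝ)
    (hind : ∀ (c₀ : ℤ) (c : Fin k → ℤ), (c₀ : ℝ) + ∑ i, (c i : ℝ) * θ i = 0 → c₀ = 0 ∧ ∀ i, c i = 0)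
    (y : UnitAddTorus (Fin k)) (ε : ℝ) (hε : 0 < ε) :
    ∃ p : ℕ, p.Prime ∧ ‖p • (fun i => ((θ i : ℝ) : UnitAddCircle)) - y‖ < ε := by
  by_contra hcon
  push Not at hcon
  set t : UnitAddTorus (Fin k) := fun i => ((θ i : ℝ) : UnitAddCircle) with ht
  set F : UnitAddTorus (Fin k) → ℝ := fun x => max 0 (ε - ‖x - y‖) with hF
  have hFc : Continuous F := by fun_prop
  have hF0 : ∀ x, 0 ≤ F x := fun x => le_max_left _ _
  have hFε : ∀ x, F x ≤ ε := fun x => max_le hε.le (by linarith [norm_nonneg (x - y)])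
  have hpos : 0 < ∫ x, F x := by
    refine hFc.integral_pos_of_hasCompactSupport_nonneg_nonzero (x := y) (HasCompactSupport.of_compactSpace _) hF0 ?_
    simp only [hF, sub_self, norm_zero, sub_zero]
    rw [max_eq_right hε.le]; exact hε.ne'
  set f : C(UnitAddTorus (Fin k), ℂ) := ⟨fun x => (F x : ℂ), by fun_prop⟩ with hf
  set I := ∫ x, F x with hI
  have hfI : ∫ x, f x = (I:ℂ) := by
    simp only [hf, ContinuousMap.coe_mk]
    exact integral_ofReal
  set c := (MeasureTheory.volume : MeasureTheory.Measure (UnitAddTorus (Fin k))).real Set.univ with hc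
  have hc0 : 0 ≤ c := MeasureTheory.measureReal_nonneg
  have hfin : ∀ᶠ N : ℕ in Filter.atTop, False := by
    filter_upwards [ss_all θ hind f (I / 10) (by positivity), ev_log_pow 1 (1/2) (max 1 (2 * ε * c * 10 / I)) (by norm_num) (by positivity),
      ev_log_ge 100, Filter.eventually_ge_atTop 1] with N h1 h2 h3 hN1
    have hN : (0:ℝ) < N := by exact_mod_cast hN1
    have hfl : ⌊(N:ℝ)⌋₊ = N := Nat.floor_natCast N
    have h1N : (1:ℝ) ≤ N := by exact_mod_cast hN1
    rw [pow_one, ← Real.sqrt_eq_rpow] at h2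
    set L := Real.log N with hL
    have hs : Real.sqrt N * Real.sqrt N = N := Real.mul_self_sqrt hN.le
    have hs0 : 0 ≤ Real.sqrt N := Real.sqrt_nonneg _
    have g1 : ∑ n ∈ Ioc 0 N, Λ n * F (n • t) ≤ ε * (2 * Real.sqrt N * L) := by
      have a1 := Chebyshev.psi_sub_theta_le h1N
      rw [Chebyshev.psi_sub_theta_eq_sum_not_prime, hfl] at a1
      refine le_trans ?_ (mul_le_mul_of_nonneg_left a1 hε.le)
      rw [Finset.mul_sum, Finset.sum_filter]
      refine Finset.sum_le_sum fun n _ => ?_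
      split_ifs with hp
      · have : F (n • t) = 0 := by
          simp only [hF]
          apply max_eq_left
          linarith [hcon n hp]
        rw [this, mul_zero]
      · rw [mul_comm]; exact mul_le_mul_of_nonneg_right (hFε _) vonMangoldt_nonneg
    have g2 : (N:ℝ) / 2 ≤ ∑ n ∈ Ioc 0 N, Λ n := by
      have a1 := Chebyshev.psi_ge N
      unfold Chebyshev.psi at a1
      rw [hfl] at a1
      refine le_trans ?_ a1
      have a2 : Real.log ((N:ℝ) + 1) ≤ 2 * L := by
        have : (N:ℝ) + 1 ≤ N ^ 2 := by
          have : (2:ℝ) ≤ N := by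
            have := Real.log_le_sub_one_of_pos hN
            linarith
          nlinarith
        have := Real.log_le_log (by positivity) this
        rw [Real.log_pow] at this
        exact_mod_cast this
      have a3 : 1 * L ≤ Real.sqrt N := le_trans (by gcongr; exact le_max_left _ _) h2
      have a4 : 100 * L ≤ N := by nlinarith
      have := Real.log_two_gt_d9
      nlinarith
    have e1 : ss t f N = ((c * ∑ n ∈ Ioc 0 N, Λ n * F (n • t) - I * ∑ n ∈ Ioc 0 N, Λ n : ℝ):ℂ) := by
      unfold ss
      rw [hfI]
      push_cast
      rfl
    rw [e1, Complex.norm_real, Real.norm_eq_abs] at h1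
    have h5 := neg_le_of_abs_le h1
    have g3 : c * ∑ n ∈ Ioc 0 N, Λ n * F (n • t) ≤ I / 10 * N := by
      have b1 : (2 * ε * c * 10 / I) * L ≤ Real.sqrt N := le_trans (by gcongr; exact le_max_right _ _) h2
      calc _ ≤ c * (ε * (2 * Real.sqrt N * L)) := by gcongr
        _ = I / 10 * ((2 * ε * c * 10 / I) * L) * Real.sqrt N := by field_simp
        _ ≤ I / 10 * Real.sqrt N * Real.sqrt N := by gcongr
        _ = _ := by rw [mul_assoc, hs]
    have g4 : I * (N / 2) ≤ I * ∑ n ∈ Ioc 0 N, Λ n := by gcongr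
    have g5 : 0 < I * N := by positivity
    linarith
  exact hfin.exists.elim fun _ h => h

end Vin

end

/-- Harman's multidimensional generalization of Vinogradov's theorem. -/
theorem stmt2 (k : ℕ) (θ : Fin k → ℝ)
    (hind : ∀ (c₀ : ℤ) (c : Fin k → ℤ),
      (c₀ : ℝ) + ∑ i, (c i : ℝ) * θ i = 0 → c₀ = 0 ∧ ∀ i, c i = 0) :
    ∀ x : Fin k → ℝ, (∀ i, x i ∈ Set.Ioo (0 : ℝ) 1) → ∀ ε : ℝ, 0 < ε →
      ∃ j : ℕ, ∀ i, |Int.fract ((Nat.nth Nat.Prime j : ℝ) * θ i) - x i| < ε := by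
  intro x hx ε hε
  obtain ⟨δ, hδ0, hδ⟩ : ∃ δ : ℝ, 0 < δ ∧ ∀ i, δ ≤ ε ∧ δ ≤ x i ∧ δ ≤ 1 - x i := by
    have h1 : ∀ᶠ δ : ℝ in nhdsWithin 0 (Set.Ioi 0), ∀ i, δ ≤ ε ∧ δ ≤ x i ∧ δ ≤ 1 - x i := by
      rw [Filter.eventually_all]
      intro i
      have hi := hx i
      have := Ioo_mem_nhdsGT (show (0:ℝ) < min ε (min (x i) (1 - x i)) from
        lt_min hε (lt_min hi.1 (by linarith [hi.2])))
      filter_upwards [this] with δ hδ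
      have h2 := hδ.2
      rw [lt_min_iff, lt_min_iff] at h2
      exact ⟨h2.1.le, h2.2.1.le, h2.2.2.le⟩
    obtain ⟨δ, h2, h3⟩ := (h1.and self_mem_nhdsWithin).exists
    exact ⟨δ, h3, h2⟩
  obtain ⟨p, hp, hclose⟩ := Vin.prime_close θ hind (fun i => ((x i : ℝ) : UnitAddCircle)) δ hδ0
  refine ⟨Nat.count Nat.Prime p, fun i => ?_⟩
  rw [Nat.nth_count hp]
  obtain ⟨d1, d2, d3⟩ := hδ i
  have h1 := lt_of_le_of_lt (norm_le_pi_norm _ i) hclose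
  simp only [Pi.sub_apply, Pi.smul_apply] at h1
  rw [← AddCircle.coe_nsmul, ← AddCircle.coe_sub, UnitAddCircle.norm_eq, nsmul_eq_mul] at h1
  set r := round ((p:ℝ) * θ i - x i) with hr
  set e := (p:ℝ) * θ i - x i - r with he
  have h2 : (p:ℝ) * θ i = (x i + e) + r := by rw [he]; ring
  rw [abs_lt] at h1
  rw [h2, Int.fract_add_intCast, Int.fract_eq_self.2 ⟨by linarith, by linarith⟩, add_sub_cancel_left, abs_lt]
  exact ⟨by linarith, by linarith⟩
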